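/- arXiv:2107.00550 — 2 statements merged into one kernel-verified Lean document; each statement's English description precedes it below -/
import Mathlib

section
/- Suppose V is a good homogeneous ssee. Then for every hereditary property P of [0,1]-decorations of V, exactly one of the following holds: either the limit π(P) = lim_{n→∞} ex(V_n, P_n)/|V_n| exists and is finite, and then vol(P_n) = e^{−(π(P)+o(1))|V_n|}, i.e. (−log vol(P_n))/|V_n| → π(P); or ex(V_n, P_n)/|V_n| → ∞ as n → ∞, and then the volume of P_n decays superexponentially in |V_n|, i.e. (−log vol(P_n))/|V_n| → ∞. -/
open MeasureTheory Filter Set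

noncomputable section

/-- A set-sequence equipped with embeddings (ssee): a sequence of finite nonempty
sets `V n` together with, for `N ≤ n`, a collection of injections `V N → V n`. -/
structure Ssee where
  V : ℕ → Type
  fin : ∀ n, Fintype (V n)
  dec : ∀ n, DecidableEq (V n)
  nonemp : ∀ n, Nonempty (V n)
  emb : (N n : ℕ) → Finset (V N → V n)
  emb_inj : ∀ N n, N ≤ n → ∀ φ ∈ emb N n, Function.Injective φ

attribute [instance] Ssee.fin Ssee.dec Ssee.nonemp

/-- `I(N,n)`: the number of pairs of embeddings whose images intersect in exactly `i`
elements, summed over all `i` with `1 < i < |V_N|`. -/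
def Ssee.interCount (S : Ssee) (N n : ℕ) : ℕ :=
  ((S.emb N n ×ˢ S.emb N n).filter (fun p =>
    1 < ((Finset.univ.image p.1) ∩ (Finset.univ.image p.2)).card ∧
    ((Finset.univ.image p.1) ∩ (Finset.univ.image p.2)).card < Fintype.card (S.V N))).card

/-- A ssee is good if `|V_n| → ∞`, and for every `N` with `|V_N| > 1` we have
`|emb N n| / |V_n| → ∞` and `|V_n| · I(N,n) / |emb N n|² → 0`. -/
def Ssee.Good (S : Ssee) : Prop :=
  Tendsto (fun n => Fintype.card (S.V n)) atTop atTop ∧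
  (∀ N, 1 < Fintype.card (S.V N) →
    Tendsto (fun n => ((S.emb N n).card : ℝ) / (Fintype.card (S.V n) : ℝ)) atTop atTop) ∧
  (∀ N, 1 < Fintype.card (S.V N) →
    Tendsto (fun n => ((Fintype.card (S.V n) : ℝ) * (S.interCount N n : ℝ)) /
      ((S.emb N n).card : ℝ) ^ 2) atTop (nhds 0))

/-- Homogeneous: every point of `V n` lies in the same strictly positive number of
images of embeddings of `V N`. -/
def Ssee.Homogeneous (S : Ssee) : Prop :=
  ∀ N n, N ≤ n → ∃ k : ℕ, 0 < k ∧ ∀ x : S.V n,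
    ((S.emb N n).filter (fun φ => x ∈ Finset.univ.image φ)).card = k

/-- The unit cube `[0,1]^ι`. -/
def unitCube (ι : Type) : Set (ι → ℝ) := Set.univ.pi fun _ => Set.Icc (0:ℝ) 1

/-- A box in `[0,1]^ι`: a product of measurable subsets of `[0,1]`. -/
def IsBox {ι : Type} (b : Set (ι → ℝ)) : Prop :=
  ∃ A : ι → Set ℝ, (∀ i, MeasurableSet (A i) ∧ A i ⊆ Set.Icc 0 1) ∧ b = Set.univ.pi A

/-- A simple box: a product of finite unions of intervals (i.e. of order-connected
subsets of `ℝ`) contained in `[0,1]`. -/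
def IsSimpleBox {ι : Type} (b : Set (ι → ℝ)) : Prop :=
  ∃ A : ι → Set ℝ,
    (∀ i, A i ⊆ Set.Icc 0 1 ∧
      ∃ s : Finset (Set ℝ), (∀ J ∈ s, J.OrdConnected) ∧ A i = ⋃₀ ↑s) ∧
    b = Set.univ.pi A

/-- The projection `b_{↓φ}` of a body `b ⊆ [0,1]^β` along `φ : α → β`: those `c` whose
fiber (in the coordinates outside the range of `φ`) has positive measure. -/
def projBody {α β : Type} [Fintype α] [Fintype β] (φ : α → β) (b : Set (β → ℝ)) :
    Set (α → ℝ) :=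
  letI : ∀ p : Prop, Decidable p := fun p => Classical.propDecidable p
  {c | 0 < volume {d : {i : β // i ∉ Set.range φ} → ℝ |
    (fun i : β => if h : i ∈ Set.range φ then c h.choose else d ⟨i, h⟩) ∈ b}}

/-- The lift `b_{↑φ}` of a body `b ⊆ [0,1]^α` along `φ : α → β`. -/
def liftBody {α β : Type} (φ : α → β) (b : Set (α → ℝ)) : Set (β → ℝ) :=
  {c | c ∈ unitCube β ∧ (fun j => c (φ j)) ∈ b}

/-- The upper shadow `∂⁺_{V_n}(b)` of a body `b ⊆ [0,1]^{V_N}`. -/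
def Ssee.upperShadow (S : Ssee) (N n : ℕ) (b : Set (S.V N → ℝ)) : Set (S.V n → ℝ) :=
  ⋃ φ ∈ S.emb N n, liftBody φ b

/-- A hereditary `[0,1]`-decoration property: a sequence of measurable subsets of the
unit cubes whose complements (within the cubes) are closed under upper shadows. -/
def Ssee.Hereditary (S : Ssee) (P : ∀ n, Set (S.V n → ℝ)) : Prop :=
  (∀ n, MeasurableSet (P n) ∧ P n ⊆ unitCube (S.V n)) ∧
  ∀ N n, N ≤ n → S.upperShadow N n (unitCube (S.V N) \ P N) ⊆ unitCube (S.V n) \ P n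

/-- Expectation of `f φ` over an embedding `φ` chosen uniformly from `emb N n`. -/
def Ssee.expProj (S : Ssee) (N n : ℕ) (f : (S.V N → S.V n) → ℝ) : ℝ :=
  (∑ φ ∈ S.emb N n, f φ) / ((S.emb N n).card : ℝ)

/-- The entropy `Ent(b) = -log vol(b)`, valued in `EReal` (so `Ent(b) = ⊤` when
`vol(b) = 0`). -/
def entE {ι : Type} [Fintype ι] (b : Set (ι → ℝ)) : EReal := -(ENNReal.log (volume b))

/-- Extremal entropy `ex(V_n, P_n) = inf { Ent(b) : b a box with vol(b \ P_n) = 0 }`. -/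
def Ssee.exEnt (S : Ssee) (P : ∀ n, Set (S.V n → ℝ)) (n : ℕ) : EReal :=
  sInf {e : EReal | ∃ b : Set (S.V n → ℝ), IsBox b ∧ volume (b \ P n) = 0 ∧ e = entE b}

/-!
Averaging a box for `P n` over the embeddings of `V N` shows that `ex (V n, P n) / |V n|` is
nondecreasing, hence convergent in `EReal`; since a box contained in `P n` bounds its volume from
below, only a matching upper bound on `vol (P n)` is missing.

For that, discretize: the decorations become words over a finite alphabet, and heredity says that
no word of a large set `X` restricts along an embedding to a pattern of a fixed forbidden set.
Condition the uniform measure on `X`. Revealing a random sparse set of coordinates exhausts the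
available energy, so that, given the revealed letters, the coordinates along most embeddings are
nearly independent; goodness enters here, because it makes the images of embeddings meet in at most
one point most of the time. Fixing the revealed letters, `X` looks like a product of one-letter
laws which almost avoids the forbidden patterns. Keeping at each point only the letters its law
does not neglect gives a box, whose projections are boxes for `P N` and so have entropy at least
`ex (V N, P N)`; averaging over the embeddings bounds the volume of `X`.

Discretization costs an approximation of the forbidden set by a finitely coded one. The error is
harmless to boxes by weak compactness of their side densities, and harmless to `X` because a set of
tiny measure is hit along few embeddings, except with exponentially small probability.
-/

open ProbabilityTheory
open scoped ENNReal Topology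

/-! ### Random subsets -/

section RandomSubset

lemma abs_le_add_sq_div {a : ℝ} (ha : 0 < a) (x : ℝ) : |x| ≤ a + x ^ 2 / a := by
  rw [← sub_le_iff_le_add', le_div_iff₀ ha, ← sq_abs x]
  nlinarith [sq_nonneg (|x| - a), sq_nonneg |x|]

variable {V : Type*} [Fintype V] [DecidableEq V]

/-- The expectation of `f R` over the random subset `R` of `V` that contains each point
independently with probability `t`, as a linear functional of `f`. -/
def binomialExp (t : ℝ) : (Finset V → ℝ) →ₗ[ℝ] ℝ :=
  Fintype.linearCombination ℝ fun R => t ^ R.card * (1 - t) ^ Rᶜ.card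

lemma binomialExp_apply (t : ℝ) (f : Finset V → ℝ) :
    binomialExp t f = ∑ R, f R * (t ^ R.card * (1 - t) ^ Rᶜ.card) := rfl

lemma binomialExp_mono {t : ℝ} (h0 : 0 ≤ t) (h1 : t ≤ 1) {f g : Finset V → ℝ} (h : f ≤ g) :
    binomialExp t f ≤ binomialExp t g := by
  have := sub_nonneg.2 h1
  simp only [binomialExp_apply]
  gcongr with R
  exact h R

lemma binomialExp_subset (t : ℝ) (B : Finset V) :
    binomialExp t (fun R => if B ⊆ R then 1 else 0) = t ^ B.card := by
  have expand := Finset.prod_add (fun _ : V => t) (fun v => if v ∈ B then 0 else 1 - t) Finset.univ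
  have factor : ∀ v : V, (t + if v ∈ B then 0 else 1 - t) = if v ∈ B then t else 1 := by
    intro v; split_ifs <;> ring
  simp only [factor, Finset.prod_ite_mem, Finset.univ_inter, Finset.prod_const,
    Finset.powerset_univ] at expand
  rw [expand, binomialExp_apply]
  refine Finset.sum_congr rfl fun R _ => ?_
  by_cases hB : B ⊆ R
  · rw [if_pos hB, one_mul, ← Finset.compl_eq_univ_sdiff, ← Finset.prod_const (s := Rᶜ)]
    congr 1
    refine Finset.prod_congr rfl fun v hv => (if_neg fun h => ?_).symm
    exact Finset.mem_compl.1 hv (hB h)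
  · obtain ⟨v, hvB, hvR⟩ := Finset.not_subset.1 hB
    have vanish : ∏ w ∈ Finset.univ \ R, (if w ∈ B then 0 else 1 - t) = 0 :=
      Finset.prod_eq_zero (Finset.mem_sdiff.2 ⟨Finset.mem_univ v, hvR⟩) (if_pos hvB)
    rw [if_neg hB, zero_mul, vanish, mul_zero]

lemma binomialExp_const (t c : ℝ) : binomialExp t (fun _ : Finset V => c) = c := by
  have h := binomialExp_subset t (∅ : Finset V)
  simp only [Finset.empty_subset, if_true, Finset.card_empty, pow_zero] at h
  calc binomialExp t (fun _ : Finset V => c) = binomialExp t (c • fun _ : Finset V => 1) := by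
        congr 1; ext; simp
    _ = c := by rw [map_smul, h, smul_eq_mul, mul_one]

lemma binomialExp_sum {ι : Type*} (s : Finset ι) (t : ℝ) (f : ι → Finset V → ℝ) :
    binomialExp t (fun R => ∑ i ∈ s, f i R) = ∑ i ∈ s, binomialExp t (f i) := by
  rw [← map_sum]
  congr 1
  ext R
  exact (Finset.sum_apply R s f).symm

lemma binomialExp_card (t : ℝ) :
    binomialExp t (fun R : Finset V => (R.card : ℝ)) = t * Fintype.card V := by
  have card_eq : ∀ R : Finset V,
      (R.card : ℝ) = ∑ v : V, if ({v} : Finset V) ⊆ R then (1 : ℝ) else 0 := by simp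
  simp only [card_eq, binomialExp_sum, binomialExp_subset, Finset.card_singleton, pow_one,
    Finset.sum_const, Finset.card_univ, nsmul_eq_mul, mul_comm]

variable {ι : Type*} {s : Finset ι} {B : ι → Finset V} {m : ℕ}

/-- The number of `i ∈ s` with `B i ⊆ R`, as a real number. -/
def hitCount (s : Finset ι) (B : ι → Finset V) (R : Finset V) : ℝ :=
  ∑ i ∈ s, if B i ⊆ R then 1 else 0

/-- The number of ordered pairs of indices in `s` whose sets `B i` meet. -/
def meetCount (s : Finset ι) (B : ι → Finset V) : ℕ :=
  ((s ×ˢ s).filter fun q => ¬ Disjoint (B q.1) (B q.2)).card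

lemma binomialExp_hitCount (hB : ∀ i ∈ s, (B i).card = m) (t : ℝ) :
    binomialExp t (hitCount s B) = s.card * t ^ m := by
  rw [show hitCount s B = fun R => ∑ i ∈ s, if B i ⊆ R then 1 else 0 from rfl, binomialExp_sum]
  simp only [binomialExp_subset]
  rw [Finset.sum_congr rfl fun i hi => by rw [hB i hi], Finset.sum_const, nsmul_eq_mul]

lemma binomialExp_hitCount_sq_le (hB : ∀ i ∈ s, (B i).card = m) {t : ℝ} (h0 : 0 ≤ t)
    (h1 : t ≤ 1) :
    binomialExp t (fun R => hitCount s B R ^ 2) ≤ (s.card * t ^ m) ^ 2 + meetCount s B := by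
  have sq_eq : ∀ R, hitCount s B R ^ 2 =
      ∑ q ∈ s ×ˢ s, if B q.1 ∪ B q.2 ⊆ R then (1 : ℝ) else 0 := by
    intro R
    rw [hitCount, sq, Finset.sum_mul_sum, Finset.sum_product]
    simp only [Finset.union_subset_iff, ite_and, ite_mul, one_mul, zero_mul]
  have term_le : ∀ q ∈ s ×ˢ s, t ^ (B q.1 ∪ B q.2).card ≤
      t ^ (2 * m) + if ¬ Disjoint (B q.1) (B q.2) then (1 : ℝ) else 0 := by
    intro q hq
    obtain ⟨hq1, hq2⟩ := Finset.mem_product.1 hq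
    by_cases hd : Disjoint (B q.1) (B q.2)
    · rw [if_neg (not_not.2 hd), Finset.card_union_of_disjoint hd, hB _ hq1, hB _ hq2, two_mul,
        add_zero]
    · rw [if_pos hd]
      exact (pow_le_one₀ h0 h1).trans (le_add_of_nonneg_left (pow_nonneg h0 _))
  simp only [sq_eq, binomialExp_sum, binomialExp_subset]
  refine (Finset.sum_le_sum term_le).trans_eq ?_
  rw [Finset.sum_add_distrib, Finset.sum_const, Finset.card_product, ← Finset.sum_filter,
    Finset.sum_const, meetCount]
  simp only [nsmul_eq_mul, Nat.cast_mul, mul_one]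
  ring

lemma binomialExp_hitCount_sub_sq_le (hB : ∀ i ∈ s, (B i).card = m) {t : ℝ} (h0 : 0 ≤ t)
    (h1 : t ≤ 1) :
    binomialExp t (fun R => (hitCount s B R - s.card * t ^ m) ^ 2) ≤ meetCount s B := by
  set μ := s.card * t ^ m
  have expand : (fun R => (hitCount s B R - μ) ^ 2) =
      (fun R => hitCount s B R ^ 2) + (-2 * μ) • hitCount s B + fun _ => μ ^ 2 := by
    ext R
    simp only [Pi.add_apply, Pi.smul_apply, smul_eq_mul]
    ring
  rw [expand, map_add, map_add, map_smul, binomialExp_hitCount hB, binomialExp_const, smul_eq_mul]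
  linarith [binomialExp_hitCount_sq_le hB h0 h1]

/-- Comparing `D (B i)` with `D R` on the event `B i ⊆ R`, whose probability does not depend on
`i`, and using that the number of such `i` concentrates. -/
lemma sum_le_binomialExp (hB : ∀ i ∈ s, (B i).card = m) (hs : s.Nonempty) {t : ℝ} (h0 : 0 < t)
    (h1 : t ≤ 1) {D : Finset V → ℝ} (hD : Monotone D) {C : ℝ} (hD0 : ∀ R, 0 ≤ D R)
    (hDC : ∀ R, D R ≤ C) {σ : ℝ} (hσ : 0 < σ) :
    ∑ i ∈ s, D (B i) ≤ s.card * binomialExp t D +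
      C * (σ * s.card + meetCount s B / (σ * s.card * t ^ (2 * m))) := by
  have hC : 0 ≤ C := (hD0 ∅).trans (hDC ∅)
  have hcard : (0 : ℝ) < s.card := by exact_mod_cast hs.card_pos
  set μ : ℝ := s.card * t ^ m with hμ
  have hμ0 : 0 < μ := mul_pos hcard (pow_pos h0 m)
  have pointwise : (fun R => ∑ i ∈ s, D (B i) * if B i ⊆ R then (1 : ℝ) else 0) ≤
      μ • D + (fun _ => C * (σ * μ)) + (C / (σ * μ)) • fun R => (hitCount s B R - μ) ^ 2 := by
    intro R
    have deviation := mul_le_mul_of_nonneg_left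
      (abs_le_add_sq_div (mul_pos hσ hμ0) (hitCount s B R - μ)) hC
    calc ∑ i ∈ s, D (B i) * (if B i ⊆ R then (1 : ℝ) else 0) ≤ hitCount s B R * D R := by
          rw [hitCount, Finset.sum_mul]
          refine Finset.sum_le_sum fun i _ => ?_
          split_ifs with h
          · simpa using hD h
          · simp
      _ = μ * D R + (hitCount s B R - μ) * D R := by ring
      _ ≤ μ * D R + C * |hitCount s B R - μ| := by
          have := mul_le_mul (le_abs_self (hitCount s B R - μ)) (hDC R) (hD0 R) (abs_nonneg _)
          linarith
      _ ≤ μ * D R + C * (σ * μ + (hitCount s B R - μ) ^ 2 / (σ * μ)) := by gcongr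
      _ = _ := by simp only [Pi.add_apply, Pi.smul_apply, smul_eq_mul]; ring
  have left : binomialExp t (fun R => ∑ i ∈ s, D (B i) * if B i ⊆ R then (1 : ℝ) else 0) =
      t ^ m * ∑ i ∈ s, D (B i) := by
    rw [binomialExp_sum, Finset.mul_sum]
    refine Finset.sum_congr rfl fun i hi => ?_
    rw [← hB i hi, ← binomialExp_subset, mul_comm]
    exact (binomialExp t).map_smul (D (B i)) _
  have averaged := binomialExp_mono h0.le h1 pointwise
  simp only [left, map_add, map_smul, binomialExp_const, smul_eq_mul] at averaged
  have variance := mul_le_mul_of_nonneg_left (binomialExp_hitCount_sub_sq_le hB h0.le h1)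
    (by positivity : 0 ≤ C / (σ * μ))
  refine le_of_mul_le_mul_left ?_ (pow_pos h0 m)
  calc _ ≤ μ * binomialExp t D + C * (σ * μ) + C / (σ * μ) * meetCount s B := by linarith
    _ = _ := by rw [hμ, pow_mul']; field_simp; ring

end RandomSubset

/-! ### Uniform covers by embeddings -/

/-- A family of injections `U → V` whose images cover every point of `V` exactly `k > 0` times. -/
structure IsUniformCover {U V : Type*} [Fintype U] [DecidableEq V] (emb : Finset (U → V))
    (k : ℕ) : Prop where
  pos : 0 < k
  injective : ∀ φ ∈ emb, Function.Injective φ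
  card_filter : ∀ v, (emb.filter fun φ => v ∈ Finset.univ.image φ).card = k

/-- The number of ordered pairs of maps in `emb` whose images share at least two points. -/
def overlapCount {U V : Type*} [Fintype U] [DecidableEq V] (emb : Finset (U → V)) : ℕ :=
  ((emb ×ˢ emb).filter fun p => 1 < (Finset.univ.image p.1 ∩ Finset.univ.image p.2).card).card

lemma Ssee.overlapCount_le (S : Ssee) {N n : ℕ} (hNn : N ≤ n) :
    overlapCount (S.emb N n) ≤ S.interCount N n +
      (S.emb N n).card * Fintype.card (S.V N) ^ Fintype.card (S.V N) := by
  have cover : (S.emb N n ×ˢ S.emb N n).filter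
        (fun p => 1 < (Finset.univ.image p.1 ∩ Finset.univ.image p.2).card) ⊆
      (S.emb N n ×ˢ S.emb N n).filter (fun p =>
        1 < (Finset.univ.image p.1 ∩ Finset.univ.image p.2).card ∧
        (Finset.univ.image p.1 ∩ Finset.univ.image p.2).card < Fintype.card (S.V N)) ∪
      (S.emb N n).biUnion fun φ =>
        (Fintype.piFinset fun _ => Finset.univ.image φ).image (Prod.mk φ) := by
    rintro ⟨φ, ψ⟩ h
    obtain ⟨hmem, hlt⟩ := Finset.mem_filter.1 h
    obtain ⟨hφ, hψ⟩ := Finset.mem_product.1 hmem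
    by_cases hc : (Finset.univ.image φ ∩ Finset.univ.image ψ).card < Fintype.card (S.V N)
    · exact Finset.mem_union_left _ (Finset.mem_filter.2 ⟨hmem, hlt, hc⟩)
    · have hsub : Finset.univ.image ψ ⊆ Finset.univ.image φ := by
        rw [← Finset.inter_eq_right]
        refine Finset.eq_of_subset_of_card_le Finset.inter_subset_right ?_
        rw [Finset.card_image_of_injective _ (S.emb_inj N n hNn ψ hψ), Finset.card_univ]
        exact not_lt.1 hc
      refine Finset.mem_union_right _ (Finset.mem_biUnion.2 ⟨φ, hφ, Finset.mem_image_of_mem _ ?_⟩)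
      exact Fintype.mem_piFinset.2 fun a => hsub (Finset.mem_image_of_mem ψ (Finset.mem_univ a))
  refine (Finset.card_le_card cover).trans ((Finset.card_union_le _ _).trans ?_)
  refine Nat.add_le_add_left (Finset.card_biUnion_le_card_mul _ _ _ fun φ _ => ?_) _
  refine Finset.card_image_le.trans ?_
  rw [Fintype.card_piFinset, Finset.prod_const, Finset.card_univ]
  exact Nat.pow_le_pow_left Finset.card_image_le _

lemma sum_meetCount_image_erase_le {U V : Type*} [Fintype U] [Fintype V] [DecidableEq V]
    (emb : Finset (U → V)) :
    ∑ v, meetCount (emb.filter fun φ => v ∈ Finset.univ.image φ)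
        (fun φ => (Finset.univ.image φ).erase v) ≤ Fintype.card U * overlapCount emb := by
  set pairs := (emb ×ˢ emb).filter fun p =>
    1 < (Finset.univ.image p.1 ∩ Finset.univ.image p.2).card
  have le_pairs : ∀ v, meetCount (emb.filter fun φ => v ∈ Finset.univ.image φ)
      (fun φ => (Finset.univ.image φ).erase v) ≤
      (pairs.filter fun q => v ∈ Finset.univ.image q.1).card := by
    refine fun v => Finset.card_le_card ?_
    rintro ⟨φ, ψ⟩ hq
    simp only [pairs, Finset.mem_filter, Finset.mem_product] at hq ⊢
    obtain ⟨⟨⟨hφ, hvφ⟩, hψ, hvψ⟩, hmeet⟩ := hq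
    obtain ⟨u, huφ, huψ⟩ := Finset.not_disjoint_iff.1 hmeet
    have two_points : v ≠ u := (Finset.ne_of_mem_erase huφ).symm
    exact ⟨⟨⟨hφ, hψ⟩, Finset.one_lt_card.2 ⟨v, Finset.mem_inter.2 ⟨hvφ, hvψ⟩, u,
      Finset.mem_inter.2 ⟨Finset.mem_of_mem_erase huφ, Finset.mem_of_mem_erase huψ⟩,
      two_points⟩⟩, hvφ⟩
  calc _ ≤ ∑ v, (pairs.filter fun q => v ∈ Finset.univ.image q.1).card :=
        Finset.sum_le_sum fun v _ => le_pairs v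
    _ = ∑ q ∈ pairs, (Finset.univ.image q.1).card := by
        simp only [Finset.card_filter]
        rw [Finset.sum_comm]
        simp
    _ ≤ ∑ _q ∈ pairs, Fintype.card U := Finset.sum_le_sum fun _ _ => Finset.card_image_le
    _ = _ := by rw [Finset.sum_const, smul_eq_mul, mul_comm]; rfl

namespace IsUniformCover

variable {U V : Type*} [Fintype U] [DecidableEq V] {emb : Finset (U → V)} {k : ℕ}

lemma card_pos [Nonempty V] (h : IsUniformCover emb k) : 0 < emb.card := by
  obtain ⟨v⟩ := ‹Nonempty V›
  exact (h.pos.trans_eq (h.card_filter v).symm).trans_le (Finset.card_filter_le _ _)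

variable [Fintype V]

lemma sum_sum (h : IsUniformCover emb k) (F : (U → V) → V → ℝ) :
    ∑ φ ∈ emb, ∑ j, F φ (φ j) =
      ∑ v, ∑ φ ∈ emb.filter (fun φ => v ∈ Finset.univ.image φ), F φ v := by
  simp only [Finset.sum_filter]
  conv_rhs => rw [Finset.sum_comm]
  refine Finset.sum_congr rfl fun φ hφ => ?_
  rw [← Finset.sum_filter, Finset.filter_mem_eq_inter, Finset.univ_inter,
    Finset.sum_image (h.injective φ hφ).injOn]

lemma sum_sum_apply (h : IsUniformCover emb k) (f : V → ℝ) :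
    ∑ φ ∈ emb, ∑ j, f (φ j) = k * ∑ v, f v := by
  rw [h.sum_sum fun _ v => f v]
  simp only [Finset.sum_const, h.card_filter, nsmul_eq_mul, Finset.mul_sum]

lemma card_mul_card (h : IsUniformCover emb k) :
    (emb.card : ℝ) * Fintype.card U = k * Fintype.card V := by
  simpa using h.sum_sum_apply fun _ => 1

lemma sum_erase_le [Nonempty U] [Nonempty V] (h : IsUniformCover emb k)
    {D : V → Finset V → ℝ} (hD : ∀ v, Monotone (D v)) {C : ℝ} (hD0 : ∀ v R, 0 ≤ D v R)
    (hDC : ∀ v R, D v R ≤ C) {l : ℝ} (hl : ∀ R : Finset V, ∑ v, D v R ≤ l * R.card)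
    {t : ℝ} (h0 : 0 < t) (h1 : t ≤ 1) {σ : ℝ} (hσ : 0 < σ) :
    ∑ φ ∈ emb, ∑ j, D (φ j) ((Finset.univ.image φ).erase (φ j)) ≤
      emb.card * (Fintype.card U * (l * t + C * σ) +
        C * (Fintype.card V * overlapCount emb / emb.card ^ 2) /
          (σ * t ^ (2 * (Fintype.card U - 1)))) := by
  set r := Fintype.card U
  set s : V → Finset (U → V) := fun v => emb.filter fun φ => v ∈ Finset.univ.image φ
  have hC : 0 ≤ C := (hD0 (Classical.arbitrary V) ∅).trans (hDC _ ∅)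
  have hk : (0 : ℝ) < k := by exact_mod_cast h.pos
  have hemb : (0 : ℝ) < emb.card := by exact_mod_cast h.card_pos
  have at_point : ∀ v, ∑ φ ∈ s v, D v ((Finset.univ.image φ).erase v) ≤
      k * binomialExp t (D v) + C * (σ * k +
        meetCount (s v) (fun φ => (Finset.univ.image φ).erase v) /
          (σ * k * t ^ (2 * (r - 1)))) := by
    intro v
    rw [← h.card_filter v]
    refine sum_le_binomialExp (fun φ hφ => ?_) (Finset.card_pos.1 (h.card_filter v ▸ h.pos))
      h0 h1 (hD v) (hD0 v) (hDC v) hσ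
    obtain ⟨hφ, hv⟩ := Finset.mem_filter.1 hφ
    rw [Finset.card_erase_of_mem hv, Finset.card_image_of_injective _ (h.injective φ hφ),
      Finset.card_univ]
  have increments : ∑ v, binomialExp t (D v) ≤ l * (t * Fintype.card V) := by
    rw [← binomialExp_sum, ← binomialExp_card, ← smul_eq_mul, ← map_smul]
    exact binomialExp_mono h0.le h1 hl
  have meets : (∑ v, meetCount (s v) (fun φ => (Finset.univ.image φ).erase v) : ℝ) ≤
      r * overlapCount emb := by exact_mod_cast sum_meetCount_image_erase_le emb
  calc _ = ∑ v, ∑ φ ∈ s v, D v ((Finset.univ.image φ).erase v) :=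
        h.sum_sum fun φ v => D v ((Finset.univ.image φ).erase v)
    _ ≤ _ := Finset.sum_le_sum fun v _ => at_point v
    _ = k * ∑ v, binomialExp t (D v) + C * (σ * (k * Fintype.card V) +
          (∑ v, meetCount (s v) (fun φ => (Finset.univ.image φ).erase v) : ℝ) /
            (σ * k * t ^ (2 * (r - 1)))) := by
        rw [Finset.sum_add_distrib, ← Finset.mul_sum, ← Finset.mul_sum, Finset.sum_add_distrib,
          ← Finset.sum_div, Finset.sum_const, Finset.card_univ, nsmul_eq_mul]
        ring
    _ ≤ k * (l * (t * Fintype.card V)) + C * (σ * (k * Fintype.card V) +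
          r * overlapCount emb / (σ * k * t ^ (2 * (r - 1)))) := by gcongr
    _ = (k * Fintype.card V) * (l * t + C * σ) +
          C * (r * overlapCount emb / (σ * k * t ^ (2 * (r - 1)))) := by ring
    _ = _ := by
        have total : (emb.card : ℝ) * r = k * Fintype.card V := h.card_mul_card
        have ratio : (r : ℝ) / k = Fintype.card V / emb.card := by
          rw [div_eq_div_iff hk.ne' hemb.ne', mul_comm, total, mul_comm]
        rw [← total, show r * overlapCount emb / (σ * k * t ^ (2 * (r - 1))) =
          r / k * (overlapCount emb / (σ * t ^ (2 * (r - 1)))) by ring, ratio]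
        field_simp

end IsUniformCover

/-! ### Good homogeneous set-sequences -/

namespace Ssee

variable {S : Ssee}

lemma Homogeneous.exists_isUniformCover (hHom : S.Homogeneous) {N n : ℕ} (hNn : N ≤ n) :
    ∃ k, IsUniformCover (S.emb N n) k :=
  let ⟨k, hk0, hk⟩ := hHom N n hNn
  ⟨k, hk0, S.emb_inj N n hNn, hk⟩

lemma Good.tendsto_card (hS : S.Good) :
    Tendsto (fun n => (Fintype.card (S.V n) : ℝ)) atTop atTop :=
  tendsto_natCast_atTop_atTop.comp hS.1

lemma Good.tendsto_overlapCount (hS : S.Good) (N : ℕ) :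
    Tendsto (fun n => (Fintype.card (S.V n) * overlapCount (S.emb N n) : ℝ) /
      (S.emb N n).card ^ 2) atTop (𝓝 0) := by
  rcases Nat.lt_or_ge 1 (Fintype.card (S.V N)) with hN | hN
  · set r := Fintype.card (S.V N)
    have upper : Tendsto (fun n => (Fintype.card (S.V n) * S.interCount N n : ℝ) /
        (S.emb N n).card ^ 2 + (r ^ r : ℝ) / ((S.emb N n).card / Fintype.card (S.V n)))
        atTop (𝓝 0) := by
      simpa using (hS.2.2 N hN).add (tendsto_const_nhds.div_atTop (hS.2.1 N hN))
    refine tendsto_of_tendsto_of_tendsto_of_le_of_le' tendsto_const_nhds upper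
      (Eventually.of_forall fun n => by positivity) ?_
    filter_upwards [eventually_ge_atTop N] with n hNn
    have count : (overlapCount (S.emb N n) : ℝ) ≤
        S.interCount N n + (S.emb N n).card * (r : ℝ) ^ r := by
      exact_mod_cast S.overlapCount_le hNn
    rcases (S.emb N n).card.eq_zero_or_pos with hE | hE
    · simp [hE]
    · have hE' : (0 : ℝ) < (S.emb N n).card := by exact_mod_cast hE
      calc _ ≤ (Fintype.card (S.V n) * (S.interCount N n + (S.emb N n).card * (r : ℝ) ^ r)) /
            ((S.emb N n).card : ℝ) ^ 2 := by gcongr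
        _ = _ := by field_simp
  · have no_overlap : ∀ n, overlapCount (S.emb N n) = 0 := by
      refine fun n => Finset.card_eq_zero.2 (Finset.filter_eq_empty_iff.2 fun p _ => ?_)
      exact not_lt.2 ((Finset.card_le_card Finset.inter_subset_left).trans
        (Finset.card_image_le.trans hN))
    simp [no_overlap]

lemma Good.eventually_sum_erase_le (hS : S.Good) (hHom : S.Homogeneous) (N : ℕ) (l C : ℝ) {τ : ℝ}
    (hτ : 0 < τ) :
    ∀ᶠ n in atTop, ∀ D : S.V n → Finset (S.V n) → ℝ, (∀ v, Monotone (D v)) →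
      (∀ v R, 0 ≤ D v R) → (∀ v R, D v R ≤ C) → (∀ R : Finset _, ∑ v, D v R ≤ l * R.card) →
      ∑ φ ∈ S.emb N n, ∑ j, D (φ j) ((Finset.univ.image φ).erase (φ j)) ≤
        τ * (S.emb N n).card := by
  set r := Fintype.card (S.V N)
  obtain ⟨t, ht, ht0, ht1⟩ : ∃ t, r * (l * t + C * t) < τ / 2 ∧ 0 < t ∧ t ≤ 1 := by
    have small : Tendsto (fun t : ℝ => r * (l * t + C * t)) (𝓝[>] 0) (𝓝 0) := by
      refine tendsto_nhdsWithin_of_tendsto_nhds ?_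
      simpa using (show Continuous fun t : ℝ => r * (l * t + C * t) by fun_prop).tendsto 0
    exact ((small.eventually_lt_const (half_pos hτ)).and (Ioc_mem_nhdsGT one_pos)).exists
  have vanish : Tendsto (fun n => C * ((Fintype.card (S.V n) * overlapCount (S.emb N n) : ℝ) /
      (S.emb N n).card ^ 2) / (t * t ^ (2 * (r - 1)))) atTop (𝓝 0) := by
    simpa using ((hS.tendsto_overlapCount N).const_mul C).div_const (t * t ^ (2 * (r - 1)))
  filter_upwards [vanish.eventually_lt_const (half_pos hτ), eventually_ge_atTop N]
    with n hn hNn D hD hD0 hDC hl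
  obtain ⟨k, hk⟩ := hHom.exists_isUniformCover hNn
  refine (hk.sum_erase_le hD hD0 hDC hl ht0 ht1 ht0).trans ?_
  rw [mul_comm]
  gcongr
  linarith

end Ssee

/-! ### Decoupling conditional probabilities -/

section Decoupling

variable {Ω : Type*} {m m' m₀ : MeasurableSpace Ω} {P : Measure Ω} [IsProbabilityMeasure P]
  {s t : Set Ω}

lemma condProb_mem_Icc (hm : m ≤ m₀) (hs : MeasurableSet s) :
    ∀ᵐ ω ∂P, (P⟦s|m⟧) ω ∈ Icc 0 1 := by
  have integrable : Integrable (s.indicator fun _ => (1 : ℝ)) P :=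
    (integrable_const 1).indicator hs
  have lower : 0 ≤ᵐ[P] P⟦s|m⟧ :=
    condExp_nonneg (Eventually.of_forall (indicator_nonneg fun _ _ => zero_le_one))
  have upper : P⟦s|m⟧ ≤ᵐ[P] P[fun _ => (1 : ℝ)|m] :=
    condExp_mono integrable (integrable_const 1)
      (Eventually.of_forall (indicator_le_self' fun _ _ => zero_le_one))
  rw [condExp_const hm] at upper
  filter_upwards [lower, upper] with ω h0 h1 using ⟨h0, h1⟩

lemma memLp_condProb (hm : m ≤ m₀) (hs : MeasurableSet s) (p : ℝ≥0∞) : MemLp (P⟦s|m⟧) p P := by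
  refine MemLp.of_bound integrable_condExp.aestronglyMeasurable 1 ?_
  filter_upwards [condProb_mem_Icc hm hs] with ω hω
  rw [Real.norm_of_nonneg hω.1]
  exact hω.2

lemma integrable_prod_condProb {ι : Type*} {A : ι → Set Ω} (hm : m ≤ m₀)
    (hA : ∀ i, MeasurableSet (A i)) (J : Finset ι) :
    Integrable (fun ω => ∏ j ∈ J, (P⟦A j|m⟧) ω) P := by
  refine .of_mem_Icc 0 1 (Finset.aemeasurable_fun_prod J fun j _ =>
    integrable_condExp.aemeasurable) ?_
  filter_upwards [J.eventually_all.2 fun j _ => condProb_mem_Icc (P := P) hm (hA j)] with ω hω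
  exact ⟨Finset.prod_nonneg fun j hj => (hω j hj).1,
    Finset.prod_le_one (fun j hj => (hω j hj).1) fun j hj => (hω j hj).2⟩

/-- Condition on `m'` first: there `t` can be pulled out. -/
lemma integral_abs_condProb_inter_sub_mul_le (hmm' : m ≤ m') (hm' : m' ≤ m₀)
    (hs : MeasurableSet s) (ht : MeasurableSet[m'] t) :
    ∫ ω, |(P⟦s ∩ t|m⟧) ω - (P⟦s|m⟧) ω * (P⟦t|m⟧) ω| ∂P ≤
      ∫ ω, |(P⟦s|m'⟧) ω - (P⟦s|m⟧) ω| ∂P := by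
  have ht₀ := hm' t ht
  have joint : P⟦s ∩ t|m⟧ =ᵐ[P] P[t.indicator (P⟦s|m'⟧)|m] := by
    refine (condExp_condExp_of_le hmm' hm').symm.trans (condExp_congr_ae ?_)
    rw [inter_comm, ← indicator_indicator]
    exact condExp_indicator ((integrable_const 1).indicator hs) ht
  have product : P⟦s|m⟧ * P⟦t|m⟧ =ᵐ[P] P[t.indicator (P⟦s|m⟧)|m] := by
    have ind : t.indicator (P⟦s|m⟧) = P⟦s|m⟧ * t.indicator fun _ => (1 : ℝ) := by
      ext ω; by_cases h : ω ∈ t <;> simp [h]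
    rw [ind]
    refine (condExp_mul_of_stronglyMeasurable_left stronglyMeasurable_condExp ?_
      ((integrable_const 1).indicator ht₀)).symm
    rw [← ind]
    exact integrable_condExp.indicator ht₀
  have difference : (fun ω => (P⟦s ∩ t|m⟧) ω - (P⟦s|m⟧) ω * (P⟦t|m⟧) ω) =ᵐ[P]
      P[t.indicator (P⟦s|m'⟧ - P⟦s|m⟧)|m] := by
    rw [indicator_sub']
    exact (joint.sub product).trans (condExp_sub (integrable_condExp.indicator ht₀)
      (integrable_condExp.indicator ht₀) m).symm
  calc _ = ∫ ω, |(P[t.indicator (P⟦s|m'⟧ - P⟦s|m⟧)|m]) ω| ∂P :=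
        integral_congr_ae (difference.fun_comp abs)
    _ ≤ ∫ ω, |t.indicator (P⟦s|m'⟧ - P⟦s|m⟧) ω| ∂P := integral_abs_condExp_le _
    _ ≤ _ := by
        refine integral_mono ((integrable_condExp.sub integrable_condExp).indicator ht₀).abs
          (integrable_condExp.sub integrable_condExp).abs fun ω => ?_
        by_cases h : ω ∈ t <;> simp [h]

lemma integral_abs_condProb_biInter_sub_prod_le {ι : Type*} {A : ι → Set Ω}
    {m' : ι → MeasurableSpace Ω} (hmm' : ∀ i, m ≤ m' i) (hm' : ∀ i, m' i ≤ m₀)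
    (hA : ∀ i, MeasurableSet (A i)) (hA' : ∀ i j, i ≠ j → MeasurableSet[m' i] (A j))
    (hm : m ≤ m₀) (J : Finset ι) :
    ∫ ω, |(P⟦⋂ j ∈ J, A j|m⟧) ω - ∏ j ∈ J, (P⟦A j|m⟧) ω| ∂P ≤
      ∑ j ∈ J, ∫ ω, |(P⟦A j|m' j⟧) ω - (P⟦A j|m⟧) ω| ∂P := by
  classical
  induction J using Finset.induction_on with
  | empty => simp [condExp_const hm]
  | insert i J hi ih =>
    rw [Finset.sum_insert hi, Finset.set_biInter_insert]
    set B := ⋂ j ∈ J, A j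
    have hB : MeasurableSet[m' i] B :=
      Finset.measurableSet_biInter J fun j hj => hA' i j fun h => hi (h ▸ hj)
    have head := integral_abs_condProb_inter_sub_mul_le (P := P) (hmm' i) (hm' i) (hA i) hB
    have integrable_mul : Integrable (fun ω => (P⟦A i|m⟧) ω * (P⟦B|m⟧) ω) P :=
      (memLp_condProb hm (hA i) 2).integrable_mul (memLp_condProb hm (hm' i B hB) 2)
    have integrable_head := (integrable_condExp (μ := P) (m := m)
      (f := (A i ∩ B).indicator fun _ => (1 : ℝ))).sub integrable_mul |>.abs
    have integrable_tail := ((integrable_condExp (μ := P) (m := m)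
      (f := B.indicator fun _ => (1 : ℝ))).sub (integrable_prod_condProb hm hA J)).abs
    calc _ ≤ ∫ ω, (|(P⟦A i ∩ B|m⟧) ω - (P⟦A i|m⟧) ω * (P⟦B|m⟧) ω| +
            |(P⟦B|m⟧) ω - ∏ j ∈ J, (P⟦A j|m⟧) ω|) ∂P := by
          refine integral_mono_ae (integrable_condExp.sub (integrable_prod_condProb hm hA _)).abs
            (integrable_head.add integrable_tail) ?_
          filter_upwards [condProb_mem_Icc (P := P) hm (hA i)] with ω hω
          rw [Finset.prod_insert hi]
          refine (abs_sub_le _ ((P⟦A i|m⟧) ω * (P⟦B|m⟧) ω) _).trans (add_le_add_right ?_ _)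
          rw [← mul_sub, abs_mul, abs_of_nonneg hω.1]
          exact mul_le_of_le_one_left (abs_nonneg _) hω.2
      _ = _ := integral_add integrable_head integrable_tail
      _ ≤ _ := add_le_add head ih

lemma integral_sq_condExp_sub_condExp (hmm' : m ≤ m') (hm' : m' ≤ m₀) {f : Ω → ℝ}
    (hf : MemLp f 2 P) :
    ∫ ω, ((P[f|m']) ω - (P[f|m]) ω) ^ 2 ∂P =
      ∫ ω, (P[f|m']) ω ^ 2 ∂P - ∫ ω, (P[f|m]) ω ^ 2 ∂P := by
  have hm := hmm'.trans hm'
  set X := P[f|m']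
  have hX : MemLp X 2 P := hf.condExp one_le_two
  have hfm : MemLp (P[f|m]) 2 P := hf.condExp one_le_two
  have tower : P[X|m] =ᵐ[P] P[f|m] := condExp_condExp_of_le hmm' hm'
  calc _ = ∫ ω, (X ω - (P[X|m]) ω) ^ 2 ∂P := by
        refine integral_congr_ae ?_
        filter_upwards [tower] with ω hω
        rw [hω]
    _ = ∫ ω, (Var[X; P | m]) ω ∂P := (integral_condExp hm).symm
    _ = ∫ ω, ((P[X ^ 2|m]) ω - (P[f|m]) ω ^ 2) ∂P := by
        refine integral_congr_ae ?_
        filter_upwards [condVar_ae_eq_condExp_sq_sub_sq_condExp hm hX, tower] with ω hω ht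
        rw [hω, Pi.sub_apply, Pi.pow_apply, ht]
    _ = _ := by
        rw [integral_sub integrable_condExp hfm.integrable_sq, integral_condExp hm]
        rfl

lemma integral_abs_condExp_sub_condExp_le (hmm' : m ≤ m') (hm' : m' ≤ m₀) {f : Ω → ℝ}
    (hf : MemLp f 2 P) {σ : ℝ} (hσ : 0 < σ) :
    ∫ ω, |(P[f|m']) ω - (P[f|m]) ω| ∂P ≤
      σ + (∫ ω, (P[f|m']) ω ^ 2 ∂P - ∫ ω, (P[f|m]) ω ^ 2 ∂P) / σ := by
  have integrable_sq : Integrable (fun ω => ((P[f|m']) ω - (P[f|m]) ω) ^ 2 / σ) P :=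
    ((hf.condExp one_le_two).sub (hf.condExp one_le_two)).integrable_sq.div_const σ
  calc _ ≤ ∫ ω, (σ + ((P[f|m']) ω - (P[f|m]) ω) ^ 2 / σ) ∂P :=
        integral_mono (integrable_condExp.sub integrable_condExp).abs
          ((integrable_const σ).add integrable_sq) fun ω => abs_le_add_sq_div hσ _
    _ = _ := by
        rw [integral_add (integrable_const σ) integrable_sq, integral_div,
          integral_sq_condExp_sub_condExp hmm' hm' hf, integral_const, probReal_univ, one_smul]

end Decoupling

/-! ### Energy increment -/

section Energy

variable {Ω K V : Type*} [MeasurableSpace K]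

/-- The σ-algebra generated by the random variables `Y v` with `v ∈ T`. -/
abbrev coordAlgebra (Y : V → Ω → K) (T : Finset V) : MeasurableSpace Ω :=
  MeasurableSpace.comap (fun ω (v : T) => Y v ω) inferInstance

lemma measurable_coordAlgebra (Y : V → Ω → K) {T : Finset V} {v : V} (hv : v ∈ T) :
    Measurable[coordAlgebra Y T] (Y v) :=
  (measurable_pi_apply (⟨v, hv⟩ : T)).comp (comap_measurable fun ω (v : T) => Y v ω)

lemma coordAlgebra_mono (Y : V → Ω → K) : Monotone (coordAlgebra Y) :=
  fun _ _ h => Measurable.comap_le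
    (@measurable_pi_lambda _ _ _ (coordAlgebra Y _) _ _ fun v => measurable_coordAlgebra Y (h v.2))

variable [mΩ : MeasurableSpace Ω] {Y : V → Ω → K}

lemma coordAlgebra_le (hY : ∀ v, Measurable (Y v)) (T : Finset V) : coordAlgebra Y T ≤ mΩ :=
  Measurable.comap_le (measurable_pi_lambda _ fun v => hY v)

/-- The energy of `Y v` relative to the coordinates in `T`: the total second moment of the
conditional probabilities of its values. -/
def energy [Fintype K] (P : Measure Ω) (Y : V → Ω → K) (v : V) (T : Finset V) : ℝ :=
  ∑ a, ∫ ω, (P⟦Y v ⁻¹' {a}|coordAlgebra Y T⟧) ω ^ 2 ∂P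

variable {P : Measure Ω}

lemma energy_nonneg [Fintype K] (v : V) (T : Finset V) : 0 ≤ energy P Y v T :=
  Finset.sum_nonneg fun _ _ => integral_nonneg fun _ => sq_nonneg _

variable [MeasurableSingletonClass K] [IsProbabilityMeasure P]

lemma memLp_indicator_preimage (hY : ∀ v, Measurable (Y v)) (v : V) (a : K) (p : ℝ≥0∞) :
    MemLp ((Y v ⁻¹' {a}).indicator fun _ => (1 : ℝ)) p P :=
  (memLp_const 1).indicator (hY v (measurableSet_singleton a))

lemma integral_sq_condProb_mono (hY : ∀ v, Measurable (Y v)) (v : V) (a : K) :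
    Monotone fun T => ∫ ω, (P⟦Y v ⁻¹' {a}|coordAlgebra Y T⟧) ω ^ 2 ∂P := by
  intro T T' h
  dsimp only
  rw [← sub_nonneg, ← integral_sq_condExp_sub_condExp (coordAlgebra_mono Y h)
    (coordAlgebra_le hY T') (memLp_indicator_preimage hY v a 2)]
  positivity

variable [Fintype K]

lemma energy_mono (hY : ∀ v, Measurable (Y v)) (v : V) : Monotone (energy P Y v) :=
  fun _ _ h => Finset.sum_le_sum fun a _ => integral_sq_condProb_mono hY v a h

lemma energy_le_card (hY : ∀ v, Measurable (Y v)) (v : V) (T : Finset V) :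
    energy P Y v T ≤ Fintype.card K := by
  have term_le : ∀ a, ∫ ω, (P⟦Y v ⁻¹' {a}|coordAlgebra Y T⟧) ω ^ 2 ∂P ≤ 1 := by
    intro a
    have h := coordAlgebra_le hY T
    have ha := hY v (measurableSet_singleton a)
    refine (integral_mono_ae (memLp_condProb h ha 2).integrable_sq (integrable_const 1)
      ?_).trans_eq (by simp)
    filter_upwards [condProb_mem_Icc h ha] with ω hω using pow_le_one₀ hω.1 hω.2
  calc _ ≤ ∑ _a : K, (1 : ℝ) := Finset.sum_le_sum fun a _ => term_le a
    _ = _ := by simp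

/-- Take `T` maximizing the total energy minus `l * |T|`. -/
lemma exists_energy_increment_le [Fintype V] [DecidableEq V] (hY : ∀ v, Measurable (Y v)) {l : ℝ}
    (hl : 0 ≤ l) :
    ∃ T : Finset V, l * T.card ≤ Fintype.card V * Fintype.card K ∧
      ∀ R : Finset V, ∑ v, (energy P Y v (T ∪ R) - energy P Y v T) ≤ l * R.card := by
  obtain ⟨T, -, hT⟩ := Finset.exists_max_image Finset.univ
    (fun T => ∑ v, energy P Y v T - l * T.card) Finset.univ_nonempty
  refine ⟨T, ?_, fun R => ?_⟩
  · have h := hT ∅ (Finset.mem_univ _)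
    have lower : 0 ≤ ∑ v, energy P Y v ∅ := Finset.sum_nonneg fun v _ => energy_nonneg v _
    have upper : ∑ v, energy P Y v T ≤ ∑ _v : V, (Fintype.card K : ℝ) :=
      Finset.sum_le_sum fun v _ => energy_le_card hY v T
    simp only [Finset.card_empty, Nat.cast_zero, mul_zero, sub_zero, Finset.sum_const,
      Finset.card_univ, nsmul_eq_mul] at h upper
    linarith
  · have h := hT (T ∪ R) (Finset.mem_univ _)
    have card_le : ((T ∪ R).card : ℝ) ≤ T.card + R.card := by
      exact_mod_cast Finset.card_union_le T R
    have := mul_le_mul_of_nonneg_left card_le hl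
    rw [Finset.sum_sub_distrib]
    linarith

lemma integral_abs_condProb_sub_prod_le_energy {U : Type*} [Fintype U] [DecidableEq V]
    (hY : ∀ v, Measurable (Y v)) (T : Finset V) {φ : U → V} (hφ : Function.Injective φ)
    (a : U → K) {σ : ℝ} (hσ : 0 < σ) :
    ∫ ω, |(P⟦{ω | ∀ j, Y (φ j) ω = a j}|coordAlgebra Y T⟧) ω -
        ∏ j, (P⟦Y (φ j) ⁻¹' {a j}|coordAlgebra Y T⟧) ω| ∂P ≤
      Fintype.card U * σ + (∑ j, (energy P Y (φ j) (T ∪ (Finset.univ.image φ).erase (φ j)) -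
        energy P Y (φ j) T)) / σ := by
  set T' : U → Finset V := fun j => T ∪ (Finset.univ.image φ).erase (φ j)
  have hT' : ∀ j, coordAlgebra Y T ≤ coordAlgebra Y (T' j) := fun j =>
    coordAlgebra_mono Y Finset.subset_union_left
  have event : {ω | ∀ j, Y (φ j) ω = a j} = ⋂ j ∈ Finset.univ, Y (φ j) ⁻¹' {a j} := by
    ext; simp
  have others : ∀ i j, i ≠ j → MeasurableSet[coordAlgebra Y (T' i)] (Y (φ j) ⁻¹' {a j}) := by
    refine fun i j hij => measurable_coordAlgebra Y ?_ (measurableSet_singleton _)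
    exact Finset.mem_union_right _ (Finset.mem_erase.2
      ⟨fun h => hij (hφ h).symm, Finset.mem_image_of_mem φ (Finset.mem_univ j)⟩)
  have decoupled := integral_abs_condProb_biInter_sub_prod_le (P := P) hT'
    (fun j => coordAlgebra_le hY (T' j)) (fun j => hY (φ j) (measurableSet_singleton (a j))) others
    (coordAlgebra_le hY T) Finset.univ
  rw [event]
  refine decoupled.trans ?_
  calc _ ≤ ∑ j, (σ + (energy P Y (φ j) (T' j) - energy P Y (φ j) T) / σ) := by
        refine Finset.sum_le_sum fun j _ => ?_
        refine (integral_abs_condExp_sub_condExp_le (hT' j) (coordAlgebra_le hY _)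
          (memLp_indicator_preimage hY (φ j) (a j) 2) hσ).trans ?_
        gcongr σ + ?_ / σ
        simp only [energy, ← Finset.sum_sub_distrib]
        exact Finset.single_le_sum (f := fun a => ∫ ω, (P⟦Y (φ j) ⁻¹' {a}|coordAlgebra Y (T' j)⟧) ω
          ^ 2 ∂P - ∫ ω, (P⟦Y (φ j) ⁻¹' {a}|coordAlgebra Y T⟧) ω ^ 2 ∂P)
          (fun a _ => sub_nonneg.2 (integral_sq_condProb_mono hY (φ j) a Finset.subset_union_left))
          (Finset.mem_univ (a j))
    _ = _ := by
        rw [Finset.sum_add_distrib, ← Finset.sum_div, Finset.sum_const, nsmul_eq_mul,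
          Finset.card_univ]

end Energy

lemma Ssee.Good.eventually_exists_decoupling {S : Ssee} (hS : S.Good) (hHom : S.Homogeneous)
    (N : ℕ) (K : Type*) [Finite K] [MeasurableSpace K] [MeasurableSingletonClass K] {η : ℝ}
    (hη : 0 < η) :
    ∀ᶠ n in atTop, ∀ {Ω : Type*} [MeasurableSpace Ω] (P : Measure Ω) [IsProbabilityMeasure P]
      (Y : S.V n → Ω → K), (∀ v, Measurable (Y v)) →
      ∃ T : Finset (S.V n), T.card ≤ η * Fintype.card (S.V n) ∧
        ∀ a : S.V N → K, ∑ φ ∈ S.emb N n,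
          ∫ ω, |(P⟦{ω | ∀ j, Y (φ j) ω = a j}|coordAlgebra Y T⟧) ω -
            ∏ j, (P⟦Y (φ j) ⁻¹' {a j}|coordAlgebra Y T⟧) ω| ∂P ≤ η * (S.emb N n).card := by
  have := Fintype.ofFinite K
  set r : ℝ := (Fintype.card (S.V N) : ℝ)
  have hr : 0 < r := Nat.cast_pos.2 Fintype.card_pos
  set l : ℝ := (Fintype.card K + 1) / η
  set σ : ℝ := η / (2 * r)
  have hl : 0 < l := by positivity
  have hσ : 0 < σ := by positivity
  filter_upwards [hS.eventually_sum_erase_le hHom N l (Fintype.card K)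
    (by positivity : 0 < η * σ / 2), eventually_ge_atTop N] with n hn hNn Ω _ P _ Y hY
  obtain ⟨T, hT, hincr⟩ := exists_energy_increment_le (P := P) hY hl.le
  refine ⟨T, ?_, fun a => ?_⟩
  · refine le_of_mul_le_mul_left (hT.trans ?_) hl
    rw [← mul_assoc, div_mul_cancel₀ _ hη.ne', mul_comm]
    gcongr
    linarith
  · have increments := hn (fun v R => energy P Y v (T ∪ R) - energy P Y v T)
      (fun v R R' h => sub_le_sub_right (energy_mono hY v (Finset.union_subset_union_right h)) _)
      (fun v R => sub_nonneg.2 (energy_mono hY v Finset.subset_union_left))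
      (fun v R => (sub_le_self _ (energy_nonneg v T)).trans (energy_le_card hY v _)) hincr
    calc _ ≤ ∑ φ ∈ S.emb N n, (r * σ + (∑ j, (energy P Y (φ j)
            (T ∪ (Finset.univ.image φ).erase (φ j)) - energy P Y (φ j) T)) / σ) :=
          Finset.sum_le_sum fun φ hφ =>
            integral_abs_condProb_sub_prod_le_energy hY T (S.emb_inj N n hNn φ hφ) a hσ
      _ ≤ (S.emb N n).card * (r * σ) + η * σ / 2 * (S.emb N n).card / σ := by
          rw [Finset.sum_add_distrib, ← Finset.sum_div, Finset.sum_const, nsmul_eq_mul]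
          gcongr
      _ = _ := by
          simp only [σ]
          field_simp
          ring

/-! ### Passing to an atom -/

section Atoms

variable {Ω : Type*} [mΩ : MeasurableSpace Ω] {P : Measure Ω} [IsProbabilityMeasure P]

lemma condProb_comap_ae_eq {ι : Type*} [Countable ι] [MeasurableSpace ι]
    [MeasurableSingletonClass ι] {X : Ω → ι} (hX : Measurable X) {s : Set Ω}
    (hs : MeasurableSet s) :
    P⟦s|MeasurableSpace.comap X inferInstance⟧ =ᵐ[P] fun ω => P[|X ⁻¹' {X ω}].real s := by
  have on_fibre : ∀ i, ∀ᵐ ω ∂P.restrict (X ⁻¹' {i}),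
      (P⟦s|MeasurableSpace.comap X inferInstance⟧) ω = P[|X ⁻¹' {X ω}].real s := by
    intro i
    have hi : MeasurableSet[MeasurableSpace.comap X inferInstance] (X ⁻¹' {i}) :=
      ⟨{i}, measurableSet_singleton i, rfl⟩
    have generate_le : MeasurableSpace.generateFrom {X ⁻¹' {i}} ≤
        MeasurableSpace.comap X inferInstance :=
      MeasurableSpace.generateFrom_singleton_le hi
    have same_trace := condExp_ae_eq_restrict_of_measurableSpace_eq_on (μ := P)
      (f := s.indicator fun _ => (1 : ℝ)) hX.comap_le (generate_le.trans hX.comap_le) hi fun u => by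
        refine ⟨?_, generate_le _⟩
        rintro ⟨B, -, hB⟩
        by_cases h : i ∈ B
        · have whole : X ⁻¹' {i} ∩ u = X ⁻¹' {i} := inter_eq_left.2 fun ω (hω : X ω = i) =>
            (hB.subset (show X ω ∈ B from hω ▸ h)).2
          rw [whole]
          exact MeasurableSpace.measurableSet_generateFrom (mem_singleton _)
        · have empty : X ⁻¹' {i} ∩ u = ∅ := eq_empty_of_forall_notMem fun ω hω =>
            h ((show X ω = i from hω.1) ▸ hB.superset hω)
          rw [empty]
          exact @MeasurableSet.empty _ (MeasurableSpace.generateFrom {X ⁻¹' {i}})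
    filter_upwards [same_trace, condExp_set_generateFrom_singleton (hX.comap_le _ hi) hs,
      ae_restrict_mem (hX.comap_le _ hi)] with ω h1 h2 (h3 : X ω = i)
    rw [h1, h2, h3]
  rw [← ae_restrict_iUnion_iff, ← preimage_iUnion, iUnion_of_singleton, preimage_univ,
    Measure.restrict_univ] at on_fibre
  exact on_fibre

lemma exists_le_mul_and_le_two_mul {ι : Type*} [Fintype ι] [Nonempty ι] {p G : ι → ℝ}
    (hp : ∀ i, 0 ≤ p i) (hp1 : ∑ i, p i = 1) (hG : ∀ i, 0 ≤ G i) {e : ℝ} (he : 0 < e)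
    (hpG : ∑ i, p i * G i ≤ e) : ∃ i, 1 ≤ 2 * Fintype.card ι * p i ∧ G i ≤ 2 * e := by
  by_contra! h
  have hι : (0 : ℝ) < 2 * Fintype.card ι := by simpa using Fintype.card_pos
  have term_lt : ∀ i, p i < p i * G i / (2 * e) + 1 / (2 * Fintype.card ι) := by
    intro i
    rcases lt_or_ge (2 * Fintype.card ι * p i) 1 with hi | hi
    · refine ((lt_div_iff₀' hι).2 hi).trans_le (le_add_of_nonneg_left ?_)
      exact div_nonneg (mul_nonneg (hp i) (hG i)) (by linarith)
    · refine lt_add_of_le_of_pos ((le_div_iff₀ (by linarith)).2 ?_) (by positivity)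
      exact mul_le_mul_of_nonneg_left (h i hi).le (hp i)
  have total := Finset.sum_lt_sum_of_nonempty Finset.univ_nonempty fun i _ => term_lt i
  rw [hp1, Finset.sum_add_distrib, ← Finset.sum_div, Finset.sum_const, Finset.card_univ,
    nsmul_eq_mul] at total
  have half : (∑ i, p i * G i) / (2 * e) ≤ 1 / 2 := by
    rw [div_le_div_iff₀ (by linarith) two_pos]
    linarith
  have half' : (Fintype.card ι : ℝ) * (1 / (2 * Fintype.card ι)) = 1 / 2 := by
    field_simp
  linarith

lemma measureReal_pi_eq_sum {U K : Type*} [Fintype U] [MeasurableSpace K]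
    [MeasurableSingletonClass K] (μ : U → Measure K) [∀ j, IsFiniteMeasure (μ j)]
    (F : Finset (U → K)) : (Measure.pi μ).real F = ∑ a ∈ F, ∏ j, (μ j).real {a j} := by
  rw [← sum_measureReal_singleton]
  simp only [measureReal_def, Measure.pi_singleton, ENNReal.toReal_prod]

variable {U V K : Type*} [MeasurableSpace K] [MeasurableSingletonClass K]
  {Y : V → Ω → K} {T : Finset V} {emb : Finset (U → V)} {η ε : ℝ} {F : Finset (U → K)}

lemma measureReal_comp_mem_eq_sum [Finite U] [Finite K] (hY : ∀ v, Measurable (Y v)) (φ : U → V)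
    (F : Finset (U → K)) :
    P.real {ω | (fun j => Y (φ j) ω) ∈ F} = ∑ a ∈ F, P.real {ω | ∀ j, Y (φ j) ω = a j} := by
  have hφ : Measurable fun ω j => Y (φ j) ω := measurable_pi_lambda _ fun j => hY (φ j)
  change P.real ((fun ω j => Y (φ j) ω) ⁻¹' ↑F) = _
  rw [← sum_measureReal_preimage_singleton F fun a _ => hφ (measurableSet_singleton a)]
  simp only [preimage, mem_singleton_iff, funext_iff]

variable [Fintype U] [Fintype K]

lemma sum_integral_prod_condProb_le (hY : ∀ v, Measurable (Y v)) (hη : 0 ≤ η)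
    (hT : ∀ a : U → K, ∑ φ ∈ emb, ∫ ω, |(P⟦{ω | ∀ j, Y (φ j) ω = a j}|coordAlgebra Y T⟧) ω -
      ∏ j, (P⟦Y (φ j) ⁻¹' {a j}|coordAlgebra Y T⟧) ω| ∂P ≤ η * emb.card)
    (hF : ∑ φ ∈ emb, P.real {ω | (fun j => Y (φ j) ω) ∈ F} ≤ ε * emb.card) :
    ∑ φ ∈ emb, ∑ a ∈ F, ∫ ω, ∏ j, (P⟦Y (φ j) ⁻¹' {a j}|coordAlgebra Y T⟧) ω ∂P ≤
      (ε + Fintype.card K ^ Fintype.card U * η) * emb.card := by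
  classical
  have hm := coordAlgebra_le hY T
  have term_le : ∀ (φ : U → V) (a : U → K),
      ∫ ω, ∏ j, (P⟦Y (φ j) ⁻¹' {a j}|coordAlgebra Y T⟧) ω ∂P ≤
        P.real {ω | ∀ j, Y (φ j) ω = a j} +
          ∫ ω, |(P⟦{ω | ∀ j, Y (φ j) ω = a j}|coordAlgebra Y T⟧) ω -
            ∏ j, (P⟦Y (φ j) ⁻¹' {a j}|coordAlgebra Y T⟧) ω| ∂P := by
    intro φ a
    have hs : MeasurableSet {ω | ∀ j, Y (φ j) ω = a j} := by
      have : {ω | ∀ j, Y (φ j) ω = a j} = ⋂ j, Y (φ j) ⁻¹' {a j} := by ext; simp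
      exact this ▸ MeasurableSet.iInter fun j => hY (φ j) (measurableSet_singleton (a j))
    have integrable_prod : Integrable (fun ω => ∏ j, (P⟦Y (φ j) ⁻¹' {a j}|coordAlgebra Y T⟧) ω) P :=
      integrable_prod_condProb hm (fun j => hY (φ j) (measurableSet_singleton (a j))) _
    have mean : ∫ ω, (P⟦{ω | ∀ j, Y (φ j) ω = a j}|coordAlgebra Y T⟧) ω ∂P =
        P.real {ω | ∀ j, Y (φ j) ω = a j} := (integral_condExp hm).trans (integral_indicator_one hs)
    have integrable_diff := (integrable_condExp (m := coordAlgebra Y T) (μ := P)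
      (f := {ω | ∀ j, Y (φ j) ω = a j}.indicator fun _ => (1 : ℝ))).sub integrable_prod
    rw [← mean]
    refine (integral_mono integrable_prod (integrable_condExp.add integrable_diff.abs)
      fun ω => ?_).trans_eq (integral_add integrable_condExp integrable_diff.abs)
    exact sub_le_iff_le_add'.1 ((le_abs_self _).trans_eq (abs_sub_comm _ _))
  calc _ ≤ ∑ φ ∈ emb, ∑ a ∈ F, (P.real {ω | ∀ j, Y (φ j) ω = a j} +
          ∫ ω, |(P⟦{ω | ∀ j, Y (φ j) ω = a j}|coordAlgebra Y T⟧) ω -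
            ∏ j, (P⟦Y (φ j) ⁻¹' {a j}|coordAlgebra Y T⟧) ω| ∂P) :=
        Finset.sum_le_sum fun φ _ => Finset.sum_le_sum fun a _ => term_le φ a
    _ ≤ ε * emb.card + ∑ _a ∈ F, η * emb.card := by
        simp only [Finset.sum_add_distrib, ← measureReal_comp_mem_eq_sum hY]
        refine add_le_add hF ?_
        rw [Finset.sum_comm]
        exact Finset.sum_le_sum fun a _ => hT a
    _ ≤ ε * emb.card + Fintype.card K ^ Fintype.card U * (η * emb.card) := by
        rw [Finset.sum_const, nsmul_eq_mul]
        gcongr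
        exact_mod_cast F.card_le_univ.trans_eq Fintype.card_fun
    _ = _ := by ring

lemma exists_cond_sum_pi_le [Nonempty K] [Countable V] (hY : ∀ v, Measurable (Y v)) (hη : 0 ≤ η)
    (hT : ∀ a : U → K, ∑ φ ∈ emb, ∫ ω, |(P⟦{ω | ∀ j, Y (φ j) ω = a j}|coordAlgebra Y T⟧) ω -
      ∏ j, (P⟦Y (φ j) ⁻¹' {a j}|coordAlgebra Y T⟧) ω| ∂P ≤ η * emb.card)
    (hF : ∑ φ ∈ emb, P.real {ω | (fun j => Y (φ j) ω) ∈ F} ≤ ε * emb.card)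
    (hpos : 0 < (ε + Fintype.card K ^ Fintype.card U * η) * emb.card) :
    ∃ t, 1 ≤ 2 * Fintype.card K ^ T.card * P.real t ∧
      ∑ φ ∈ emb, (Measure.pi fun j => P[|t].map (Y (φ j))).real F ≤
        2 * ((ε + Fintype.card K ^ Fintype.card U * η) * emb.card) := by
  classical
  set X : Ω → T → K := fun ω v => Y v ω
  have hX : Measurable X := measurable_pi_lambda _ fun v => hY v
  set G : (T → K) → ℝ := fun i =>
    ∑ φ ∈ emb, (Measure.pi fun j => P[|X ⁻¹' {i}].map (Y (φ j))).real F
  have hG : ∀ᵐ ω ∂P, G (X ω) =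
      ∑ φ ∈ emb, ∑ a ∈ F, ∏ j, (P⟦Y (φ j) ⁻¹' {a j}|coordAlgebra Y T⟧) ω := by
    have marginals := ae_all_iff.2 fun v => ae_all_iff.2 fun a =>
      condProb_comap_ae_eq (P := P) hX (hY v (measurableSet_singleton a))
    filter_upwards [marginals] with ω hω
    simp only [G, measureReal_pi_eq_sum, map_measureReal_apply (hY _) (measurableSet_singleton _)]
    exact Finset.sum_congr rfl fun φ _ => Finset.sum_congr rfl fun a _ =>
      Finset.prod_congr rfl fun j _ => (hω (φ j) (a j)).symm
  have mean : ∑ i, P.real (X ⁻¹' {i}) * G i ≤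
      (ε + Fintype.card K ^ Fintype.card U * η) * emb.card := by
    have hm := coordAlgebra_le hY T
    have integrable : ∀ (φ : U → V) (a : U → K), Integrable (fun ω =>
        ∏ j, (P⟦Y (φ j) ⁻¹' {a j}|coordAlgebra Y T⟧) ω) P := fun φ a =>
      integrable_prod_condProb hm (fun j => hY (φ j) (measurableSet_singleton (a j))) _
    calc _ = ∫ ω, G (X ω) ∂P := by
          rw [← integral_map hX.aemeasurable (by fun_prop), integral_fintype .of_finite]
          simp only [map_measureReal_apply hX (measurableSet_singleton _), smul_eq_mul]
      _ = ∑ φ ∈ emb, ∑ a ∈ F, ∫ ω, ∏ j, (P⟦Y (φ j) ⁻¹' {a j}|coordAlgebra Y T⟧) ω ∂P := by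
          rw [integral_congr_ae hG, integral_finsetSum _ fun φ _ =>
            integrable_finsetSum _ fun a _ => integrable φ a]
          exact Finset.sum_congr rfl fun φ _ => integral_finsetSum _ fun a _ => integrable φ a
      _ ≤ _ := sum_integral_prod_condProb_le hY hη hT hF
  have total : ∑ i, P.real (X ⁻¹' {i}) = 1 := by
    rw [sum_measureReal_preimage_singleton _ fun i _ => hX (measurableSet_singleton i)]
    simp
  obtain ⟨i, hi, hGi⟩ := exists_le_mul_and_le_two_mul (fun _ => measureReal_nonneg) total
    (fun i => Finset.sum_nonneg fun φ _ => measureReal_nonneg) hpos mean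
  exact ⟨X ⁻¹' {i}, by simpa using hi, hGi⟩

end Atoms

/-! ### The discrete counting theorem -/

section Counting

/-- Jensen's inequality for `exp`, since `log (1_B + δ) ≥ (log δ) 1_{Bᶜ}`. -/
lemma exp_mul_log_le_integral_prod {Ω V : Type*} [Fintype V] [MeasurableSpace Ω] {P : Measure Ω}
    [IsProbabilityMeasure P] {B : V → Set Ω} (hB : ∀ v, MeasurableSet (B v)) {δ : ℝ} (h0 : 0 < δ)
    (h1 : δ ≤ 1) (hBδ : ∀ v, P.real (B v)ᶜ ≤ δ) :
    Real.exp (Fintype.card V * (δ * Real.log δ)) ≤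
      ∫ ω, ∏ v, ((B v).indicator 1 ω + δ) ∂P := by
  set L : Ω → ℝ := fun ω => ∑ v, Real.log δ * (B v)ᶜ.indicator 1 ω
  have hlog : Real.log δ ≤ 0 := Real.log_nonpos h0.le h1
  have integrable_ind : ∀ v, Integrable ((B v)ᶜ.indicator (1 : Ω → ℝ)) P := fun v =>
    (integrable_const 1).indicator (hB v).compl
  have integrable_L : Integrable L P :=
    integrable_finsetSum _ fun v _ => (integrable_ind v).const_mul _
  have L_nonpos : ∀ ω, L ω ≤ 0 := fun ω => Finset.sum_nonpos fun v _ =>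
    mul_nonpos_of_nonpos_of_nonneg hlog (indicator_nonneg (fun _ _ => zero_le_one) ω)
  have integrable_exp : Integrable (Real.exp ∘ L) P :=
    .of_mem_Icc 0 1 (Real.measurable_exp.comp_aemeasurable integrable_L.aemeasurable)
      (.of_forall fun ω => ⟨(Real.exp_pos _).le, Real.exp_le_one_iff.2 (L_nonpos ω)⟩)
  have integrable_prod : Integrable (fun ω => ∏ v, ((B v).indicator 1 ω + δ)) P := by
    refine .of_mem_Icc 0 (∏ _v : V, (1 + δ)) (Measurable.aemeasurable ?_) (.of_forall fun ω => ?_)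
    · exact Finset.measurable_prod _ fun v _ => (measurable_one.indicator (hB v)).add_const δ
    · have nonneg : ∀ v, 0 ≤ (B v).indicator 1 ω + δ := fun v =>
        add_nonneg (indicator_nonneg (fun _ _ => zero_le_one) ω) h0.le
      refine ⟨Finset.prod_nonneg fun v _ => nonneg v, Finset.prod_le_prod (fun v _ => nonneg v)
        fun v _ => ?_⟩
      gcongr
      exact indicator_le_self' (fun _ _ => zero_le_one) ω
  have pointwise : ∀ ω, Real.exp (L ω) ≤ ∏ v, ((B v).indicator 1 ω + δ) := by
    intro ω
    rw [Real.exp_sum]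
    refine Finset.prod_le_prod (fun v _ => (Real.exp_pos _).le) fun v _ => ?_
    by_cases h : ω ∈ B v <;> simp [h, Real.exp_log, h0, h0.le]
  calc _ ≤ Real.exp (∫ ω, L ω ∂P) := by
        rw [Real.exp_le_exp, integral_finsetSum _ fun v _ => (integrable_ind v).const_mul _]
        simp only [integral_const_mul, integral_indicator_one (hB _).compl]
        rw [← nsmul_eq_mul, mul_comm δ, ← Finset.card_univ]
        exact Finset.card_nsmul_le_sum _ _ _ fun v _ =>
          mul_le_mul_of_nonpos_left (hBδ v) hlog
    _ ≤ ∫ ω, Real.exp (L ω) ∂P := convexOn_exp.map_integral_le Real.continuous_exp.continuousOn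
        isClosed_univ (.of_forall fun _ => mem_univ _) integrable_L integrable_exp
    _ ≤ _ := integral_mono integrable_exp integrable_prod pointwise

variable {U V K : Type*} [MeasurableSpace K]

lemma mul_exp_le_prod_add [Fintype V] {μ : V → Measure K} [∀ v, IsProbabilityMeasure (μ v)]
    {p : Measure (V → K)} [IsProbabilityMeasure p] {γ : ℝ≥0∞} (hγ : γ • p ≤ Measure.pi μ)
    {A : V → Set K} (hA : ∀ v, MeasurableSet (A v)) {δ : ℝ} (h0 : 0 < δ) (h1 : δ ≤ 1)
    (hAδ : ∀ v, (p.map fun y => y v).real (A v)ᶜ ≤ δ) :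
    γ.toReal * Real.exp (Fintype.card V * (δ * Real.log δ)) ≤ ∏ v, ((μ v).real (A v) + δ) := by
  have integrable : ∀ v, Integrable (fun a => (A v).indicator (1 : K → ℝ) a + δ) (μ v) := fun v =>
    ((integrable_const 1).indicator (hA v)).add (integrable_const δ)
  have hAδ' : ∀ v, p.real (((fun y : V → K => y v) ⁻¹' A v)ᶜ) ≤ δ := fun v => by
    rw [← preimage_compl, ← map_measureReal_apply (measurable_pi_apply v) (hA v).compl]
    exact hAδ v
  calc _ ≤ γ.toReal * ∫ y, ∏ v, (((fun y : V → K => y v) ⁻¹' A v).indicator 1 y + δ) ∂p := by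
        gcongr
        exact exp_mul_log_le_integral_prod (fun v => measurable_pi_apply v (hA v)) h0 h1 hAδ'
    _ = ∫ y, ∏ v, ((A v).indicator 1 (y v) + δ) ∂(γ • p) := (integral_smul_measure _ _).symm
    _ ≤ ∫ y, ∏ v, ((A v).indicator 1 (y v) + δ) ∂Measure.pi μ :=
        integral_mono_measure hγ (.of_forall fun y => Finset.prod_nonneg fun v _ =>
          add_nonneg (indicator_nonneg (fun _ _ => zero_le_one) _) h0.le)
          (Integrable.fintype_prod integrable)
    _ = ∏ v, ∫ a, ((A v).indicator 1 a + δ) ∂μ v :=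
        integral_fintype_prod_eq_prod fun v a => (A v).indicator 1 a + δ
    _ = _ := Finset.prod_congr rfl fun v _ => by
        rw [integral_add (f := (A v).indicator 1)
          ((integrable_const 1).indicator (hA v)) (integrable_const δ),
          integral_indicator_one (hA v), integral_const, probReal_univ, one_smul]

lemma prod_add_le_prod_add_two_pow {ι : Type*} {s : Finset ι} {x : ι → ℝ} (h0 : ∀ i, 0 ≤ x i)
    (h1 : ∀ i, x i ≤ 1) {δ : ℝ} (hδ0 : 0 ≤ δ) (hδ1 : δ ≤ 1) :
    ∏ i ∈ s, (x i + δ) ≤ ∏ i ∈ s, x i + 2 ^ s.card * δ := by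
  classical
  have term_le : ∀ t ∈ s.powerset, (∏ i ∈ t, x i) * ∏ _i ∈ s \ t, δ ≤
      (if t = s then ∏ i ∈ s, x i else 0) + δ := by
    intro t ht
    split_ifs with h
    · simp [h, hδ0]
    · rw [zero_add, Finset.prod_const]
      have missing : (s \ t).card ≠ 0 := fun h0 => h <| (Finset.mem_powerset.1 ht).antisymm <|
        Finset.sdiff_eq_empty_iff_subset.1 (Finset.card_eq_zero.1 h0)
      exact (mul_le_of_le_one_left (pow_nonneg hδ0 _) (Finset.prod_le_one (fun i _ => h0 i)
        fun i _ => h1 i)).trans (pow_le_of_le_one hδ0 hδ1 missing)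
  rw [Finset.prod_add]
  refine (Finset.sum_le_sum term_le).trans_eq ?_
  simp [Finset.sum_add_distrib]

lemma IsUniformCover.sum_le [Fintype U] [Fintype V] [DecidableEq V] {emb : Finset (U → V)} {k : ℕ}
    (h : IsUniformCover emb k) {f : V → ℝ} {b c κ : ℝ} (hf : ∀ v, f v ≤ c) (hbc : 0 ≤ b + c)
    (hbad : ((emb.filter fun φ => -(b * Fintype.card U) < ∑ j, f (φ j)).card : ℝ) ≤
      κ * emb.card) :
    ∑ v, f v ≤ Fintype.card V * (-b + κ * (b + c)) := by
  have hk : (0 : ℝ) < k := by exact_mod_cast h.pos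
  have term_le : ∀ φ ∈ emb, ∑ j, f (φ j) ≤ -(b * Fintype.card U) +
      if -(b * Fintype.card U) < ∑ j, f (φ j) then Fintype.card U * (b + c) else 0 := by
    intro φ _
    split_ifs with hφ
    · have := Finset.sum_le_card_nsmul Finset.univ _ c fun j _ => hf (φ j)
      rw [Finset.card_univ, nsmul_eq_mul] at this
      linarith
    · simpa using hφ
  refine le_of_mul_le_mul_left ?_ hk
  calc (k : ℝ) * ∑ v, f v = ∑ φ ∈ emb, ∑ j, f (φ j) := (h.sum_sum_apply f).symm
    _ ≤ _ := Finset.sum_le_sum term_le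
    _ = emb.card * -(b * Fintype.card U) +
          (emb.filter fun φ => -(b * Fintype.card U) < ∑ j, f (φ j)).card *
            (Fintype.card U * (b + c)) := by
        rw [Finset.sum_add_distrib, ← Finset.sum_filter, Finset.sum_const, Finset.sum_const,
          nsmul_eq_mul, nsmul_eq_mul]
    _ ≤ emb.card * -(b * Fintype.card U) + κ * emb.card * (Fintype.card U * (b + c)) := by gcongr
    _ = (emb.card * Fintype.card U) * (-b + κ * (b + c)) := by ring
    _ = _ := by rw [h.card_mul_card]; ring

/-- The letters whose probability under `ν` is at least `δ` times that under `w`. -/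
def heavyLetters (δ : ℝ) (w ν : Measure K) : Set K := {a | δ * w.real {a} ≤ ν.real {a}}

variable [MeasurableSingletonClass K]

lemma measureReal_compl_heavyLetters_le [Finite K] {δ : ℝ} (hδ : 0 ≤ δ) (w ν : Measure K)
    [IsProbabilityMeasure w] [IsFiniteMeasure ν] : ν.real (heavyLetters δ w ν)ᶜ ≤ δ := by
  classical
  have := Fintype.ofFinite K
  set B := Finset.univ.filter fun a => a ∉ heavyLetters δ w ν
  have hB : (heavyLetters δ w ν)ᶜ = B := by ext; simp [B]
  calc _ = ∑ a ∈ B, ν.real {a} := by rw [hB, sum_measureReal_singleton]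
    _ ≤ ∑ a ∈ B, δ * w.real {a} :=
        Finset.sum_le_sum fun a ha => (not_le.1 (Finset.mem_filter.1 ha).2).le
    _ = δ * w.real B := by rw [← Finset.mul_sum, sum_measureReal_singleton]
    _ ≤ δ := mul_le_of_le_one_right hδ measureReal_le_one

variable [Fintype U]

lemma pow_mul_measureReal_pi_inter_le {δ : ℝ} (hδ : 0 ≤ δ) (w : Measure K)
    [IsFiniteMeasure w] (ν : U → Measure K) [∀ j, IsFiniteMeasure (ν j)] (F : Finset (U → K)) :
    δ ^ Fintype.card U * (Measure.pi fun _ : U => w).real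
      (↑F ∩ univ.pi fun j => heavyLetters δ w (ν j)) ≤ (Measure.pi ν).real F := by
  classical
  set B := F.filter fun a => a ∈ univ.pi fun j => heavyLetters δ w (ν j)
  have hB : ↑F ∩ (univ.pi fun j => heavyLetters δ w (ν j)) = B := by ext; simp [B]
  calc _ = ∑ a ∈ B, ∏ j, δ * w.real {a j} := by
        simp only [hB, measureReal_pi_eq_sum, Finset.mul_sum, Finset.prod_mul_distrib,
          Finset.prod_const, Finset.card_univ]
    _ ≤ ∑ a ∈ B, ∏ j, (ν j).real {a j} := Finset.sum_le_sum fun a ha =>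
        Finset.prod_le_prod (fun j _ => by positivity) fun j _ =>
          (Finset.mem_filter.1 ha).2 j (mem_univ j)
    _ = (Measure.pi ν).real B := (measureReal_pi_eq_sum ν B).symm
    _ ≤ _ := measureReal_mono (Finset.coe_subset.2 (Finset.filter_subset _ F))

/-- Markov's inequality: most boxes of heavy letters meet `F` in small measure. -/
lemma card_filter_lt_measureReal_pi_inter_le {w : Measure K} [IsFiniteMeasure w]
    {emb : Finset (U → V)} {ν : V → Measure K} [∀ v, IsFiniteMeasure (ν v)] {F : Finset (U → K)}
    {δ ε κ : ℝ} (hδ : 0 < δ) (hε : 0 < ε)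
    (hF : ∑ φ ∈ emb, (Measure.pi fun j => ν (φ j)).real F ≤
      κ * ε * δ ^ Fintype.card U * emb.card) :
    ((emb.filter fun φ => ε < (Measure.pi fun _ : U => w).real
      (↑F ∩ univ.pi fun j => heavyLetters δ w (ν (φ j)))).card : ℝ) ≤ κ * emb.card := by
  set bad := emb.filter fun φ => ε < (Measure.pi fun _ : U => w).real
    (↑F ∩ univ.pi fun j => heavyLetters δ w (ν (φ j)))
  refine le_of_mul_le_mul_right ?_ (show 0 < ε * δ ^ Fintype.card U by positivity)
  calc _ = ∑ _φ ∈ bad, δ ^ Fintype.card U * ε := by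
        rw [Finset.sum_const, nsmul_eq_mul, mul_comm ε]
    _ ≤ ∑ φ ∈ bad, (Measure.pi fun j => ν (φ j)).real F := Finset.sum_le_sum fun φ hφ =>
        (mul_le_mul_of_nonneg_left (Finset.mem_filter.1 hφ).2.le (by positivity)).trans
          (pow_mul_measureReal_pi_inter_le hδ.le w _ F)
    _ ≤ ∑ φ ∈ emb, (Measure.pi fun j => ν (φ j)).real F :=
        Finset.sum_le_sum_of_subset_of_nonneg (Finset.filter_subset _ _) fun _ _ _ =>
          measureReal_nonneg
    _ ≤ _ := hF.trans_eq (by ring)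

lemma IsUniformCover.mul_exp_le_exp [Finite K] [Fintype V] [DecidableEq V]
    {emb : Finset (U → V)} {k : ℕ}
    (h : IsUniformCover emb k) {w : Measure K} [IsProbabilityMeasure w] {p : Measure (V → K)}
    [IsProbabilityMeasure p] {γ : ℝ≥0∞} (hγ : γ • p ≤ Measure.pi fun _ => w)
    {F : Finset (U → K)} {δ ε κ b c : ℝ} (hδ0 : 0 < δ) (hδ1 : δ ≤ 1) (hε : 0 < ε) (hb : 0 ≤ b)
    (hF : ∑ φ ∈ emb, (Measure.pi fun j => p.map fun y => y (φ j)).real F ≤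
      κ * ε * δ ^ Fintype.card U * emb.card)
    (hbox : ∀ A : U → Set K, (Measure.pi fun _ : U => w).real (↑F ∩ univ.pi A) ≤ ε →
      (Measure.pi fun _ : U => w).real (univ.pi A) ≤ c)
    (hc : c + 2 ^ Fintype.card U * δ ≤ Real.exp (-(b * Fintype.card U))) :
    γ.toReal * Real.exp (Fintype.card V * (δ * Real.log δ)) ≤
      Real.exp (Fintype.card V * (-b + κ * (b + Real.log 2))) := by
  set A : V → Set K := fun v => heavyLetters δ w (p.map fun y => y v)
  set x : V → ℝ := fun v => w.real (A v) + δ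
  have x_pos : ∀ v, 0 < x v := fun v => by positivity
  have good_box : ∀ φ : U → V,
      (Measure.pi fun _ : U => w).real (↑F ∩ univ.pi fun j => A (φ j)) ≤ ε →
      ∑ j, Real.log (x (φ j)) ≤ -(b * Fintype.card U) := by
    intro φ hφ
    have small := hbox _ hφ
    rw [measureReal_def, Measure.pi_pi, ENNReal.toReal_prod] at small
    rw [← Real.log_prod fun j _ => (x_pos _).ne', Real.log_le_iff_le_exp
      (Finset.prod_pos fun j _ => x_pos _)]
    exact (prod_add_le_prod_add_two_pow (fun _ => measureReal_nonneg)
      (fun _ => measureReal_le_one) hδ0.le hδ1).trans ((add_le_add_left small _).trans hc)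
  have few : ((emb.filter fun φ => -(b * Fintype.card U) < ∑ j, Real.log (x (φ j))).card : ℝ) ≤
      κ * emb.card := by
    refine le_trans ?_ (card_filter_lt_measureReal_pi_inter_le (w := w)
      (ν := fun v => p.map fun y => y v) hδ0 hε hF)
    exact_mod_cast Finset.card_le_card (Finset.monotone_filter_right _
      fun φ _ (hφ : _ < _) => not_le.1 fun hle => hφ.not_ge (good_box φ hle))
  have x_le : ∀ v, x v ≤ 2 := fun v =>
    (add_le_add measureReal_le_one hδ1).trans_eq one_add_one_eq_two
  have volume_le := h.sum_le (fun v => Real.log_le_log (x_pos v) (x_le v)) (by positivity) few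
  rw [← Real.log_prod fun v _ => (x_pos v).ne', Real.log_le_iff_le_exp
    (Finset.prod_pos fun v _ => x_pos v)] at volume_le
  refine (mul_exp_le_prod_add hγ (fun v => (toFinite (A v)).measurableSet) hδ0 hδ1
    fun v => ?_).trans volume_le
  exact measureReal_compl_heavyLetters_le hδ0.le w _

lemma smul_cond_le {Ω : Type*} [MeasurableSpace Ω] (P : Measure Ω) [IsFiniteMeasure P]
    (t : Set Ω) : P t • P[|t] ≤ P := by
  rw [ProbabilityTheory.cond, smul_smul]
  refine le_trans ?_ (Measure.restrict_le_self (s := t))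
  refine Measure.le_intro fun s _ _ => ?_
  exact mul_le_of_le_one_left' (ENNReal.mul_inv_le_one _)

lemma IsUniformCover.exists_mul_exp_le_exp_of_decoupled [Fintype K] [Fintype V] [Nonempty V]
    [DecidableEq V] {emb : Finset (U → V)} {k : ℕ} (h : IsUniformCover emb k) {w : Measure K}
    [IsProbabilityMeasure w] {p : Measure (V → K)} [IsProbabilityMeasure p] {β : ℝ≥0∞}
    (hβ : β • p ≤ Measure.pi fun _ => w) {F : Finset (U → K)} {T : Finset V}
    {δ ε κ η b c : ℝ} (hδ0 : 0 < δ) (hδ1 : δ ≤ 1) (hε : 0 < ε) (hb : 0 ≤ b) (hκ : 0 < κ)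
    (hη0 : 0 ≤ η) (hη : Fintype.card K ^ Fintype.card U * η ≤ κ * ε * δ ^ Fintype.card U / 4)
    (hT : ∀ a : U → K, ∑ φ ∈ emb,
      ∫ y, |(p⟦{y | ∀ j, y (φ j) = a j}|coordAlgebra (fun v (y : V → K) => y v) T⟧) y -
        ∏ j, (p⟦(fun y => y (φ j)) ⁻¹' {a j}|coordAlgebra (fun v (y : V → K) => y v) T⟧) y| ∂p ≤
      η * emb.card)
    (hF : ∑ φ ∈ emb, p.real {y | (fun j => y (φ j)) ∈ F} ≤
      κ * ε * δ ^ Fintype.card U / 4 * emb.card)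
    (hbox : ∀ A : U → Set K, (Measure.pi fun _ : U => w).real (↑F ∩ univ.pi A) ≤ ε →
      (Measure.pi fun _ : U => w).real (univ.pi A) ≤ c)
    (hc : c + 2 ^ Fintype.card U * δ ≤ Real.exp (-(b * Fintype.card U))) :
    ∃ q, 1 ≤ 2 * (Fintype.card K : ℝ) ^ T.card * q ∧
      β.toReal * q * Real.exp (Fintype.card V * (δ * Real.log δ)) ≤
        Real.exp (Fintype.card V * (-b + κ * (b + Real.log 2))) := by
  have : Nonempty K := w.nonempty_of_neZero
  have hemb : (0 : ℝ) < emb.card := by exact_mod_cast h.card_pos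
  obtain ⟨t, hpt, hFt⟩ := exists_cond_sum_pi_le (fun v => measurable_pi_apply v) hη0 hT hF
    (by positivity)
  have : IsProbabilityMeasure p[|t] := cond_isProbabilityMeasure fun h => by
    norm_num [measureReal_def, h] at hpt
  have dominated : (β * p t) • p[|t] ≤ Measure.pi fun _ => w := by
    rw [mul_smul]
    exact (smul_le_smul_left β (smul_cond_le p t)).trans hβ
  have error_le : 2 * ((κ * ε * δ ^ Fintype.card U / 4 + Fintype.card K ^ Fintype.card U * η) *
      emb.card) ≤ κ * ε * δ ^ Fintype.card U * emb.card := by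
    rw [← mul_assoc]
    refine mul_le_mul_of_nonneg_right ?_ hemb.le
    linarith
  have bound := h.mul_exp_le_exp dominated hδ0 hδ1 hε hb (hFt.trans error_le) hbox hc
  rw [ENNReal.toReal_mul] at bound
  exact ⟨p.real t, hpt, bound⟩

lemma exists_thresholds (r : ℕ) (hr : r ≠ 0) {b c s : ℝ} (hbc : b < c) (hs : 0 < s) :
    ∃ δ, 0 < δ ∧ δ ≤ 1 ∧ -(δ * Real.log δ) ≤ s ∧
      Real.exp (-(c * r)) + 2 ^ r * δ ≤ Real.exp (-(b * r)) := by
  have gap : Real.exp (-(c * r)) < Real.exp (-(b * r)) := by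
    have : (0 : ℝ) < r := by positivity
    gcongr
  have small_entropy : Tendsto (fun δ => -(δ * Real.log δ)) (𝓝[>] 0) (𝓝 0) := by
    simpa using (Real.continuous_mul_log.fun_neg.tendsto 0).mono_left nhdsWithin_le_nhds
  have small_error : Tendsto (fun δ => Real.exp (-(c * r)) + 2 ^ r * δ) (𝓝[>] 0)
      (𝓝 (Real.exp (-(c * r)))) := by
    have : Continuous fun δ : ℝ => Real.exp (-(c * r)) + 2 ^ r * δ := by fun_prop
    simpa using (this.tendsto 0).mono_left nhdsWithin_le_nhds
  obtain ⟨δ, hδs, hδe, hδ0, hδ1⟩ := ((small_entropy.eventually_le_const hs).and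
    ((small_error.eventually_le_const gap).and (Ioc_mem_nhdsGT one_pos))).exists
  exact ⟨δ, hδ0, hδ1, hδs, hδe⟩

lemma le_exp_of_mul_exp_le {β q m s n b d : ℝ} {T : ℕ} (hβ : 0 ≤ β) (hm : 1 ≤ m) (hn : 0 ≤ n)
    (hq : 1 ≤ 2 * m ^ T * q) (h : β * q * Real.exp (n * d) ≤ Real.exp (n * (-(b + 4 * s) + s)))
    (h2 : Real.log 2 ≤ s * n) (hT : T * Real.log m ≤ s * n) (hd : -d ≤ s) :
    β ≤ Real.exp (-(b * n)) := by
  have : 0 < m := one_pos.trans_le hm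
  calc β ≤ β * (2 * m ^ T * q) := le_mul_of_one_le_right hβ hq
    _ = 2 * m ^ T * (β * q * Real.exp (n * d)) * Real.exp (n * -d) := by
        rw [mul_neg, Real.exp_neg]
        field_simp
    _ ≤ Real.exp (s * n) * Real.exp (s * n) * Real.exp (n * (-(b + 4 * s) + s)) *
          Real.exp (n * s) := by
        have h2' : 2 ≤ Real.exp (s * n) := (Real.log_le_iff_le_exp two_pos).1 h2
        have hT' : m ^ T ≤ Real.exp (s * n) := by
          rwa [← Real.log_le_iff_le_exp (by positivity), Real.log_pow]
        have hq0 : 0 < q := pos_of_mul_pos_right (one_pos.trans_le hq) (by positivity)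
        gcongr
    _ = Real.exp (-(b * n)) := by
        simp only [← Real.exp_add]
        ring_nf

theorem Ssee.Good.exists_eventually_le_exp {S : Ssee} (hS : S.Good) (hHom : S.Homogeneous)
    (N : ℕ) {b c ε : ℝ} (hb : 0 ≤ b) (hbc : b < c) (hε : 0 < ε) :
    ∃ ε₀ > 0, ∀ {K : Type*} [Fintype K] [MeasurableSpace K] [MeasurableSingletonClass K]
      (w : Measure K) [IsProbabilityMeasure w] (F : Finset (S.V N → K)),
      (∀ A : S.V N → Set K, (Measure.pi fun _ : S.V N => w).real (↑F ∩ univ.pi A) ≤ ε →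
        (Measure.pi fun _ : S.V N => w).real (univ.pi A) ≤
          Real.exp (-(c * Fintype.card (S.V N)))) →
      ∀ᶠ n in atTop, ∀ (p : Measure (S.V n → K)) [IsProbabilityMeasure p] (β : ℝ≥0∞),
        β • p ≤ Measure.pi (fun _ => w) →
        ∑ φ ∈ S.emb N n, p.real {y | (fun j => y (φ j)) ∈ F} ≤ ε₀ * (S.emb N n).card →
        β.toReal ≤ Real.exp (-(b * Fintype.card (S.V n))) := by
  set r := Fintype.card (S.V N)
  set s := (c - b) / 5
  set b' := b + 4 * s
  have hs : 0 < s := by simp only [s]; linarith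
  obtain ⟨δ, hδ0, hδ1, hδs, hδc⟩ := exists_thresholds r Fintype.card_ne_zero
    (show b' < c by simp only [b', s]; linarith) hs
  have hb' : 0 < b' + Real.log 2 := by positivity
  set κ := s / (b' + Real.log 2)
  have hκ : κ * (b' + Real.log 2) = s := div_mul_cancel₀ _ hb'.ne'
  refine ⟨κ * ε * δ ^ r / 4, by positivity, fun {K} _ _ _ w _ F hbox => ?_⟩
  set ε₀ := κ * ε * δ ^ r / 4
  have hε₀ : 0 < ε₀ := by positivity
  have : Nonempty K := w.nonempty_of_neZero
  set m := Fintype.card K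
  have hm : (1 : ℝ) ≤ m := by exact_mod_cast Fintype.card_pos
  set η := min (ε₀ / m ^ r) (s / (Real.log m + 1))
  have : 0 ≤ Real.log m := Real.log_nonneg hm
  have hη : 0 < η := by positivity
  filter_upwards [hS.eventually_exists_decoupling hHom N K hη, eventually_ge_atTop N,
    hS.tendsto_card.eventually_ge_atTop (Real.log 2 / s)] with n decoupling hNn hn p _ β hβ hF
  obtain ⟨k, hk⟩ := hHom.exists_isUniformCover hNn
  obtain ⟨T, hT, decoupled⟩ := decoupling p (fun v y => y v) fun v => measurable_pi_apply v
  have hmη : m ^ r * η ≤ ε₀ := by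
    rw [mul_comm]
    exact mul_le_of_le_div₀ hε₀.le (by positivity) (min_le_left _ _)
  obtain ⟨q, hq, bound⟩ := hk.exists_mul_exp_le_exp_of_decoupled hβ hδ0 hδ1 hε
    (by positivity : 0 ≤ b') (by positivity : 0 < κ) hη.le hmη decoupled hF hbox hδc
  rw [hκ] at bound
  refine le_exp_of_mul_exp_le ENNReal.toReal_nonneg hm (Nat.cast_nonneg _) hq bound
    ((div_le_iff₀' hs).1 ?_) ?_ hδs
  · exact_mod_cast hn
  · calc T.card * Real.log m ≤ s / (Real.log m + 1) * Fintype.card (S.V n) * Real.log m := by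
          gcongr
          exact hT.trans (by gcongr; exact min_le_right _ _)
      _ = s * Fintype.card (S.V n) * (Real.log m / (Real.log m + 1)) := by ring
      _ ≤ s * Fintype.card (S.V n) := mul_le_of_le_one_right (by positivity)
          (div_le_one_of_le₀ (by linarith) (by positivity))

end Counting

/-! ### Sets that are rarely hit -/

section RarelyHit

variable {Ω ι U V α : Type*} [MeasurableSpace Ω] {P : Measure Ω} [IsProbabilityMeasure P]
  [MeasurableSpace α] {μ : Measure α} [IsProbabilityMeasure μ]

lemma measurePreserving_pi_comp [Fintype U] [Fintype V] (μ : Measure α)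
    [IsProbabilityMeasure μ] {φ : U → V}
    (hφ : φ.Injective) :
    MeasurePreserving (fun (x : V → α) j => x (φ j)) (.pi fun _ => μ) (.pi fun _ => μ) := by
  have indep : iIndepFun (fun v (x : V → α) => x v) (.pi fun _ : V => μ) :=
    iIndepFun_pi (X := fun _ => id) fun _ => aemeasurable_id
  refine ⟨by fun_prop, ?_⟩
  rw [(indep.precomp hφ).map_fun_eq_pi_map
    fun j => (measurable_pi_apply _).aemeasurable]
  exact congrArg Measure.pi (funext fun j => (measurePreserving_eval _ (φ j)).map_eq)

lemma iIndepFun_pi_comp [Finite ι] [Finite U] [Fintype V] (μ : Measure α)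
    [IsProbabilityMeasure μ] {e : ι → U → V}
    (he : Function.Injective (Function.uncurry e)) :
    iIndepFun (fun i (x : V → α) j => x (e i j)) (.pi fun _ => μ) := by
  have := Fintype.ofFinite ι
  have := Fintype.ofFinite U
  have curried : (Measure.pi fun _ : V => μ).map (fun x i j => x (e i j)) =
      Measure.infinitePi fun _ : ι => Measure.infinitePi fun _ : U => μ := by
    rw [← Measure.infinitePi_map_curry, Measure.infinitePi_eq_pi,
      ← (measurePreserving_pi_comp μ he).map_eq, Measure.map_map (by fun_prop) (by fun_prop)]
    rfl
  rw [iIndepFun_iff_map_fun_eq_infinitePi_map (by fun_prop), curried]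
  refine congrArg Measure.infinitePi (funext fun i => ?_)
  rw [Measure.infinitePi_eq_pi]
  refine (measurePreserving_pi_comp μ fun j j' h => ?_).map_eq.symm
  exact (Prod.mk.inj (@he (i, j) (i, j') h)).2

lemma mgf_indicator_le {E : Set Ω} (hE : MeasurableSet E) (t : ℝ) :
    mgf (E.indicator 1) P t ≤ Real.exp (Real.exp t * P.real E) := by
  have integrable : Integrable (E.indicator (1 : Ω → ℝ)) P := (integrable_const 1).indicator hE
  calc mgf (E.indicator 1) P t ≤ ∫ ω, (Real.exp t * E.indicator 1 ω + 1) ∂P := by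
        refine integral_mono_of_nonneg (.of_forall fun ω => (Real.exp_pos _).le)
          ((integrable.const_mul _).add (integrable_const 1)) (.of_forall fun ω => ?_)
        by_cases hω : ω ∈ E <;> simp [hω]
    _ = Real.exp t * P.real E + 1 := by
        rw [integral_add (integrable.const_mul _) (integrable_const 1), integral_const_mul,
          integral_indicator_one hE, integral_const, probReal_univ, one_smul]
    _ ≤ _ := Real.add_one_le_exp _

lemma measureReal_mul_exp_integral_cond_le {X : Set Ω} {Z : Ω → ℝ} {t : ℝ} (hX : P X ≠ 0)
    (hZ : Integrable Z P) (hexp : Integrable (fun ω => Real.exp (t * Z ω)) P) :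
    P.real X * Real.exp (t * ∫ ω, Z ω ∂P[|X]) ≤ mgf Z P t := by
  have := cond_isProbabilityMeasure hX
  have restrict {f : Ω → ℝ} (hf : Integrable f P) : Integrable f P[|X] :=
    hf.restrict.smul_measure (ENNReal.inv_ne_top.2 hX)
  calc _ ≤ P.real X * ∫ ω, Real.exp (t * Z ω) ∂P[|X] := by
        rw [← integral_const_mul]
        gcongr
        exact convexOn_exp.map_integral_le Real.continuous_exp.continuousOn isClosed_univ
          (.of_forall fun _ => mem_univ _) ((restrict hZ).const_mul t) (restrict hexp)
    _ = ∫ ω, Real.exp (t * Z ω) ∂(P X • P[|X]) := (integral_smul_measure _ _).symm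
    _ ≤ mgf Z P t := integral_mono_measure (smul_cond_le P X)
        (.of_forall fun ω => (Real.exp_pos _).le) hexp

/-- The entropy inequality: conditioning on an event of probability at least `exp (-B)` raises the
sum of rare independent events by little, as seen by tilting with `exp t`. -/
lemma iIndepFun_indicator_mul_sum_cond_le [Fintype ι] {E : ι → Set Ω}
    (hE : ∀ i, MeasurableSet (E i)) (indep : iIndepFun (fun i => (E i).indicator (1 : Ω → ℝ)) P)
    {X : Set Ω} {t B : ℝ} (hX : Real.exp (-B) ≤ P.real X)
    (hEt : ∀ i, P.real (E i) ≤ Real.exp (-t)) :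
    t * ∑ i, P[|X].real (E i) ≤ Fintype.card ι + B := by
  set Z : Ω → ℝ := ∑ i, (E i).indicator 1
  have measurable_ind i : Measurable ((E i).indicator (1 : Ω → ℝ)) :=
    measurable_one.indicator (hE i)
  have mgf_le : mgf Z P t ≤ Real.exp (Fintype.card ι) := by
    calc mgf Z P t = ∏ i, mgf ((E i).indicator 1) P t := indep.mgf_sum measurable_ind _
      _ ≤ ∏ _i : ι, Real.exp 1 := Finset.prod_le_prod (fun _ _ => mgf_nonneg) fun i _ => by
          refine (mgf_indicator_le (hE i) t).trans (Real.exp_le_exp.2 ?_)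
          calc _ ≤ Real.exp t * Real.exp (-t) := by gcongr; exact hEt i
            _ = 1 := by rw [← Real.exp_add, add_neg_cancel, Real.exp_zero]
      _ = _ := by rw [Finset.prod_const, ← Real.exp_nat_mul, mul_one, Finset.card_univ]
  have hX0 : P X ≠ 0 := fun h =>
    (Real.exp_pos (-B)).not_ge (by simpa [measureReal_def, h] using hX)
  have := cond_isProbabilityMeasure hX0
  have integrable_ind (Q : Measure Ω) [IsProbabilityMeasure Q] (i : ι) :
      Integrable ((E i).indicator (1 : Ω → ℝ)) Q := (integrable_const 1).indicator (hE i)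
  have mean : ∫ x, Z x ∂P[|X] = ∑ i, P[|X].real (E i) := by
    simp only [Z, Finset.sum_apply]
    rw [integral_finsetSum _ fun i _ => integrable_ind _ i]
    exact Finset.sum_congr rfl fun i _ => integral_indicator_one (hE i)
  have tilted := (measureReal_mul_exp_integral_cond_le hX0
    (integrable_finsetSum' _ fun i _ => integrable_ind P i)
    (indep.integrable_exp_mul_sum measurable_ind fun i _ =>
      integrable_exp_mul_of_mem_Icc (a := 0) (b := 1) (measurable_ind i).aemeasurable
        (.of_forall fun ω => ⟨indicator_nonneg (fun _ _ => zero_le_one) ω,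
          indicator_le_self' (fun _ _ => zero_le_one) ω⟩))).trans mgf_le
  rw [mean] at tilted
  have := (mul_le_mul_of_nonneg_right hX (Real.exp_pos _).le).trans tilted
  rw [← Real.exp_add, Real.exp_le_exp] at this
  linarith

lemma mul_sum_cond_preimage_le [Fintype ι] [Fintype U] [Fintype V] {e : ι → U → V}
    (he : Function.Injective (Function.uncurry e)) {G : Set (U → α)} (hG : MeasurableSet G)
    {X : Set (V → α)} {t B : ℝ} (hX : Real.exp (-B) ≤ (Measure.pi fun _ => μ).real X)
    (hGt : (Measure.pi fun _ => μ).real G ≤ Real.exp (-t)) :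
    t * ∑ i, (Measure.pi fun _ => μ)[|X].real ((fun x j => x (e i j)) ⁻¹' G) ≤
      Fintype.card ι + B := by
  have restrict_mp (i : ι) := measurePreserving_pi_comp μ (φ := e i)
    fun j j' h => (Prod.mk.inj (@he (i, j) (i, j') h)).2
  refine iIndepFun_indicator_mul_sum_cond_le (fun i => (restrict_mp i).measurable hG)
    ((iIndepFun_pi_comp μ he).comp (fun _ => G.indicator 1) fun _ => measurable_one.indicator hG)
    hX fun i => ?_
  rwa [(restrict_mp i).measureReal_preimage hG.nullMeasurableSet]

lemma exists_pairwiseDisjoint_image [Fintype U] [Nonempty U] [DecidableEq V]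
    (s : Finset (U → V)) {k : ℕ}
    (hk : ∀ v, (s.filter fun φ => v ∈ Finset.univ.image φ).card ≤ k) :
    ∃ M ⊆ s, (M : Set (U → V)).PairwiseDisjoint (Finset.univ.image ·) ∧
      s.card ≤ M.card * Fintype.card U * k := by
  classical
  obtain ⟨M, hM⟩ := (s.powerset.filter fun M : Finset (U → V) =>
    (M : Set (U → V)).PairwiseDisjoint (Finset.univ.image ·)).exists_maximal ⟨∅, by simp⟩
  obtain ⟨hMs, disjoint⟩ := Finset.mem_filter.1 hM.prop
  rw [Finset.mem_powerset] at hMs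
  refine ⟨M, hMs, disjoint, ?_⟩
  have covered : s ⊆ (M.biUnion (Finset.univ.image ·)).biUnion
      fun v => s.filter fun φ => v ∈ Finset.univ.image φ := by
    intro ψ hψ
    by_contra uncovered
    have disjoint_ψ : ∀ φ ∈ M, Disjoint (Finset.univ.image ψ) (Finset.univ.image φ) := by
      refine fun φ hφ => Finset.disjoint_left.2 fun v hvψ hvφ => uncovered ?_
      exact Finset.mem_biUnion.2 ⟨v, Finset.mem_biUnion.2 ⟨φ, hφ, hvφ⟩,
        Finset.mem_filter.2 ⟨hψ, hvψ⟩⟩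
    have hψM : ψ ∈ M := by
      refine hM.le_of_ge ?_ (Finset.subset_insert ψ M) (Finset.mem_insert_self ψ M)
      rw [Finset.mem_filter, Finset.mem_powerset, Finset.coe_insert]
      exact ⟨Finset.insert_subset hψ hMs, disjoint.insert fun φ hφ _ => disjoint_ψ φ hφ⟩
    exact Finset.univ_nonempty.ne_empty (by simpa using disjoint_ψ ψ hψM)
  calc s.card ≤ _ := Finset.card_le_card covered
    _ ≤ (M.biUnion (Finset.univ.image ·)).card * k :=
        Finset.card_biUnion_le_card_mul _ _ _ fun v _ => hk v
    _ ≤ _ := by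
        gcongr
        exact Finset.card_biUnion_le_card_mul _ _ _ fun φ _ => Finset.card_image_le

lemma sum_le_mul_card_of_card_filter_le {s : Finset ι} {q : ι → ℝ} {ε : ℝ} (hε : 0 ≤ ε)
    (hq1 : ∀ i, q i ≤ 1) (hs : ((s.filter fun i => ε / 2 < q i).card : ℝ) ≤ ε / 2 * s.card) :
    ∑ i ∈ s, q i ≤ ε * s.card := by
  calc ∑ i ∈ s, q i ≤ ∑ i ∈ s, (ε / 2 + if ε / 2 < q i then 1 else 0) := by
        refine Finset.sum_le_sum fun i _ => ?_
        split_ifs with hi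
        · linarith [hq1 i]
        · linarith
    _ = s.card * (ε / 2) + (s.filter fun i => ε / 2 < q i).card := by
        rw [Finset.sum_add_distrib, Finset.sum_const, nsmul_eq_mul, Finset.sum_boole]
    _ ≤ _ := by linarith

/-- A maximal family of disjoint embeddings that hit `G` too often would contain a fixed proportion
of the points of `V`, against the entropy inequality. -/
lemma IsUniformCover.sum_cond_le [Fintype U] [Nonempty U] [Fintype V] [DecidableEq V]
    {emb : Finset (U → V)} {k : ℕ} (h : IsUniformCover emb k) {G : Set (U → α)}
    (hG : MeasurableSet G) {X : Set (V → α)} {ε b : ℝ} (hε : 0 < ε) (hb : 0 ≤ b)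
    (hX : Real.exp (-(b * Fintype.card V)) ≤ (Measure.pi fun _ => μ).real X)
    (hGε : (Measure.pi fun _ => μ).real G ≤
      Real.exp (-(2 / ε * (1 + b * (2 * Fintype.card U ^ 2 / ε))))) :
    ∑ φ ∈ emb, (Measure.pi fun _ => μ)[|X].real ((fun x j => x (φ j)) ⁻¹' G) ≤ ε * emb.card := by
  set P := Measure.pi fun _ : V => μ
  set q : (U → V) → ℝ := fun φ => P[|X].real ((fun x j => x (φ j)) ⁻¹' G)
  refine sum_le_mul_card_of_card_filter_le hε.le (fun _ => measureReal_le_one) ?_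
  by_contra! many
  set S := emb.filter fun φ => ε / 2 < q φ
  obtain ⟨M, hMS, disjoint, hSM⟩ := exists_pairwiseDisjoint_image S fun v =>
    (Finset.card_le_card (Finset.filter_subset_filter _ (Finset.filter_subset _ _))).trans
      (h.card_filter v).le
  have many_disjoint : ε / 2 * emb.card < M.card * Fintype.card U * k :=
    many.trans_le (by exact_mod_cast hSM)
  have hk : (0 : ℝ) < k := by exact_mod_cast h.pos
  have hM : M.Nonempty := by
    rw [Finset.nonempty_iff_ne_empty]
    rintro rfl
    rw [Finset.card_empty, Nat.cast_zero, zero_mul, zero_mul] at many_disjoint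
    exact many_disjoint.not_ge (by positivity)
  have dense : (Fintype.card V : ℝ) ≤ 2 * Fintype.card U ^ 2 / ε * M.card := by
    refine le_of_mul_le_mul_left ?_ hk
    rw [← h.card_mul_card, div_mul_eq_mul_div, ← mul_div_assoc, le_div_iff₀ hε]
    nlinarith [mul_le_mul_of_nonneg_right many_disjoint.le (Fintype.card U).cast_nonneg (α := ℝ)]
  have injective : Function.Injective (Function.uncurry fun (φ : M) j => φ.1 j) := by
    rintro ⟨φ, i⟩ ⟨ψ, j⟩ hij
    obtain rfl : φ = ψ := Subtype.ext <| disjoint.elim_finset φ.2 ψ.2 (φ.1 i)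
      (Finset.mem_image_of_mem _ (Finset.mem_univ i))
      (Finset.mem_image.2 ⟨j, Finset.mem_univ j, hij.symm⟩)
    exact congrArg _ (h.injective φ.1 (Finset.mem_of_mem_filter φ.1 (hMS φ.2)) hij)
  have upper := mul_sum_cond_preimage_le injective hG hX hGε
  have lower : M.card * (ε / 2) < ∑ φ : M, q φ := by
    rw [Finset.sum_coe_sort M q, ← nsmul_eq_mul, ← Finset.sum_const]
    exact Finset.sum_lt_sum_of_nonempty hM fun φ hφ => (Finset.mem_filter.1 (hMS hφ)).2
  rw [Fintype.card_coe] at upper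
  refine absurd upper (not_le.2 ?_)
  calc M.card + b * Fintype.card V
      ≤ M.card + b * (2 * Fintype.card U ^ 2 / ε * M.card) := by gcongr
    _ = 2 / ε * (1 + b * (2 * Fintype.card U ^ 2 / ε)) * (M.card * (ε / 2)) := by
        field_simp
    _ < _ := by gcongr

end RarelyHit

/-! ### Coding by finitely many bits -/

section Coding

universe u

variable {U : Type u} {α : Type*} [MeasurableSpace α]

/-- The sets of configurations `x : U → α` that depend only on codes `q (x j)` of finitely many
bits, for a measurable code `q`. Bits are encoded as propositions. -/
def codedSets (U : Type u) (α : Type*) [MeasurableSpace α] : Set (Set (U → α)) :=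
  {s | ∃ (ι : Type u) (_ : Finite ι) (q : α → ι → Prop) (Q : Set (U → ι → Prop)),
    Measurable q ∧ s = (fun x j => q (x j)) ⁻¹' Q}

lemma isSetAlgebra_codedSets : IsSetAlgebra (codedSets U α) where
  empty_mem := ⟨PEmpty, inferInstance, fun _ _ => True, ∅, measurable_const, rfl⟩
  compl_mem := by
    rintro _ ⟨ι, _, q, Q, hq, rfl⟩
    exact ⟨ι, inferInstance, q, Qᶜ, hq, rfl⟩
  union_mem := by
    rintro _ _ ⟨ι, _, q, Q, hq, rfl⟩ ⟨κ, _, r, R, hr, rfl⟩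
    refine ⟨ι ⊕ κ, inferInstance, fun a => Sum.elim (q a) (r a),
      (fun y j i => y j (.inl i)) ⁻¹' Q ∪ (fun y j i => y j (.inr i)) ⁻¹' R, ?_, rfl⟩
    refine measurable_pi_iff.2 (Sum.rec (fun i => ?_) fun i => ?_)
    exacts [(measurable_pi_apply i).comp hq, (measurable_pi_apply i).comp hr]

lemma generateFrom_codedSets [Finite U] : MeasurableSpace.pi = .generateFrom (codedSets U α) := by
  refine le_antisymm ?_ (MeasurableSpace.generateFrom_le ?_)
  · rw [← generateFrom_pi]
    refine MeasurableSpace.generateFrom_mono ?_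
    rintro _ ⟨s, hs, rfl⟩
    refine ⟨U, inferInstance, fun a j => a ∈ s j, {y | ∀ j, y j j}, ?_, by ext; simp⟩
    exact measurable_pi_iff.2 fun j => (hs j (mem_univ j)).mem
  · rintro _ ⟨ι, _, q, Q, hq, rfl⟩
    exact measurableSet_preimage (by fun_prop) Q.toFinite.measurableSet

lemma exists_mem_codedSets_symmDiff_le [Finite U] (P : Measure (U → α)) [IsFiniteMeasure P]
    {F : Set (U → α)} (hF : MeasurableSet F) {θ : ℝ} (hθ : 0 < θ) :
    ∃ s ∈ codedSets U α, P.real (symmDiff F s) ≤ θ := by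
  obtain ⟨s, hs, close⟩ := (Measure.MeasureDense.of_generateFrom_isSetAlgebra_finite P
    isSetAlgebra_codedSets generateFrom_codedSets).approx F hF (measure_ne_top _ _) θ hθ
  exact ⟨s, hs, ENNReal.toReal_le_of_le_ofReal hθ.le close.le⟩

end Coding

/-! ### Compactness of boxes -/

section Compactness

variable {Ω U α : Type*} [MeasurableSpace Ω] [MeasurableSpace α]

lemma exists_measure_le_tendsto_ultrafilter {ι : Type*} {P : Measure Ω} [IsFiniteMeasure P]
    {ρ : ι → Measure Ω} (hρ : ∀ i, ρ i ≤ P) (f : Ultrafilter ι) :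
    ∃ lim ≤ P, ∀ E, MeasurableSet E → Tendsto (fun i => ρ i E) f (𝓝 (lim E)) := by
  have converges (E : Set Ω) : ∃ c, Tendsto (fun i => ρ i E) f (𝓝 c) := by
    obtain ⟨c, -, hc⟩ := (isCompact_univ (X := ℝ≥0∞)).ultrafilter_le_nhds
      (f.map fun i => ρ i E) (by simp)
    exact ⟨c, hc⟩
  choose L hL using converges
  have hLP (E : Set Ω) : L E ≤ P E := le_of_tendsto' (hL E) fun i => hρ i E
  have ring : IsSetRing {E : Set Ω | MeasurableSet E} :=
    ⟨.empty, fun _ _ => .union, fun _ _ => .diff⟩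
  let content : AddContent ℝ≥0∞ {E : Set Ω | MeasurableSet E} :=
    { toFun := L
      empty' := le_antisymm (by simpa using hLP ∅) bot_le
      sUnion' := fun I hI disjoint _ => by
        refine tendsto_nhds_unique (hL _) ((tendsto_finsetSum I fun E _ => hL E).congr fun i => ?_)
        rw [sUnion_eq_biUnion]
        exact (measure_biUnion_finset disjoint hI).symm }
  have additive := addContent_iUnion_eq_sum_of_tendsto_zero ring content
    (fun E _ => ((hLP E).trans_lt (measure_lt_top P E)).ne) fun s hs anti hs0 => by
      refine tendsto_of_tendsto_of_tendsto_of_le_of_le tendsto_const_nhds ?_ (fun _ => bot_le)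
        fun n => hLP (s n)
      simpa only [hs0, measure_empty, Function.comp_def] using tendsto_measure_iInter_atTop
        (fun n => (hs n : MeasurableSet (s n)).nullMeasurableSet) anti ⟨0, measure_ne_top P _⟩
  let lim : Measure Ω := .ofMeasurable (fun E _ => L E) content.empty'
    fun _ hE disjoint => additive hE (.iUnion hE) disjoint
  have lim_apply {E : Set Ω} (hE : MeasurableSet E) : lim E = L E :=
    Measure.ofMeasurable_apply E hE
  refine ⟨lim, Measure.le_iff.2 fun E hE => (lim_apply hE).trans_le (hLP E), fun E hE => ?_⟩
  exact (hL E).trans_eq (congrArg 𝓝 (lim_apply hE).symm)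

variable [Fintype U] {μ : U → Measure α} [∀ j, IsProbabilityMeasure (μ j)]

lemma pi_withDensity {f : U → α → ℝ≥0∞} (hf : ∀ j, Measurable (f j))
    [∀ j, SigmaFinite ((μ j).withDensity (f j))] :
    Measure.pi (fun j => (μ j).withDensity (f j)) =
      (Measure.pi μ).withDensity fun x => ∏ j, f j (x j) := by
  refine Measure.pi_eq fun s hs => ?_
  have indep : iIndepFun (fun j (x : U → α) => (s j).indicator (f j) (x j)) (.pi μ) :=
    iIndepFun_pi fun j => ((hf j).indicator (hs j)).aemeasurable
  rw [withDensity_apply _ (.univ_pi hs), ← lintegral_indicator (.univ_pi hs)]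
  calc _ = ∫⁻ x, ∏ j, (s j).indicator (f j) (x j) ∂.pi μ := by
        refine lintegral_congr fun x => ?_
        by_cases hx : x ∈ univ.pi s
        · rw [indicator_of_mem hx]
          exact Finset.prod_congr rfl fun j _ => (indicator_of_mem (hx j (mem_univ j)) _).symm
        · obtain ⟨j, hj⟩ : ∃ j, x j ∉ s j := by simpa [Set.mem_pi] using hx
          rw [indicator_of_notMem hx,
            Finset.prod_eq_zero (Finset.mem_univ j) (indicator_of_notMem hj _)]
    _ = ∏ j, ∫⁻ x, (s j).indicator (f j) (x j) ∂.pi μ :=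
        lintegral_prod_eq_prod_lintegral_of_indepFun _ _ indep fun j =>
          ((hf j).indicator (hs j)).comp (measurable_pi_apply j)
    _ = _ := by
        refine Finset.prod_congr rfl fun j _ => ?_
        rw [(measurePreserving_eval μ j).lintegral_comp ((hf j).indicator (hs j)),
          lintegral_indicator (hs j), withDensity_apply _ (hs j)]

lemma exists_pi_inter_eq_zero {lam : U → Measure α} (hlam : ∀ j, lam j ≤ μ j) :
    ∃ B : U → Set α, (∀ j, MeasurableSet (B j)) ∧ (∀ j, lam j univ ≤ μ j (B j)) ∧
      ∀ E : Set (U → α), Measure.pi lam E = 0 → Measure.pi μ (univ.pi B ∩ E) = 0 := by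
  have (j : U) : IsFiniteMeasure (lam j) := isFiniteMeasure_of_le (μ j) (hlam j)
  set f : U → α → ℝ≥0∞ := fun j => (lam j).rnDeriv (μ j)
  have hf (j : U) : Measurable (f j) := Measure.measurable_rnDeriv _ _
  have density : (fun j => (μ j).withDensity (f j)) = lam := funext fun j =>
    Measure.withDensity_rnDeriv_eq _ _ (Measure.absolutelyContinuous_of_le (hlam j))
  have measurable_support (j : U) : MeasurableSet {x | f j x ≠ 0} :=
    (hf j (measurableSet_singleton 0)).compl
  refine ⟨fun j => {x | f j x ≠ 0}, measurable_support, fun j => ?_, fun E null => ?_⟩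
  · have null_compl : lam j {x | f j x ≠ 0}ᶜ = 0 := by
      rw [← congrFun density j, withDensity_apply_eq_zero (hf j)]
      simp
    calc lam j univ ≤ lam j {x | f j x ≠ 0} + lam j {x | f j x ≠ 0}ᶜ :=
          measure_univ_le_add_compl _
      _ = lam j {x | f j x ≠ 0} := by rw [null_compl, add_zero]
      _ ≤ _ := hlam j _
  · have (j : U) : SigmaFinite ((μ j).withDensity (f j)) := by
      rw [congrFun density j]
      infer_instance
    rw [← density, pi_withDensity hf, withDensity_apply_eq_zero (by fun_prop)] at null
    refine measure_mono_null (inter_subset_inter_left E fun x hx => ?_) null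
    exact Finset.prod_ne_zero_iff.2 fun j _ => hx j (mem_univ j)

lemma exists_pos_forall_measureReal_pi_lt {Q : Set (U → α)} (hQ : MeasurableSet Q) {C : ℝ}
    (h : ∀ A : U → Set α, (∀ j, MeasurableSet (A j)) → Measure.pi μ (univ.pi A \ Q) = 0 →
      (Measure.pi μ).real (univ.pi A) < C) :
    ∃ ε > 0, ∀ A : U → Set α, (Measure.pi μ).real (univ.pi A \ Q) ≤ ε →
      (Measure.pi μ).real (univ.pi A) < C := by
  by_contra! violated
  have violated (m : ℕ) := violated (1 / (m + 1)) (by positivity)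
  choose A nearly large using violated
  set f : Ultrafilter ℕ := hyperfilter ℕ
  have limits (j : U) := exists_measure_le_tendsto_ultrafilter
    (ρ := fun m => (μ j).restrict (A m j)) (fun _ => Measure.restrict_le_self) f
  choose lam hlam tendsto_lam using limits
  obtain ⟨L, -, tendsto_L⟩ := exists_measure_le_tendsto_ultrafilter
    (ρ := fun m => (Measure.pi μ).restrict (univ.pi (A m))) (fun _ => Measure.restrict_le_self) f
  have (j : U) : IsFiniteMeasure (lam j) := isFiniteMeasure_of_le (μ j) (hlam j)
  have pi_lam : Measure.pi lam = L := by
    refine Measure.pi_eq fun s hs => tendsto_nhds_unique (tendsto_L _ (.univ_pi hs)) ?_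
    simp only [Measure.restrict_pi_pi, Measure.pi_pi]
    exact ENNReal.tendsto_finsetProd_of_ne_top _ (fun j _ => tendsto_lam j (s j) (hs j))
      fun j _ => measure_ne_top _ _
  obtain ⟨B, hB, lam_le, null_of_null⟩ := exists_pi_inter_eq_zero hlam
  have L_compl : L Qᶜ = 0 := by
    have nearly' (m : ℕ) : (Measure.pi μ).restrict (univ.pi (A m)) Qᶜ ≤
        ENNReal.ofReal (1 / (m + 1)) := by
      rw [Measure.restrict_apply hQ.compl, inter_comm]
      exact (ENNReal.le_ofReal_iff_toReal_le (measure_ne_top _ _) (by positivity)).2 (nearly m)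
    refine tendsto_nhds_unique (tendsto_L _ hQ.compl) (tendsto_of_tendsto_of_tendsto_of_le_of_le
      tendsto_const_nhds ?_ (fun _ => bot_le) nearly')
    simpa only [ENNReal.ofReal_zero] using (ENNReal.tendsto_ofReal
      tendsto_one_div_add_atTop_nhds_zero_nat).mono_left Nat.hyperfilter_le_atTop
  have small := h B hB (null_of_null Qᶜ (pi_lam ▸ L_compl))
  have le_L : ENNReal.ofReal C ≤ L univ := by
    refine ge_of_tendsto' (tendsto_L univ .univ) fun m => ?_
    rw [Measure.restrict_apply_univ]
    exact ENNReal.ofReal_le_of_le_toReal (large m)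
  have L_le : L univ ≤ Measure.pi μ (univ.pi B) := by
    rw [← pi_lam, Measure.pi_univ, Measure.pi_pi]
    exact Finset.prod_le_prod' fun j _ => lam_le j
  exact small.not_ge (ENNReal.ofReal_le_iff_le_toReal (measure_ne_top _ _) |>.1 (le_L.trans L_le))

end Compactness

/-! ### The counting theorem for configurations -/

section Configurations

variable {U α K : Type*} [Fintype U] [MeasurableSpace α] {μ : Measure α} [IsProbabilityMeasure μ]

lemma measureReal_pi_map_le_of_symmDiff_le [Finite K] [MeasurableSpace K]
    [MeasurableSingletonClass K] {q : α → K} (hq : Measurable q) {Q : Set (U → α)}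
    {R : Set (U → K)} {ε C : ℝ}
    (hbox : ∀ A : U → Set α, (Measure.pi fun _ => μ).real (univ.pi A \ Q) ≤ ε →
      (Measure.pi fun _ => μ).real (univ.pi A) ≤ C)
    (hR : (Measure.pi fun _ => μ).real (symmDiff Qᶜ ((fun x j => q (x j)) ⁻¹' R)) ≤ ε / 2)
    (A : U → Set K) (hA : (Measure.pi fun _ => μ.map q).real (R ∩ univ.pi A) ≤ ε / 2) :
    (Measure.pi fun _ => μ.map q).real (univ.pi A) ≤ C := by
  have code : MeasurePreserving (fun (x : U → α) j => q (x j)) (.pi fun _ => μ)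
      (.pi fun _ => μ.map q) := measurePreserving_pi _ _ fun _ => hq.measurePreserving μ
  have real_code (s : Set (U → K)) : (Measure.pi fun _ => μ.map q).real s =
      (Measure.pi fun _ => μ).real ((fun x j => q (x j)) ⁻¹' s) :=
    (code.measureReal_preimage s.toFinite.measurableSet.nullMeasurableSet).symm
  rw [real_code] at hA ⊢
  refine hbox (fun j => q ⁻¹' A j) ?_
  calc _ ≤ (Measure.pi fun _ => μ).real ((fun x j => q (x j)) ⁻¹' (R ∩ univ.pi A) ∪
          symmDiff Qᶜ ((fun x j => q (x j)) ⁻¹' R)) := by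
        refine measureReal_mono fun x hx => ?_
        by_cases hxR : (fun j => q (x j)) ∈ R
        exacts [.inl ⟨hxR, hx.1⟩, .inr (.inl ⟨hx.2, hxR⟩)]
    _ ≤ ε / 2 + ε / 2 := (measureReal_union_le _ _).trans (add_le_add hA hR)
    _ = ε := add_halves ε

lemma smul_map_cond_le [MeasurableSpace K] {q : α → K} (hq : Measurable q) (X : Set (U → α)) :
    (Measure.pi fun _ => μ) X • ((Measure.pi fun _ => μ)[|X]).map (fun x j => q (x j)) ≤
      Measure.pi fun _ => μ.map q := by
  have code := measurePreserving_pi (fun _ : U => μ) _ fun _ => hq.measurePreserving μ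
  rw [← Measure.map_smul, ← code.map_eq]
  exact Measure.map_mono (smul_cond_le _ X) code.measurable

theorem Ssee.Good.eventually_measureReal_le_exp {S : Ssee} (hS : S.Good) (hHom : S.Homogeneous)
    {N : ℕ} {Q : Set (S.V N → α)} (hQ : MeasurableSet Q) {b c : ℝ} (hb : 0 ≤ b) (hbc : b < c)
    (hbox : ∀ A : S.V N → Set α, (∀ j, MeasurableSet (A j)) →
      Measure.pi (fun _ => μ) (univ.pi A \ Q) = 0 →
      (Measure.pi fun _ => μ).real (univ.pi A) < Real.exp (-(c * Fintype.card (S.V N)))) :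
    ∀ᶠ n in atTop, (Measure.pi fun _ => μ).real
      {x : S.V n → α | ∀ φ ∈ S.emb N n, (fun j => x (φ j)) ∈ Q} ≤
        Real.exp (-(b * Fintype.card (S.V n))) := by
  obtain ⟨ε, hε, robust⟩ := exists_pos_forall_measureReal_pi_lt hQ hbox
  obtain ⟨ε₀, hε₀, counting⟩ := hS.exists_eventually_le_exp hHom N hb hbc (half_pos hε)
  set Λ := 2 / ε₀ * (1 + b * (2 * Fintype.card (S.V N) ^ 2 / ε₀))
  obtain ⟨_, ⟨ι, _, q, R, hq, rfl⟩, close⟩ := exists_mem_codedSets_symmDiff_le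
    (.pi fun _ : S.V N => μ) hQ.compl (lt_min (half_pos hε) (Real.exp_pos (-Λ)))
  set G := symmDiff Qᶜ ((fun x j => q (x j)) ⁻¹' R)
  have hG : MeasurableSet G := hQ.compl.symmDiff
    (measurableSet_preimage (by fun_prop) R.toFinite.measurableSet)
  have := Fintype.ofFinite (ι → Prop)
  have : IsProbabilityMeasure (μ.map q) := Measure.isProbabilityMeasure_map hq.aemeasurable
  filter_upwards [counting (μ.map q) R.toFinite.toFinset fun A hA =>
    measureReal_pi_map_le_of_symmDiff_le hq (fun A hA => (robust A hA).le)
      (close.trans (min_le_left _ _)) A (by simpa using hA), eventually_ge_atTop N] with n count hNn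
  obtain ⟨k, hk⟩ := hHom.exists_isUniformCover hNn
  set P := Measure.pi fun _ : S.V n => μ
  set X := {x : S.V n → α | ∀ φ ∈ S.emb N n, (fun j => x (φ j)) ∈ Q}
  by_contra! large
  have hX : MeasurableSet X := by
    simp only [X, ofPred_forall]
    exact .biInter (S.emb N n).countable_toSet fun φ _ =>
      measurableSet_preimage (by fun_prop) hQ
  have : IsProbabilityMeasure P[|X] := cond_isProbabilityMeasure fun h =>
    large.not_ge (by simp [measureReal_def, h, Real.exp_nonneg])
  have hcode : Measurable fun (x : S.V n → α) v => q (x v) := by fun_prop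
  have := Measure.isProbabilityMeasure_map (μ := P[|X]) hcode.aemeasurable
  refine large.not_ge (count _ (P X) (smul_map_cond_le hq X) ?_)
  refine le_trans (Finset.sum_le_sum fun φ hφ => ?_)
    (hk.sum_cond_le hG hε₀ hb large.le (close.trans (min_le_right _ _)))
  rw [map_measureReal_apply hcode (Set.toFinite _).measurableSet]
  refine ENNReal.toReal_mono (measure_ne_top _ _) (measure_mono_ae ?_)
  filter_upwards [ae_cond_mem hX] with x hx hxR
  exact .inr ⟨R.toFinite.mem_toFinset.mp hxR, fun h => h (hx φ hφ)⟩

end Configurations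

/-! ### Extremal entropy of hereditary properties -/

section ExtremalEntropy

lemma pi_comp_preimage_inter_eq {U V : Type*} [Fintype U] [Fintype V] [DecidableEq V]
    {α : V → Type*} [∀ v, MeasurableSpace (α v)] (μ : ∀ v, Measure (α v)) [∀ v, SigmaFinite (μ v)]
    {φ : U → V} (hφ : φ.Injective) (D : Set (∀ j, α (φ j))) (A : ∀ v, Set (α v)) :
    Measure.pi μ ((fun x j => x (φ j)) ⁻¹' D ∩ (range φ)ᶜ.pi A) =
      Measure.pi (fun j => μ (φ j)) D * ∏ v ∈ (Finset.univ.image φ)ᶜ, μ v (A v) := by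
  have split := measurePreserving_piEquivPiSubtypeProd μ (· ∈ range φ)
  have on_range : Measure.pi (fun j => μ (φ j)) D =
      Measure.pi (fun v : range φ => μ v) {y | (fun j => y ⟨φ j, mem_range_self j⟩) ∈ D} :=
    ((measurePreserving_piCongrLeft (fun v : range φ => μ v)
      (Equiv.ofInjective φ hφ)).symm.measure_preimage_equiv D).symm
  have off_range : ∏ v ∈ (Finset.univ.image φ)ᶜ, μ v (A v) =
      Measure.pi (fun v : {v // v ∉ range φ} => μ v) (univ.pi fun v => A v) := by
    rw [Measure.pi_pi, Finset.prod_subtype (p := (· ∉ range φ)) _ (by simp)]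
  rw [on_range, off_range, ← Measure.prod_prod]
  refine Eq.trans (congrArg _ (Set.ext fun x => ?_)) (by convert split.measure_preimage_equiv _)
  exact and_congr_right' ⟨fun h v _ => h v v.2, fun h v hv => h ⟨v, hv⟩ trivial⟩

lemma IsUniformCover.exists_card_mul_sum_le {U V : Type*} [Fintype U] [Fintype V] [DecidableEq V]
    [Nonempty V] {emb : Finset (U → V)} {k : ℕ} (h : IsUniformCover emb k) (f : V → ℝ) :
    ∃ φ ∈ emb, Fintype.card V * ∑ j, f (φ j) ≤ Fintype.card U * ∑ v, f v := by
  refine Finset.exists_le_of_sum_le (Finset.card_pos.1 h.card_pos) (le_of_eq ?_)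
  rw [← Finset.mul_sum, h.sum_sum_apply, Finset.sum_const, nsmul_eq_mul, ← mul_assoc, ← mul_assoc,
    h.card_mul_card, mul_comm (k : ℝ)]

lemma entE_univ_pi {ι : Type} [Fintype ι] {A : ι → Set ℝ} (h0 : ∀ i, volume (A i) ≠ 0)
    (htop : ∀ i, volume (A i) ≠ ⊤) :
    entE (univ.pi A) = ((∑ i, -Real.log (volume.real (A i)) : ℝ) : EReal) := by
  rw [entE, volume_pi_pi, ENNReal.log_pos_real (Finset.prod_ne_zero_iff.2 fun i _ => h0 i)
    (ENNReal.prod_ne_top fun i _ => htop i), ENNReal.toReal_prod, Real.log_prod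
    fun i _ => (ENNReal.toReal_pos (h0 i) (htop i)).ne', Finset.sum_neg_distrib]
  rfl

lemma log_ofReal_exp (a : ℝ) : ENNReal.log (.ofReal (Real.exp a)) = a := by
  rw [ENNReal.log_ofReal_of_pos (Real.exp_pos a), Real.log_exp]

lemma toReal_lt_exp_neg_iff {x : ℝ≥0∞} (hx : x ≠ ⊤) {a : ℝ} :
    x.toReal < Real.exp (-a) ↔ (a : EReal) < -ENNReal.log x := by
  rw [EReal.lt_neg_comm, ← EReal.coe_neg, ← log_ofReal_exp, ENNReal.log_lt_log_iff,
    ENNReal.lt_ofReal_iff_toReal_lt hx]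

lemma toReal_le_exp_neg_iff {x : ℝ≥0∞} (hx : x ≠ ⊤) {a : ℝ} :
    x.toReal ≤ Real.exp (-a) ↔ (a : EReal) ≤ -ENNReal.log x := by
  rw [EReal.le_neg, ← EReal.coe_neg, ← log_ofReal_exp, ENNReal.log_le_log_iff,
    ENNReal.le_ofReal_iff_toReal_le hx (Real.exp_pos _).le]

namespace Ssee

variable {S : Ssee} {P : ∀ n, Set (S.V n → ℝ)} {N n : ℕ}

variable (S n) in
lemma coe_card_pos : (0 : EReal) < (Fintype.card (S.V n) : ℝ) := by
  exact_mod_cast (Fintype.card_pos : 0 < Fintype.card (S.V n))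

lemma Hereditary.comp_mem (hP : S.Hereditary P) (hNn : N ≤ n) {φ : S.V N → S.V n}
    (hφ : φ ∈ S.emb N n) {x : S.V n → ℝ} (hx : x ∈ P n) : (fun j => x (φ j)) ∈ P N := by
  have hcube : x ∈ unitCube (S.V n) := (hP.1 n).2 hx
  by_contra hxN
  exact (hP.2 N n hNn (mem_biUnion hφ ⟨hcube, fun j _ => hcube (φ j) trivial, hxN⟩)).2 hx

lemma Hereditary.volume_pi_comp_sdiff_eq_zero (hP : S.Hereditary P) (hNn : N ≤ n)
    {φ : S.V N → S.V n} (hφ : φ ∈ S.emb N n) {A : S.V n → Set ℝ}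
    (h0 : volume (univ.pi A) ≠ 0) (hnull : volume (univ.pi A \ P n) = 0) :
    volume (univ.pi (fun j => A (φ j)) \ P N) = 0 := by
  have fiber : (fun x j => x (φ j)) ⁻¹' (univ.pi (fun j => A (φ j)) \ P N) ∩ (range φ)ᶜ.pi A ⊆
      univ.pi A \ P n := by
    rintro x ⟨⟨hx, hxN⟩, hxA⟩
    refine ⟨fun v _ => ?_, fun hxP => hxN (hP.comp_mem hNn hφ hxP)⟩
    by_cases hv : v ∈ range φ
    · obtain ⟨j, rfl⟩ := hv
      exact hx j trivial
    · exact hxA v hv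
  have := measure_mono_null fiber hnull
  rw [volume_pi, pi_comp_preimage_inter_eq _ (S.emb_inj N n hNn φ hφ), mul_eq_zero] at this
  refine this.resolve_right fun h => h0 ?_
  obtain ⟨v, _, hv⟩ := Finset.prod_eq_zero_iff.1 h
  rw [volume_pi_pi]
  exact Finset.prod_eq_zero (Finset.mem_univ v) hv

lemma neg_log_volume_le_exEnt (P : ∀ n, Set (S.V n → ℝ)) (n : ℕ) :
    -(ENNReal.log (volume (P n))) ≤ S.exEnt P n := by
  refine le_sInf ?_
  rintro _ ⟨b, _, hnull, rfl⟩
  exact EReal.neg_le_neg_iff.2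
    (ENNReal.log_monotone (measure_mono_ae (ae_le_set.2 hnull)))

lemma Hereditary.monotone_exEnt_div_card (hP : S.Hereditary P) (hHom : S.Homogeneous) :
    Monotone fun n => S.exEnt P n / ((Fintype.card (S.V n) : ℝ) : EReal) := by
  intro N n hNn
  simp only
  rw [EReal.le_div_iff_mul_le (S.coe_card_pos n) (EReal.coe_ne_top _)]
  refine le_sInf ?_
  rintro _ ⟨_, ⟨A, hA, rfl⟩, hnull, rfl⟩
  by_cases h0 : volume (univ.pi A) = 0
  · simp [entE, h0]
  have h0A v : volume (A v) ≠ 0 := fun h => h0 <| by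
    rw [volume_pi_pi, Finset.prod_eq_zero (Finset.mem_univ v) h]
  have htop v : volume (A v) ≠ ⊤ := measure_ne_top_of_subset (hA v).2 (by simp)
  obtain ⟨k, hk⟩ := hHom.exists_isUniformCover hNn
  obtain ⟨φ, hφ, avg⟩ := hk.exists_card_mul_sum_le fun v => -Real.log (volume.real (A v))
  have exEnt_le : S.exEnt P N ≤ entE (univ.pi fun j => A (φ j)) :=
    sInf_le ⟨_, ⟨_, fun j => hA (φ j), rfl⟩, hP.volume_pi_comp_sdiff_eq_zero hNn hφ h0 hnull, rfl⟩
  rw [entE_univ_pi (fun j => h0A (φ j)) fun j => htop (φ j)] at exEnt_le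
  rw [entE_univ_pi h0A htop, ← EReal.le_div_iff_mul_le (S.coe_card_pos n) (EReal.coe_ne_top _),
    EReal.div_le_iff_le_mul (S.coe_card_pos N) (EReal.coe_ne_top _)]
  refine exEnt_le.trans ?_
  rw [← EReal.coe_div, ← EReal.coe_mul, EReal.coe_le_coe_iff, ← mul_div_assoc, le_div_iff₀'
    (by exact_mod_cast S.coe_card_pos n)]
  exact avg

lemma volume_unitCube (ι : Type) [Fintype ι] : volume (unitCube ι) = 1 := by
  rw [unitCube, volume_pi_pi]
  simp

lemma pi_restrict_Icc_apply {ι : Type} [Fintype ι] (X : Set (ι → ℝ)) :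
    Measure.pi (fun _ => volume.restrict (Icc (0 : ℝ) 1)) X = volume (X ∩ unitCube ι) := by
  rw [← Measure.restrict_pi_pi, ← volume_pi, unitCube,
    Measure.restrict_apply' (.univ_pi fun _ => measurableSet_Icc)]

lemma Hereditary.eventually_le_neg_log_volume_div_card (hP : S.Hereditary P) (hS : S.Good)
    (hHom : S.Homogeneous) {b : ℝ} (hb : 0 ≤ b)
    (hbN : b < S.exEnt P N / ((Fintype.card (S.V N) : ℝ) : EReal)) :
    ∀ᶠ n in atTop, (b : EReal) ≤
      (-(ENNReal.log (volume (P n)))) / ((Fintype.card (S.V n) : ℝ) : EReal) := by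
  obtain ⟨c, hbc, hcN⟩ := EReal.lt_iff_exists_real_btwn.1 hbN
  have : IsProbabilityMeasure (volume.restrict (Icc (0 : ℝ) 1)) := ⟨by simp⟩
  have hbox (A : S.V N → Set ℝ) (hA : ∀ j, MeasurableSet (A j))
      (hnull : Measure.pi (fun _ => volume.restrict (Icc (0 : ℝ) 1)) (univ.pi A \ P N) = 0) :
      (Measure.pi fun _ => volume.restrict (Icc (0 : ℝ) 1)).real (univ.pi A) <
        Real.exp (-(c * Fintype.card (S.V N))) := by
    rw [EReal.lt_div_iff (S.coe_card_pos N) (EReal.coe_ne_top _), ← EReal.coe_mul] at hcN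
    rw [measureReal_def, toReal_lt_exp_neg_iff (measure_ne_top _ _), pi_restrict_Icc_apply]
    rw [pi_restrict_Icc_apply, ← inter_sdiff_right_comm] at hnull
    refine hcN.trans_le (sInf_le ⟨_, ⟨fun j => A j ∩ Icc 0 1,
      fun j => ⟨(hA j).inter measurableSet_Icc, inter_subset_right⟩, pi_inter_distrib.symm⟩,
      hnull, rfl⟩)
  filter_upwards [hS.eventually_measureReal_le_exp hHom (hP.1 N).1 hb (EReal.coe_lt_coe_iff.1 hbc)
    hbox, eventually_ge_atTop N] with n hn hNn
  rw [EReal.le_div_iff_mul_le (S.coe_card_pos n) (EReal.coe_ne_top _), ← EReal.coe_mul,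
    ← inter_eq_left.2 (hP.1 n).2, ← pi_restrict_Icc_apply,
    ← toReal_le_exp_neg_iff (measure_ne_top _ _)]
  refine le_trans (measureReal_mono ?_) hn
  exact fun x hx φ hφ => hP.comp_mem hNn hφ hx

theorem Hereditary.exists_tendsto (hP : S.Hereditary P) (hS : S.Good) (hHom : S.Homogeneous) :
    ∃ L : EReal, 0 ≤ L ∧
      Tendsto (fun n => S.exEnt P n / ((Fintype.card (S.V n) : ℝ) : EReal)) atTop (𝓝 L) ∧
      Tendsto (fun n => (-(ENNReal.log (volume (P n)))) / ((Fintype.card (S.V n) : ℝ) : EReal))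
        atTop (𝓝 L) := by
  set x := fun n => S.exEnt P n / ((Fintype.card (S.V n) : ℝ) : EReal)
  set y := fun n => (-(ENNReal.log (volume (P n)))) / ((Fintype.card (S.V n) : ℝ) : EReal)
  have hx : Monotone x := hP.monotone_exEnt_div_card hHom
  have hyx n : y n ≤ x n :=
    EReal.div_le_div_right_of_nonneg (S.coe_card_pos n).le (neg_log_volume_le_exEnt P n)
  have hy n : 0 ≤ y n := EReal.div_nonneg (EReal.le_neg.2 <| by
    simpa using (measure_mono (hP.1 n).2).trans (volume_unitCube _).le) (S.coe_card_pos n).le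
  refine ⟨⨆ n, x n, (hy 0).trans ((hyx 0).trans (le_iSup x 0)), tendsto_atTop_iSup hx,
    tendsto_order.2 ⟨fun a ha => ?_, fun a ha => .of_forall fun n =>
      ((hyx n).trans (le_iSup x n)).trans_lt ha⟩⟩
  obtain ⟨b, hab, hbx⟩ := EReal.lt_iff_exists_real_btwn.1 ha
  obtain ⟨N, hbN⟩ := lt_iSup_iff.1 hbx
  rcases lt_or_ge b 0 with hb | hb
  · exact .of_forall fun n => hab.trans ((EReal.coe_neg'.2 hb).trans_le (hy n))
  · filter_upwards [hP.eventually_le_neg_log_volume_div_card hS hHom hb hbN] with n hn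
    exact hab.trans_le hn

end Ssee

end ExtremalEntropy

/-- **Theorem (volume estimates for homogeneous ssee-s).**
If `V` is a good homogeneous ssee and `P` is a hereditary property of
`[0,1]`-decorations of `V`, then either the limit `π(P) = lim ex(V_n,P_n)/|V_n|`
exists and is finite and `(-log vol(P_n))/|V_n| → π(P)`, or
`ex(V_n,P_n)/|V_n| → ∞` and `(-log vol(P_n))/|V_n| → ∞` (superexponential decay). -/
theorem counting_for_homogeneous_ssee
    (S : Ssee) (hS : S.Good) (hHom : S.Homogeneous)
    (P : ∀ n, Set (S.V n → ℝ)) (hP : S.Hereditary P) :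
    (∃ π : ℝ,
      Tendsto (fun n => S.exEnt P n / ((Fintype.card (S.V n) : ℝ) : EReal))
        atTop (nhds (π : EReal)) ∧
      Tendsto (fun n => (-(ENNReal.log (volume (P n)))) / ((Fintype.card (S.V n) : ℝ) : EReal))
        atTop (nhds (π : EReal))) ∨
    (Tendsto (fun n => S.exEnt P n / ((Fintype.card (S.V n) : ℝ) : EReal))
        atTop (nhds (⊤ : EReal)) ∧
      Tendsto (fun n => (-(ENNReal.log (volume (P n)))) / ((Fintype.card (S.V n) : ℝ) : EReal))
        atTop (nhds (⊤ : EReal))) := by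
  obtain ⟨L, hL, hex, hvol⟩ := hP.exists_tendsto hS hHom
  induction L with
  | bot => simp at hL
  | coe r => exact .inl ⟨r, hex, hvol⟩
  | top => exact .inr ⟨hex, hvol⟩

end
end

section
/- Let V be a good ssee and let k, N ∈ ℕ. Let F be a nonempty subset of [k]^{V_N} and let P = Forb_V(F). Then for every ε > 0 there exists n₀ such that for every n ≥ n₀ there exists a collection T_n of k-colouring templates for V_n satisfying: (a) P_n ⊆ ⋃_{t∈T_n} ⟨t⟩; (b) for each t ∈ T_n, there are at most ε·|binom(V_n,V_N)| pairs (φ, c) with φ ∈ binom(V_n,V_N), c ∈ F, and c ∈ ⟨t_{↓φ}⟩; and (c) |T_n| ≤ k^{ε|V_n|}. -/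
open MeasureTheory Filter Set

noncomputable section

/-!
Encode a pair `(φ, c)` of an embedding and a forbidden colouring as the edge
`{(φ v, c v) : v ∈ V_N}` of a hypergraph on `V_n × [k]`. The graph of a colouring in `Forb_V(F)` is
then an independent set, and a set of vertices is a template, so the templates are hypergraph
containers. Goodness makes the average number of embeddings sharing two or more points with a given
one negligible against `|binom(V_n, V_N)| / |V_n|`; discarding the few embeddings with a large
overlap leaves a hypergraph of small codegrees.

The containers come from fingerprints. Given an independent set `I` and a coordinate `a`, take a
maximal `T ⊆ I` whose edges through the coordinate `a` yield many links of bounded degree in the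
other coordinates; such a `T` is small, so there are few of them. Either `T` could be extended by
many vertices, none of which lies in `I` by maximality, or the links already form a dense system of
smaller uniformity in which `I` is independent, and one recurses. In both cases a positive
proportion of the vertices is excluded from `I` at the cost of few choices. As long as a container
still holds many edges this shrinks it, so boundedly many rounds suffice. Vertices are weighted by
their degrees throughout, so that no regularity is needed.
-/

open scoped Finset

section Counting

variable {E W : Type*} {μ : W → ℝ} {x c t Δ γ : ℝ}

lemma card_filter_card_le_le_exp [Fintype W] (hx₀ : 0 < x) (hx₁ : x ≤ 1) :
    (#{T : Finset W | (#T : ℝ) ≤ t} : ℝ) ≤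
      Real.exp (Fintype.card W * x) * Real.exp (-(t * Real.log x)) := by
  classical
  have hpow (T : Finset W) (hT : T ∈ ({T | (#T : ℝ) ≤ t} : Finset (Finset W))) :
      Real.exp (t * Real.log x) ≤ x ^ #T := by
    rw [← Real.rpow_natCast, Real.rpow_def_of_pos hx₀, mul_comm t]
    exact Real.exp_le_exp.2
      (mul_le_mul_of_nonpos_left (Finset.mem_filter.1 hT).2 (Real.log_nonpos hx₀.le hx₁))
  rw [Real.exp_neg, ← div_eq_mul_inv, le_div_iff₀ (Real.exp_pos _)]
  calc (#{T : Finset W | (#T : ℝ) ≤ t} : ℝ) * Real.exp (t * Real.log x)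
      ≤ ∑ T : Finset W with (#T : ℝ) ≤ t, x ^ #T := by
        rw [← nsmul_eq_mul]; exact Finset.card_nsmul_le_sum _ _ _ hpow
    _ ≤ ∑ T : Finset W, x ^ #T :=
        Finset.sum_le_sum_of_subset_of_nonneg (Finset.filter_subset _ _)
          fun _ _ _ => pow_nonneg hx₀.le _
    _ = (x + 1) ^ Fintype.card W := by
        simpa using Finset.sum_pow_mul_eq_add_pow x 1 (Finset.univ : Finset W)
    _ ≤ Real.exp x ^ Fintype.card W :=
        pow_le_pow_left₀ (by positivity) (Real.add_one_le_exp x) _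
    _ = Real.exp (Fintype.card W * x) := (Real.exp_nat_mul x _).symm

lemma exists_card_filter_card_le_mul_le_exp {δ : ℝ} (hδ : 0 < δ) :
    ∃ τ : ℝ, 0 < τ ∧ ∀ (W : Type*) [Fintype W] (M : ℝ), (Fintype.card W : ℝ) ≤ M →
      (#{T : Finset W | (#T : ℝ) ≤ τ * M} : ℝ) ≤ Real.exp (δ * M) := by
  obtain ⟨x, hx₀, hx₁, hxδ⟩ : ∃ x : ℝ, 0 < x ∧ x ≤ 1 ∧ x ≤ δ / 2 :=
    ⟨min 1 (δ / 2), by positivity, min_le_left _ _, min_le_right _ _⟩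
  have hlog : Real.log x ≤ 0 := Real.log_nonpos hx₀.le hx₁
  have hden : 0 < 1 - Real.log x := by linarith
  refine ⟨δ / 2 / (1 - Real.log x), by positivity, fun W _ M hM => ?_⟩
  have hM₀ : 0 ≤ M := (Nat.cast_nonneg _).trans hM
  have hτ : δ / 2 / (1 - Real.log x) * -Real.log x ≤ δ / 2 := by
    rw [div_mul_eq_mul_div, div_le_iff₀ hden]
    exact mul_le_mul_of_nonneg_left (by linarith) (by positivity)
  have hsize : Fintype.card W * x ≤ M * (δ / 2) := by gcongr
  refine (card_filter_card_le_le_exp hx₀ hx₁).trans ?_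
  rw [← Real.exp_add, Real.exp_le_exp]
  linarith [mul_le_mul_of_nonneg_right hτ hM₀]

variable [DecidableEq W] {A : Finset E} {p : E → W}

lemma card_filter_mem_eq_sum (A : Finset E) (p : E → W) (S : Finset W) :
    (#{e ∈ A | p e ∈ S} : ℝ) = ∑ w ∈ S, (#{e ∈ A | p e = w} : ℝ) :=
  mod_cast (Finset.sum_card_fiberwise_eq_card_filter A S p).symm

lemma card_filter_mem_le_mul_sum (hA : ∀ w, (#{e ∈ A | p e = w} : ℝ) ≤ Δ * μ w)
    (S : Finset W) : (#{e ∈ A | p e ∈ S} : ℝ) ≤ Δ * ∑ w ∈ S, μ w := by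
  rw [card_filter_mem_eq_sum, Finset.mul_sum]
  exact Finset.sum_le_sum fun w _ => hA w

lemma mul_sum_le_card_filter_mem {S : Finset W}
    (hS : ∀ w ∈ S, c * μ w ≤ #{e ∈ A | p e = w}) :
    c * ∑ w ∈ S, μ w ≤ #{e ∈ A | p e ∈ S} := by
  rw [card_filter_mem_eq_sum, Finset.mul_sum]
  exact Finset.sum_le_sum hS

lemma card_le_mul_sum_univ [Fintype W] (hA : ∀ w, (#{e ∈ A | p e = w} : ℝ) ≤ Δ * μ w) :
    (#A : ℝ) ≤ Δ * ∑ w, μ w := by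
  simpa using card_filter_mem_le_mul_sum hA Finset.univ

lemma half_mul_sum_le_sum_heavy [Fintype W] (hμ : ∀ w, 0 ≤ μ w) (hΔ : 0 < Δ) (hγ : 0 ≤ γ)
    (hdeg : ∀ w, (#{e ∈ A | p e = w} : ℝ) ≤ Δ * μ w) (hA : γ * Δ * ∑ w, μ w ≤ #A) :
    γ / 2 * ∑ w, μ w ≤ ∑ v with γ / 2 * Δ * μ v ≤ #{e ∈ A | p e = v}, μ v := by
  set B : Finset W := {v | γ / 2 * Δ * μ v ≤ #{e ∈ A | p e = v}}
  have hlight : (#{e ∈ A | p e ∈ Bᶜ} : ℝ) ≤ γ / 2 * Δ * ∑ w, μ w := by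
    rw [card_filter_mem_eq_sum, Finset.mul_sum]
    refine (Finset.sum_le_sum (g := fun w => γ / 2 * Δ * μ w) fun w hw => ?_).trans
      (Finset.sum_le_sum_of_subset_of_nonneg (Finset.subset_univ _)
        fun w _ _ => mul_nonneg (by positivity) (hμ w))
    simp only [B, Finset.mem_compl, Finset.mem_filter_univ, not_le] at hw
    exact hw.le
  have hsplit : (#A : ℝ) = #{e ∈ A | p e ∈ B} + #{e ∈ A | p e ∈ Bᶜ} := by
    simp only [Finset.mem_compl]
    exact mod_cast (Finset.card_filter_add_card_filter_not (s := A) (p · ∈ B)).symm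
  refine le_of_mul_le_mul_left ?_ hΔ
  linarith [card_filter_mem_le_mul_sum hdeg B]

lemma sum_sub_sum_sub_sum_le_sum_sdiff_union (hμ : ∀ w, 0 ≤ μ w) (B T X : Finset W) :
    ∑ w ∈ B, μ w - ∑ w ∈ T, μ w - ∑ w ∈ X, μ w ≤ ∑ w ∈ B \ (T ∪ X), μ w := by
  have hinter := Finset.sum_nonneg fun w (_ : w ∈ T ∩ X) => hμ w
  have hunion := Finset.sum_union_inter (s₁ := T) (s₂ := X) (f := μ)
  have hsdiff : ∑ w ∈ B, μ w ≤ ∑ w ∈ B \ (T ∪ X), μ w + ∑ w ∈ T ∪ X, μ w := by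
    rw [← Finset.sum_union Finset.sdiff_disjoint, Finset.sdiff_union_self_eq_union]
    exact Finset.sum_le_sum_of_subset_of_nonneg Finset.subset_union_left fun w _ _ => hμ w
  linarith

end Counting

section AvoidingFamilies

variable {W : Type*} {μ : W → ℝ} {m m' : ℝ} {V V' : Finset W}
  {ℐ 𝒥 : Set (Finset W)} {R : Finset (Finset W)}

/-- A family `R` of subsets of `V`, each of `μ`-mass at least `m`, such that every member of `ℐ` is
disjoint from one of them. Deleting that member of `R` from `V` is how a container shrinks. -/
structure IsAvoidingFamily (V : Finset W) (m : ℝ) (μ : W → ℝ) (ℐ : Set (Finset W))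
    (R : Finset (Finset W)) : Prop where
  subset : ∀ X ∈ R, X ⊆ V
  le_sum : ∀ X ∈ R, m ≤ ∑ w ∈ X, μ w
  exists_disjoint : ∀ I ∈ ℐ, ∃ X ∈ R, Disjoint I X

namespace IsAvoidingFamily

lemma singleton {X : Finset W} (hV : X ⊆ V) (hm : m ≤ ∑ w ∈ X, μ w)
    (hℐ : ∀ I ∈ ℐ, Disjoint I X) : IsAvoidingFamily V m μ ℐ {X} where
  subset := by simpa using hV
  le_sum := by simpa using hm
  exists_disjoint I hI := ⟨X, Finset.mem_singleton_self X, hℐ I hI⟩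

lemma mono (hR : IsAvoidingFamily V m μ ℐ R) (hV : V ⊆ V') (hm : m' ≤ m) (hℐ : 𝒥 ⊆ ℐ) :
    IsAvoidingFamily V' m' μ 𝒥 R where
  subset X hX := (hR.subset X hX).trans hV
  le_sum X hX := hm.trans (hR.le_sum X hX)
  exists_disjoint I hI := hR.exists_disjoint I (hℐ hI)

lemma biUnion [DecidableEq W] {J : Type*} {s : Finset J} {𝒦 : J → Set (Finset W)}
    {R : J → Finset (Finset W)} (hR : ∀ j ∈ s, IsAvoidingFamily V m μ (𝒦 j) (R j))
    (hℐ : ∀ I ∈ ℐ, ∃ j ∈ s, I ∈ 𝒦 j) :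
    IsAvoidingFamily V m μ ℐ (s.biUnion R) where
  subset X hX := by
    obtain ⟨j, hj, hXj⟩ := Finset.mem_biUnion.1 hX
    exact (hR j hj).subset X hXj
  le_sum X hX := by
    obtain ⟨j, hj, hXj⟩ := Finset.mem_biUnion.1 hX
    exact (hR j hj).le_sum X hXj
  exists_disjoint I hI := by
    obtain ⟨j, hj, hIj⟩ := hℐ I hI
    obtain ⟨X, hX, hIX⟩ := (hR j hj).exists_disjoint I hIj
    exact ⟨X, Finset.mem_biUnion.2 ⟨j, hj, hX⟩, hIX⟩

end IsAvoidingFamily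

lemma card_biUnion_le_mul {J X : Type*} [DecidableEq X] {s : Finset J} {f : J → Finset X} {a b : ℝ}
    (hs : (#s : ℝ) ≤ a) (hb : 0 ≤ b) (hf : ∀ j ∈ s, (#(f j) : ℝ) ≤ b) :
    (#(s.biUnion f) : ℝ) ≤ a * b :=
  calc (#(s.biUnion f) : ℝ) ≤ ∑ j ∈ s, (#(f j) : ℝ) := mod_cast Finset.card_biUnion_le
    _ ≤ #s * b := by simpa using Finset.sum_le_card_nsmul s _ b hf
    _ ≤ a * b := by gcongr

lemma exists_cover_of_forall_exists_isAvoidingFamily {P : Finset W → Prop} {B : ℝ} (hB : 1 ≤ B)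
    (hP : ∀ C, ∑ w ∈ C, μ w ≤ 0 → P C)
    (hstep : ∀ C, ¬ P C →
      ∃ R : Finset (Finset W), (#R : ℝ) ≤ B ∧ IsAvoidingFamily C m μ {I ∈ ℐ | I ⊆ C} R)
    (j : ℕ) (C : Finset W) (hC : ∑ w ∈ C, μ w ≤ j * m) :
    ∃ 𝒞 : Finset (Finset W), (#𝒞 : ℝ) ≤ B ^ j ∧ (∀ D ∈ 𝒞, P D) ∧
      ∀ I ∈ ℐ, I ⊆ C → ∃ D ∈ 𝒞, I ⊆ D := by
  classical
  have hself (j : ℕ) (C : Finset W) (hPC : P C) : ∃ 𝒞 : Finset (Finset W),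
      (#𝒞 : ℝ) ≤ B ^ j ∧ (∀ D ∈ 𝒞, P D) ∧ ∀ I ∈ ℐ, I ⊆ C → ∃ D ∈ 𝒞, I ⊆ D :=
    ⟨{C}, by simpa using one_le_pow₀ hB, by simpa using hPC,
      fun I _ hIC => ⟨C, Finset.mem_singleton_self C, hIC⟩⟩
  induction j generalizing C with
  | zero => exact hself 0 C (hP C (by simpa using hC))
  | succ j ih =>
    by_cases hPC : P C
    · exact hself (j + 1) C hPC
    obtain ⟨R, hRB, hR⟩ := hstep C hPC
    have hmass (X : Finset W) (hX : X ∈ R) : ∑ w ∈ C \ X, μ w ≤ j * m := by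
      push_cast at hC
      linarith [Finset.sum_sdiff (f := μ) (hR.subset X hX), hR.le_sum X hX]
    choose! 𝒞 h𝒞B h𝒞P h𝒞 using fun X hX => ih (C \ X) (hmass X hX)
    refine ⟨R.biUnion 𝒞, ?_, ?_, fun I hI hIC => ?_⟩
    · rw [pow_succ']
      exact card_biUnion_le_mul hRB (by positivity) h𝒞B
    · simp only [Finset.mem_biUnion]
      rintro D ⟨X, hX, hD⟩
      exact h𝒞P X hX D hD
    · obtain ⟨X, hX, hIX⟩ := hR.exists_disjoint I ⟨hI, hIC⟩
      obtain ⟨D, hD, hID⟩ := h𝒞 X hX I hI (Finset.subset_sdiff.2 ⟨hIC, hIX⟩)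
      exact ⟨D, Finset.mem_biUnion.2 ⟨X, hX, hD⟩, hID⟩

end AvoidingFamilies

section EdgeSystems

variable {ι E W : Type*} [DecidableEq W] {π : ι → E → W} {a : ι} {s s' : Finset ι}
  {μ : W → ℝ} {A G : Finset E} {Δ κ b c γ θ K : ℝ} {T : Finset W} {v : W}

/-- The vertices covered by the edges in `A`, where an edge `e` is encoded by its coordinates
`π i e` for `i ∈ s`; distinct edges may have equal coordinates. -/
def vertexSupport (π : ι → E → W) (s : Finset ι) (A : Finset E) : Finset W :=
  s.biUnion fun i => A.image (π i)

/-- The vertex sets containing no edge of `A`. -/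
def independentSets (π : ι → E → W) (s : Finset ι) (A : Finset E) : Set (Finset W) :=
  {I | ∀ e ∈ A, ∃ i ∈ s, π i e ∉ I}

/-- The edges of `A` contained in the vertex set `C`. -/
def edgesWithin (π : ι → E → W) (s : Finset ι) (A : Finset E) (C : Finset W) : Finset E :=
  {e ∈ A | ∀ i ∈ s, π i e ∈ C}

/-- Degree and codegree bounds for the edge system `A`. Vertex degrees are measured against the
weight `μ`, which lets irregular systems be treated as if they were `Δ`-regular. -/
structure DegreeBounded (π : ι → E → W) (s : Finset ι) (μ : W → ℝ) (Δ κ : ℝ)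
    (A : Finset E) : Prop where
  deg_le : ∀ i ∈ s, ∀ w, (#{e ∈ A | π i e = w} : ℝ) ≤ Δ * μ w
  codeg_le : ∀ i ∈ s, ∀ j ∈ s, i ≠ j → ∀ v w, (#{e ∈ A | π i e = v ∧ π j e = w} : ℝ) ≤ κ * Δ

lemma DegreeBounded.mono (hA : DegreeBounded π s μ Δ κ A) (hs : s' ⊆ s) (hG : G ⊆ A) :
    DegreeBounded π s' μ Δ κ G where
  deg_le i hi w := (Nat.cast_le.2 (Finset.card_le_card (Finset.filter_subset_filter _ hG))).trans
    (hA.deg_le i (hs hi) w)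
  codeg_le i hi j hj hij v w :=
    (Nat.cast_le.2 (Finset.card_le_card (Finset.filter_subset_filter _ hG))).trans
      (hA.codeg_le i (hs hi) j (hs hj) hij v w)

lemma DegreeBounded.card_edgesWithin_le (hA : DegreeBounded π s μ Δ κ A) (hs : s.Nonempty)
    (C : Finset W) : (#(edgesWithin π s A C) : ℝ) ≤ Δ * ∑ w ∈ C, μ w := by
  obtain ⟨i, hi⟩ := hs
  refine le_trans (Nat.cast_le.2 (Finset.card_le_card ?_))
    (card_filter_mem_le_mul_sum (hA.deg_le i hi) C)
  exact Finset.monotone_filter_right A fun e _ he => he i hi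

/-- A fingerprint `T`, with witness `G`: a set of vertices supporting in its `a`-coordinate many
edges of `A` (at least `c` per unit of mass) that spread out in the coordinates `s`. -/
structure IsFingerprint (π : ι → E → W) (a : ι) (s : Finset ι) (μ : W → ℝ) (A : Finset E)
    (b c : ℝ) (T : Finset W) (G : Finset E) : Prop where
  subset : G ⊆ A
  mem : ∀ e ∈ G, π a e ∈ T
  deg_le : ∀ i ∈ s, ∀ w, (#{e ∈ G | π i e = w} : ℝ) ≤ b * μ w
  le_card : c * ∑ v ∈ T, μ v ≤ #G

lemma isFingerprint_empty (hb : 0 ≤ b) (hμ : ∀ w, 0 ≤ μ w) :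
    IsFingerprint π a s μ A b c ∅ ∅ where
  subset := Finset.empty_subset A
  mem := by simp
  deg_le i _ w := by simpa using mul_nonneg hb (hμ w)
  le_card := by simp

/-- The vertices whose degree into `G` in coordinate `i` is within `K` of the bound `b * μ w`
imposed on fingerprints. -/
def saturatedVertices [Fintype W] (π : ι → E → W) (μ : W → ℝ) (b K : ℝ) (G : Finset E) (i : ι) :
    Finset W :=
  {w | b * μ w < #{e ∈ G | π i e = w} + K}

open scoped Classical in
/-- The vertices of large `a`-degree by which the fingerprint `T` can be enlarged. A set containing
`T` but meeting `fingerprintExtensions T` would admit a larger fingerprint. -/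
def fingerprintExtensions [Fintype W] (π : ι → E → W) (a : ι) (s : Finset ι) (μ : W → ℝ)
    (A : Finset E) (b c : ℝ) (T : Finset W) : Finset W :=
  {v | v ∉ T ∧ 2 * c * μ v ≤ #{e ∈ A | π a e = v} ∧
    ∃ G, IsFingerprint π a s μ A b c (insert v T) G}

lemma mem_fingerprintExtensions [Fintype W] :
    v ∈ fingerprintExtensions π a s μ A b c T ↔ v ∉ T ∧ 2 * c * μ v ≤ #{e ∈ A | π a e = v} ∧
      ∃ G, IsFingerprint π a s μ A b c (insert v T) G := by
  classical
  exact Finset.mem_filter_univ v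

lemma fingerprintExtensions_subset [Fintype W] (hμ : ∀ w, 0 < μ w) (hc : 0 < c) :
    fingerprintExtensions π a s μ A b c T ⊆ A.image (π a) := by
  intro v hv
  have hpos : (0 : ℝ) < #{e ∈ A | π a e = v} :=
    lt_of_lt_of_le (mul_pos (by positivity) (hμ v)) (mem_fingerprintExtensions.1 hv).2.1
  obtain ⟨e, he⟩ := Finset.card_pos.1 (Nat.cast_pos.1 hpos)
  exact Finset.mem_image.2 ⟨e, Finset.mem_filter.1 he⟩

lemma exists_isFingerprint_disjoint_extensions [Fintype W] (hb : 0 ≤ b) (hμ : ∀ w, 0 ≤ μ w)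
    (I : Finset W) : ∃ T ⊆ I, (∃ G, IsFingerprint π a s μ A b c T G) ∧
      Disjoint I (fingerprintExtensions π a s μ A b c T) := by
  classical
  obtain ⟨T, hT, hmax⟩ := Finset.exists_max_image
    {T ∈ I.powerset | ∃ G, IsFingerprint π a s μ A b c T G} Finset.card
    ⟨∅, by simpa using ⟨∅, isFingerprint_empty hb hμ⟩⟩
  simp only [Finset.mem_filter, Finset.mem_powerset] at hT hmax
  refine ⟨T, hT.1, hT.2, Finset.disjoint_left.2 fun v hvI hv => ?_⟩
  obtain ⟨hvT, -, hins⟩ := mem_fingerprintExtensions.1 hv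
  have hle := hmax (insert v T) ⟨Finset.insert_subset hvI hT.1, hins⟩
  rw [Finset.card_insert_of_notMem hvT] at hle
  omega

namespace IsFingerprint

lemma mul_sum_le [Fintype W] (hT : IsFingerprint π a s μ A b c T G) (hs : s.Nonempty) :
    c * ∑ v ∈ T, μ v ≤ b * ∑ w, μ w := by
  obtain ⟨i, hi⟩ := hs
  exact hT.le_card.trans (card_le_mul_sum_univ (hT.deg_le i hi))

/-- Adding to `G` all edges at `v` that avoid the saturated vertices keeps the degrees bounded:
each of the other vertices gains at most a codegree. -/
lemma exists_insert [Fintype W] (hT : IsFingerprint π a s μ A b c T G) (hv : v ∉ T)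
    (hcodeg : ∀ i ∈ s, ∀ w, (#{e ∈ A | π a e = v ∧ π i e = w} : ℝ) ≤ K)
    (hcard : c * μ v ≤
      #{e ∈ A | π a e = v ∧ ¬ ∃ i ∈ s, π i e ∈ saturatedVertices π μ b K G i}) :
    ∃ G', IsFingerprint π a s μ A b c (insert v T) G' := by
  classical
  set L : Finset E := {e ∈ A | π a e = v ∧ ¬ ∃ i ∈ s, π i e ∈ saturatedVertices π μ b K G i}
    with hL
  have hGL : Disjoint G L := Finset.disjoint_left.2 fun e heG heL =>
    hv ((Finset.mem_filter.1 heL).2.1 ▸ hT.mem e heG)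
  refine ⟨G ∪ L, Finset.union_subset hT.subset (Finset.filter_subset _ _), fun e he => ?_,
    fun i hi w => ?_, ?_⟩
  · rcases Finset.mem_union.1 he with heG | heL
    · exact Finset.mem_insert_of_mem (hT.mem e heG)
    · exact (Finset.mem_filter.1 heL).2.1 ▸ Finset.mem_insert_self v T
  · rw [Finset.filter_union]
    by_cases hw : w ∈ saturatedVertices π μ b K G i
    · have hempty : {e ∈ L | π i e = w} = ∅ := Finset.filter_eq_empty_iff.2 fun e heL hew =>
        (Finset.mem_filter.1 heL).2.2 ⟨i, hi, hew ▸ hw⟩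
      simpa [hempty] using hT.deg_le i hi w
    · have hLw : (#{e ∈ L | π i e = w} : ℝ) ≤ K := by
        refine le_trans (Nat.cast_le.2 (Finset.card_le_card fun e he => ?_)) (hcodeg i hi w)
        simp only [hL, Finset.mem_filter] at he ⊢
        exact ⟨he.1.1, he.1.2.1, he.2⟩
      have hGw : (#{e ∈ G | π i e = w} : ℝ) + K ≤ b * μ w := by
        simpa [saturatedVertices] using hw
      have hunion : (#({e ∈ G | π i e = w} ∪ {e ∈ L | π i e = w}) : ℝ) ≤
          #{e ∈ G | π i e = w} + #{e ∈ L | π i e = w} := mod_cast Finset.card_union_le _ _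
      linarith
  · rw [Finset.card_union_of_disjoint hGL, Finset.sum_insert hv]
    push_cast
    linarith [hT.le_card]

lemma mul_le_card_saturated [Fintype W] (hT : IsFingerprint π a s μ A b c T G)
    (hcodeg : ∀ i ∈ s, ∀ w, (#{e ∈ A | π a e = v ∧ π i e = w} : ℝ) ≤ K) (hv : v ∉ T)
    (hdeg : 2 * c * μ v ≤ #{e ∈ A | π a e = v})
    (hext : v ∉ fingerprintExtensions π a s μ A b c T) :
    c * μ v ≤ #{e ∈ A | π a e = v ∧ ∃ i ∈ s, π i e ∈ saturatedVertices π μ b K G i} := by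
  by_contra! hlt
  have hsplit : (#{e ∈ A | π a e = v} : ℝ) =
      #{e ∈ A | π a e = v ∧ ∃ i ∈ s, π i e ∈ saturatedVertices π μ b K G i} +
      #{e ∈ A | π a e = v ∧ ¬ ∃ i ∈ s, π i e ∈ saturatedVertices π μ b K G i} := by
    rw [← Finset.card_filter_add_card_filter_not (s := {e ∈ A | π a e = v})
      (fun e => ∃ i ∈ s, π i e ∈ saturatedVertices π μ b K G i), Finset.filter_filter,
      Finset.filter_filter, Nat.cast_add]
  exact hext (mem_fingerprintExtensions.2 ⟨hv, hdeg, hT.exists_insert hv hcodeg (by linarith)⟩)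

end IsFingerprint

lemma mul_sum_saturatedVertices_le [Fintype W] (hμ : ∀ w, 1 ≤ μ w) (hb : 0 ≤ b)
    (hK : 2 * K ≤ b) (i : ι) :
    b * ∑ w ∈ saturatedVertices π μ b K G i, μ w ≤ 2 * #G := by
  have hhalf : b / 2 * ∑ w ∈ saturatedVertices π μ b K G i, μ w ≤
      #{e ∈ G | π i e ∈ saturatedVertices π μ b K G i} := by
    refine mul_sum_le_card_filter_mem fun w hw => ?_
    have hsat := (Finset.mem_filter_univ w).1 hw
    linarith [mul_le_mul_of_nonneg_left (hμ w) hb]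
  have hsub : (#{e ∈ G | π i e ∈ saturatedVertices π μ b K G i} : ℝ) ≤ #G :=
    mod_cast Finset.card_filter_le _ _
  linarith

lemma DegreeBounded.mul_card_saturated_le [Fintype W] (hA : DegreeBounded π s μ Δ κ A)
    (hμ : ∀ w, 1 ≤ μ w) (hΔ : 0 ≤ Δ) (hb : 0 ≤ b) (hK : 2 * K ≤ b) :
    b * #{e ∈ A | ∃ i ∈ s, π i e ∈ saturatedVertices π μ b K G i} ≤ 2 * #s * Δ * #G := by
  classical
  have hcover : {e ∈ A | ∃ i ∈ s, π i e ∈ saturatedVertices π μ b K G i} ⊆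
      s.biUnion fun i => {e ∈ A | π i e ∈ saturatedVertices π μ b K G i} := by
    intro e he
    simp only [Finset.mem_filter, Finset.mem_biUnion] at he ⊢
    obtain ⟨heA, i, hi, hie⟩ := he
    exact ⟨i, hi, heA, hie⟩
  calc b * (#{e ∈ A | ∃ i ∈ s, π i e ∈ saturatedVertices π μ b K G i} : ℝ)
      ≤ b * ∑ i ∈ s, (#{e ∈ A | π i e ∈ saturatedVertices π μ b K G i} : ℝ) := by
        gcongr
        exact mod_cast (Finset.card_le_card hcover).trans Finset.card_biUnion_le
    _ ≤ b * ∑ i ∈ s, Δ * ∑ w ∈ saturatedVertices π μ b K G i, μ w := by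
        gcongr with i hi
        exact card_filter_mem_le_mul_sum (hA.deg_le i hi) _
    _ = Δ * ∑ i ∈ s, b * ∑ w ∈ saturatedVertices π μ b K G i, μ w := by
        simp only [Finset.mul_sum, mul_left_comm]
    _ ≤ Δ * ∑ i ∈ s, 2 * (#G : ℝ) := by
        exact mul_le_mul_of_nonneg_left
          (Finset.sum_le_sum fun i _ => mul_sum_saturatedVertices_le hμ hb hK i) hΔ
    _ = 2 * #s * Δ * #G := by simp only [Finset.sum_const, nsmul_eq_mul]; ring

lemma IsFingerprint.mul_sum_le_card_saturated [Fintype W]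
    (hT : IsFingerprint π a s μ A b c T G) {H : Finset W}
    (hcodeg : ∀ v, ∀ i ∈ s, ∀ w, (#{e ∈ A | π a e = v ∧ π i e = w} : ℝ) ≤ K)
    (hHT : Disjoint H T) (hdeg : ∀ v ∈ H, 2 * c * μ v ≤ #{e ∈ A | π a e = v})
    (hext : Disjoint H (fingerprintExtensions π a s μ A b c T)) :
    c * ∑ v ∈ H, μ v ≤ #{e ∈ A | ∃ i ∈ s, π i e ∈ saturatedVertices π μ b K G i} := by
  refine (mul_sum_le_card_filter_mem
    (A := {e ∈ A | ∃ i ∈ s, π i e ∈ saturatedVertices π μ b K G i}) (p := π a)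
    fun v hv => ?_).trans (mod_cast Finset.card_filter_le _ _)
  simpa only [Finset.filter_filter, and_comm] using hT.mul_le_card_saturated (hcodeg v)
    (Finset.disjoint_left.1 hHT hv) (hdeg v hv) (Finset.disjoint_left.1 hext hv)

lemma IsFingerprint.sum_le [Fintype W] (hT : IsFingerprint π a s μ A (θ * Δ) (γ / 4 * Δ) T G)
    (hs : s.Nonempty) (hΔ : 0 < Δ) (hγ : 0 < γ) :
    ∑ v ∈ T, μ v ≤ 4 * θ / γ * ∑ w, μ w := by
  refine le_of_mul_le_mul_left ((hT.mul_sum_le hs).trans_eq ?_) (by positivity : 0 < γ / 4 * Δ)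
  field_simp

/-- Most of the mass is carried by vertices of large `a`-degree which neither lie in `T` nor extend
it; at each of them half of the edges hit a saturated vertex, and `G` is what saturated it. -/
lemma IsFingerprint.mul_le_card [Fintype W] {ha : a ∉ s} (hs : s.Nonempty)
    (hA : DegreeBounded π (s.cons a ha) μ Δ κ A)
    (hT : IsFingerprint π a s μ A (θ * Δ) (γ / 4 * Δ) T G) (hμ : ∀ w, 1 ≤ μ w) (hΔ : 0 < Δ)
    (hγ : 0 < γ) (hθ : 0 < θ) (hκ : κ ≤ θ / 2) (hcard : γ * Δ * ∑ w, μ w ≤ #A)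
    (hTmass : ∑ v ∈ T, μ v ≤ γ / 8 * ∑ w, μ w)
    (hext : ∑ v ∈ fingerprintExtensions π a s μ A (θ * Δ) (γ / 4 * Δ) T, μ v ≤
      γ / 4 * ∑ w, μ w) :
    γ ^ 2 / (64 * #s) * (θ * Δ) * ∑ w, μ w ≤ #G := by
  set X := fingerprintExtensions π a s μ A (θ * Δ) (γ / 4 * Δ) T
  set B : Finset W := {v | γ / 2 * Δ * μ v ≤ #{e ∈ A | π a e = v}}
  set H : Finset W := B \ (T ∪ X)
  have hμ₀ (w : W) : 0 ≤ μ w := zero_le_one.trans (hμ w)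
  have hH : γ / 8 * ∑ w, μ w ≤ ∑ v ∈ H, μ v := by
    linarith [sum_sub_sum_sub_sum_le_sum_sdiff_union hμ₀ B T X,
      half_mul_sum_le_sum_heavy hμ₀ hΔ hγ.le (hA.deg_le a (Finset.mem_cons_self a s)) hcard]
  have hdisj := Finset.disjoint_union_right.1 (Finset.sdiff_disjoint (s := T ∪ X) (t := B))
  have hlower : γ / 4 * Δ * ∑ v ∈ H, μ v ≤
      #{e ∈ A | ∃ i ∈ s, π i e ∈ saturatedVertices π μ (θ * Δ) (κ * Δ) G i} := by
    refine hT.mul_sum_le_card_saturated (fun v i hi w => hA.codeg_le a (Finset.mem_cons_self a s) i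
      (Finset.mem_cons_of_mem hi) (fun h => ha (h ▸ hi)) v w) hdisj.1 (fun v hv => ?_) hdisj.2
    have hvB := (Finset.mem_filter_univ v).1 (Finset.mem_sdiff.1 hv).1
    linarith
  have hupper := (hA.mono (Finset.subset_cons ha) subset_rfl).mul_card_saturated_le (G := G) hμ
    hΔ.le (by positivity : 0 ≤ θ * Δ) (K := κ * Δ)
    (by linarith [mul_le_mul_of_nonneg_right hκ hΔ.le])
  have hscale : 0 < 2 * #s * Δ := by have := hs.card_pos; positivity
  refine le_of_mul_le_mul_left ?_ hscale
  calc 2 * #s * Δ * (γ ^ 2 / (64 * #s) * (θ * Δ) * ∑ w, μ w)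
      = θ * Δ * (γ / 4 * Δ * (γ / 8 * ∑ w, μ w)) := by field_simp; ring
    _ ≤ θ * Δ * (γ / 4 * Δ * ∑ v ∈ H, μ v) := by gcongr
    _ ≤ θ * Δ * #{e ∈ A | ∃ i ∈ s, π i e ∈ saturatedVertices π μ (θ * Δ) (κ * Δ) G i} := by
        gcongr
    _ ≤ 2 * #s * Δ * #G := hupper

end EdgeSystems

section AvoidingFamiliesOfEdgeSystems

universe u v

variable {ι : Type*} {E : Type v} {W : Type u} [DecidableEq W] {π : ι → E → W} {a : ι}
  {s s' : Finset ι} {μ : W → ℝ} {A G : Finset E} {Δ κ κ' γ θ τ B c : ℝ} {T : Finset W}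

lemma vertexSupport_mono (hs : s' ⊆ s) (hG : G ⊆ A) :
    vertexSupport π s' G ⊆ vertexSupport π s A :=
  (Finset.biUnion_subset_biUnion_of_subset_left _ hs).trans
    (Finset.biUnion_mono fun _ _ => Finset.image_subset_image hG)

lemma image_subset_vertexSupport (ha : a ∈ s) : A.image (π a) ⊆ vertexSupport π s A :=
  Finset.subset_biUnion_of_mem (fun i => A.image (π i)) ha

lemma DegreeBounded.isAvoidingFamily_singleton [Fintype W] (hA : DegreeBounded π {a} μ Δ κ A)
    (hΔ : 0 < Δ) (hcard : γ * Δ * ∑ w, μ w ≤ #A) :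
    IsAvoidingFamily (vertexSupport π {a} A) (γ * ∑ w, μ w) μ (independentSets π {a} A)
      {A.image (π a)} := by
  have ha := Finset.mem_singleton_self a
  refine .singleton (image_subset_vertexSupport ha) ?_ fun I hI => ?_
  · refine le_of_mul_le_mul_left ?_ hΔ
    have himage : {e ∈ A | π a e ∈ A.image (π a)} = A :=
      Finset.filter_true_of_mem fun e he => Finset.mem_image_of_mem _ he
    have hle := card_filter_mem_le_mul_sum (hA.deg_le a ha) (A.image (π a))
    rw [himage] at hle
    linarith
  · simp only [Finset.disjoint_right, Finset.forall_mem_image]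
    intro e he
    simpa using hI e he

/-- Either `T` extends in many ways, and these extensions are the avoided set, or the edges
witnessing `T` form a dense system of smaller uniformity to which `ih` applies. -/
lemma IsFingerprint.exists_isAvoidingFamily [Fintype W] {ha : a ∉ s} (hs : s.Nonempty)
    (hA : DegreeBounded π (s.cons a ha) μ Δ κ A)
    (hT : IsFingerprint π a s μ A (θ * Δ) (γ / 4 * Δ) T G) (hμ : ∀ w, 1 ≤ μ w) (hΔ : 0 < Δ)
    (hγ : 0 < γ) (hθ : 0 < θ) (hκ : κ ≤ θ / 2) (hκ' : κ ≤ κ' * θ)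
    (hcard : γ * Δ * ∑ w, μ w ≤ #A) (hTmass : ∑ v ∈ T, μ v ≤ γ / 8 * ∑ w, μ w) (hB : 1 ≤ B)
    (ih : ∀ G : Finset E, DegreeBounded π s μ (θ * Δ) κ' G →
      γ ^ 2 / (64 * #s) * (θ * Δ) * ∑ w, μ w ≤ #G → ∃ R : Finset (Finset W), (#R : ℝ) ≤ B ∧
        IsAvoidingFamily (vertexSupport π s G) (c * ∑ w, μ w) μ (independentSets π s G) R) :
    ∃ R : Finset (Finset W), (#R : ℝ) ≤ B ∧
      IsAvoidingFamily (vertexSupport π (s.cons a ha) A) (min c (γ / 4) * ∑ w, μ w) μ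
        {I ∈ independentSets π (s.cons a ha) A |
          T ⊆ I ∧ Disjoint I (fingerprintExtensions π a s μ A (θ * Δ) (γ / 4 * Δ) T)} R := by
  have hM : 0 ≤ ∑ w, μ w := Finset.sum_nonneg fun w _ => zero_le_one.trans (hμ w)
  have hmin (x : ℝ) (hx : min c (γ / 4) ≤ x) := mul_le_mul_of_nonneg_right hx hM
  rcases le_or_gt (γ / 4 * ∑ w, μ w)
    (∑ v ∈ fingerprintExtensions π a s μ A (θ * Δ) (γ / 4 * Δ) T, μ v) with hext | hext
  · refine ⟨{fingerprintExtensions π a s μ A (θ * Δ) (γ / 4 * Δ) T}, by simpa using hB,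
      .singleton ?_ ((hmin _ (min_le_right _ _)).trans hext) fun I hI => hI.2.2⟩
    exact (fingerprintExtensions_subset (fun w => zero_lt_one.trans_le (hμ w))
      (by positivity)).trans (image_subset_vertexSupport (Finset.mem_cons_self a s))
  · have hG : DegreeBounded π s μ (θ * Δ) κ' G := ⟨hT.deg_le, fun i hi j hj hij v w =>
      ((hA.mono (Finset.subset_cons ha) hT.subset).codeg_le i hi j hj hij v w).trans
        (by simpa only [mul_assoc] using mul_le_mul_of_nonneg_right hκ' hΔ.le)⟩
    obtain ⟨R, hRB, hR⟩ := ih G hG (hT.mul_le_card hs hA hμ hΔ hγ hθ hκ hcard hTmass hext.le)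
    refine ⟨R, hRB, hR.mono (vertexSupport_mono (Finset.subset_cons ha) hT.subset)
      (hmin _ (min_le_left _ _)) fun I ⟨hI, hTI, _⟩ e he => ?_⟩
    obtain ⟨i, hi, hie⟩ := hI e (hT.subset he)
    rcases Finset.mem_cons.1 hi with rfl | hi
    · exact absurd (hTI (hT.mem e he)) hie
    · exact ⟨i, hi, hie⟩

lemma exists_isAvoidingFamily_cons [Fintype W] {ha : a ∉ s} (hs : s.Nonempty)
    (hA : DegreeBounded π (s.cons a ha) μ Δ κ A) (hμ : ∀ w, 1 ≤ μ w) (hΔ : 0 < Δ) (hγ : 0 < γ)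
    (hθ : 0 < θ) (hθγ : 4 * θ / γ ≤ γ / 8) (hθτ : 4 * θ / γ ≤ τ) (hκ : κ ≤ θ / 2)
    (hκ' : κ ≤ κ' * θ) (hcard : γ * Δ * ∑ w, μ w ≤ #A) (hB : 1 ≤ B)
    (hτ : (#{T : Finset W | (#T : ℝ) ≤ τ * ∑ w, μ w} : ℝ) ≤ B)
    (ih : ∀ G : Finset E, DegreeBounded π s μ (θ * Δ) κ' G →
      γ ^ 2 / (64 * #s) * (θ * Δ) * ∑ w, μ w ≤ #G → ∃ R : Finset (Finset W), (#R : ℝ) ≤ B ∧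
        IsAvoidingFamily (vertexSupport π s G) (c * ∑ w, μ w) μ (independentSets π s G) R) :
    ∃ R : Finset (Finset W), (#R : ℝ) ≤ B * B ∧
      IsAvoidingFamily (vertexSupport π (s.cons a ha) A) (min c (γ / 4) * ∑ w, μ w) μ
        (independentSets π (s.cons a ha) A) R := by
  classical
  have hμ₀ (w : W) : 0 ≤ μ w := zero_le_one.trans (hμ w)
  have hM : 0 ≤ ∑ w, μ w := Finset.sum_nonneg fun w _ => hμ₀ w
  have hfingerprint (T : Finset W) (hT : ∃ G, IsFingerprint π a s μ A (θ * Δ) (γ / 4 * Δ) T G) :=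
    hT.choose_spec.exists_isAvoidingFamily hs hA hμ hΔ hγ hθ hκ hκ' hcard
      ((hT.choose_spec.sum_le hs hΔ hγ).trans (mul_le_mul_of_nonneg_right hθγ hM)) hB ih
  choose! R hRB hR using hfingerprint
  have hcount :
      (#{T | ∃ G, IsFingerprint π a s μ A (θ * Δ) (γ / 4 * Δ) T G} : ℝ) ≤ B := by
    refine le_trans (Nat.cast_le.2 (Finset.card_le_card
      (Finset.monotone_filter_right _ fun T _ ⟨G, hTG⟩ => ?_))) hτ
    calc (#T : ℝ) ≤ ∑ v ∈ T, μ v := by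
          simpa using Finset.card_nsmul_le_sum T μ 1 fun v _ => hμ v
      _ ≤ 4 * θ / γ * ∑ w, μ w := hTG.sum_le hs hΔ hγ
      _ ≤ τ * ∑ w, μ w := mul_le_mul_of_nonneg_right hθτ hM
  refine ⟨_, card_biUnion_le_mul hcount (zero_le_one.trans hB) fun T hT =>
    hRB T ((Finset.mem_filter_univ T).1 hT), .biUnion
      (fun T hT => hR T ((Finset.mem_filter_univ T).1 hT)) fun I hI => ?_⟩
  obtain ⟨T, hTI, hT, hdisj⟩ := exists_isFingerprint_disjoint_extensions
    (A := A) (π := π) (a := a) (s := s) (by positivity : 0 ≤ θ * Δ) (c := γ / 4 * Δ) hμ₀ I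
  exact ⟨T, (Finset.mem_filter_univ T).2 hT, hI, hTI, hdisj⟩

theorem exists_isAvoidingFamily (hs : s.Nonempty) : ∀ γ > 0, ∃ c > 0, ∀ δ > 0, ∃ κ > 0,
    ∀ (W : Type u) (E : Type v) [Fintype W] [DecidableEq W] (π : ι → E → W) (μ : W → ℝ) (Δ : ℝ)
      (A : Finset E), (∀ w, 1 ≤ μ w) → 0 < Δ → DegreeBounded π s μ Δ κ A →
      γ * Δ * ∑ w, μ w ≤ #A → ∃ R : Finset (Finset W), (#R : ℝ) ≤ Real.exp (δ * ∑ w, μ w) ∧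
        IsAvoidingFamily (vertexSupport π s A) (c * ∑ w, μ w) μ (independentSets π s A) R := by
  induction hs using Finset.Nonempty.cons_induction with
  | singleton a =>
    refine fun γ hγ => ⟨γ, hγ, fun δ hδ => ⟨1, one_pos,
      fun W E _ _ π μ Δ A hμ hΔ hA hcard => ⟨{A.image (π a)}, ?_,
        hA.isAvoidingFamily_singleton hΔ hcard⟩⟩⟩
    have hM : 0 ≤ ∑ w, μ w := Finset.sum_nonneg fun w _ => zero_le_one.trans (hμ w)
    simpa using mul_nonneg hδ.le hM
  | cons a s ha hs ih =>
    intro γ hγ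
    obtain ⟨c, hc, ih⟩ := ih (γ ^ 2 / (64 * #s)) (by have := hs.card_pos; positivity)
    refine ⟨min c (γ / 4), lt_min hc (by positivity), fun δ hδ => ?_⟩
    obtain ⟨κ', hκ', ih⟩ := ih (δ / 2) (half_pos hδ)
    obtain ⟨τ, hτ, hcount⟩ := exists_card_filter_card_le_mul_le_exp (half_pos hδ)
    obtain ⟨θ, hθ, hθγ, hθτ⟩ : ∃ θ : ℝ, 0 < θ ∧ 4 * θ / γ ≤ γ / 8 ∧ 4 * θ / γ ≤ τ := by
      refine ⟨γ / 4 * min (γ / 8) τ, by positivity, ?_⟩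
      rw [show 4 * (γ / 4 * min (γ / 8) τ) / γ = min (γ / 8) τ by field_simp]
      exact ⟨min_le_left _ _, min_le_right _ _⟩
    refine ⟨min (θ / 2) (κ' * θ), by positivity, fun W E _ _ π μ Δ A hμ hΔ hA hcard => ?_⟩
    have hM : 0 ≤ ∑ w, μ w := Finset.sum_nonneg fun w _ => zero_le_one.trans (hμ w)
    have hW : (Fintype.card W : ℝ) ≤ ∑ w, μ w := by
      simpa using Finset.card_nsmul_le_sum Finset.univ μ 1 fun w _ => hμ w
    have hexp : Real.exp (δ * ∑ w, μ w) =
        Real.exp (δ / 2 * ∑ w, μ w) * Real.exp (δ / 2 * ∑ w, μ w) := by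
      rw [← Real.exp_add]; ring_nf
    rw [hexp]
    exact exists_isAvoidingFamily_cons hs hA hμ hΔ hγ hθ hθγ hθτ (min_le_left _ _)
      (min_le_right _ _) hcard (Real.one_le_exp (by positivity)) (hcount W _ hW)
      fun G => ih W E π μ (θ * Δ) G hμ (by positivity)

end AvoidingFamiliesOfEdgeSystems

section Containers

universe u v

variable {ι : Type*} {E : Type v} {W : Type u} [DecidableEq W] {π : ι → E → W} {s : Finset ι}
  {A : Finset E} {γ δ D : ℝ} {C : Finset W}

/-- A family of vertex sets, each containing at most `m` edges of `A`, that together capture every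
independent set. -/
structure IsContainerFamily (π : ι → E → W) (s : Finset ι) (A : Finset E) (m : ℝ)
    (𝒞 : Finset (Finset W)) : Prop where
  card_edgesWithin_le : ∀ C ∈ 𝒞, (#(edgesWithin π s A C) : ℝ) ≤ m
  exists_superset : ∀ I ∈ independentSets π s A, ∃ C ∈ 𝒞, I ⊆ C

lemma IsContainerFamily.mono {m m' : ℝ} {𝒞 : Finset (Finset W)}
    (h𝒞 : IsContainerFamily π s A m 𝒞) (hm : m ≤ m') : IsContainerFamily π s A m' 𝒞 where
  card_edgesWithin_le C hC := (h𝒞.card_edgesWithin_le C hC).trans hm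
  exists_superset := h𝒞.exists_superset

lemma edgesWithin_subset : edgesWithin π s A C ⊆ A := Finset.filter_subset _ _

lemma vertexSupport_edgesWithin_subset : vertexSupport π s (edgesWithin π s A C) ⊆ C := by
  simp only [vertexSupport, Finset.biUnion_subset, Finset.image_subset_iff]
  exact fun i hi e he => (Finset.mem_filter.1 he).2 i hi

theorem exists_isContainerFamily_of_degreeBounded (hs : s.Nonempty) (hγ : 0 < γ) (hδ : 0 < δ) :
    ∃ κ > 0, ∀ (W : Type u) (E : Type v) [Fintype W] [DecidableEq W] (π : ι → E → W) (μ : W → ℝ)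
      (Δ : ℝ) (A : Finset E), (∀ w, 1 ≤ μ w) → 0 < Δ → DegreeBounded π s μ Δ κ A →
      ∃ 𝒞 : Finset (Finset W), (#𝒞 : ℝ) ≤ Real.exp (δ * ∑ w, μ w) ∧
        IsContainerFamily π s A (γ * Δ * ∑ w, μ w) 𝒞 := by
  obtain ⟨c, hc, havoid⟩ := exists_isAvoidingFamily.{u, v} hs γ hγ
  obtain ⟨j, hj⟩ := exists_nat_gt (1 / c)
  have hj₀ : (0 : ℝ) < j := (by positivity : 0 < 1 / c).trans hj
  obtain ⟨κ, hκ, havoid⟩ := havoid (δ / j) (by positivity)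
  refine ⟨κ, hκ, fun W E _ _ π μ Δ A hμ hΔ hA => ?_⟩
  have hM : 0 ≤ ∑ w, μ w := Finset.sum_nonneg fun w _ => zero_le_one.trans (hμ w)
  have hmass : ∑ w, μ w ≤ j * (c * ∑ w, μ w) := by
    rw [← mul_assoc]
    exact le_mul_of_one_le_left hM ((div_lt_iff₀ hc).1 hj).le
  obtain ⟨𝒞, h𝒞, hsparse, hcover⟩ := exists_cover_of_forall_exists_isAvoidingFamily
    (ℐ := independentSets π s A) (P := fun C => (#(edgesWithin π s A C) : ℝ) ≤ γ * Δ * ∑ w, μ w)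
    (Real.one_le_exp (by positivity : 0 ≤ δ / j * ∑ w, μ w))
    (fun C hC => (hA.card_edgesWithin_le hs C).trans
      ((mul_nonpos_of_nonneg_of_nonpos hΔ.le hC).trans (by positivity)))
    (fun C hC => by
      obtain ⟨R, hRcard, hR⟩ := havoid W E π μ Δ (edgesWithin π s A C) hμ hΔ
        (hA.mono subset_rfl edgesWithin_subset) (not_le.1 hC).le
      exact ⟨R, hRcard, hR.mono vertexSupport_edgesWithin_subset le_rfl
        fun I hI e he => hI.1 e (edgesWithin_subset he)⟩)
    j Finset.univ hmass
  refine ⟨𝒞, h𝒞.trans_eq ?_, hsparse, fun I hI => hcover I hI (Finset.subset_univ I)⟩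
  rw [← Real.exp_nat_mul, ← mul_assoc, mul_div_cancel₀ δ hj₀.ne']

lemma exists_weight_degreeBounded [Fintype W] {d κ : ℝ} (hd : 0 < d)
    (hA : (#A : ℝ) ≤ D * d * Fintype.card W)
    (hcodeg : ∀ i ∈ s, ∀ j ∈ s, i ≠ j → ∀ v w,
      (#{e ∈ A | π i e = v ∧ π j e = w} : ℝ) ≤ κ * d) :
    ∃ μ : W → ℝ, (∀ w, 1 ≤ μ w) ∧ ∑ w, μ w ≤ (1 + #s * D) * Fintype.card W ∧
      DegreeBounded π s μ d κ A := by
  refine ⟨fun w => 1 + ∑ i ∈ s, (#{e ∈ A | π i e = w} : ℝ) / d,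
    fun w => le_add_of_nonneg_right (by positivity), ?_, fun i hi w => ?_, hcodeg⟩
  · have hdeg (i : ι) : ∑ w, (#{e ∈ A | π i e = w} : ℝ) / d ≤ D * Fintype.card W := by
      rw [← Finset.sum_div, ← card_filter_mem_eq_sum, div_le_iff₀ hd]
      simpa [mul_right_comm] using hA
    calc ∑ w, (1 + ∑ i ∈ s, (#{e ∈ A | π i e = w} : ℝ) / d)
        = Fintype.card W + ∑ i ∈ s, ∑ w, (#{e ∈ A | π i e = w} : ℝ) / d := by
          rw [Finset.sum_add_distrib, Finset.sum_comm]; simp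
      _ ≤ Fintype.card W + #s * (D * Fintype.card W) := by
          simpa using Finset.sum_le_card_nsmul s _ _ fun i _ => hdeg i
      _ = (1 + #s * D) * Fintype.card W := by ring
  · rw [mul_add, Finset.mul_sum]
    have hterm := Finset.single_le_sum (f := fun i => d * ((#{e ∈ A | π i e = w} : ℝ) / d))
      (fun i _ => by positivity) hi
    rw [mul_div_cancel₀ _ hd.ne'] at hterm
    linarith

theorem exists_isContainerFamily (hs : s.Nonempty) (hD : 0 ≤ D) (hγ : 0 < γ) (hδ : 0 < δ) :
    ∃ κ > 0, ∀ (W : Type u) (E : Type v) [Fintype W] [DecidableEq W] (π : ι → E → W) (d : ℝ)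
      (A : Finset E), 0 < d → (#A : ℝ) ≤ D * d * Fintype.card W →
      (∀ i ∈ s, ∀ j ∈ s, i ≠ j → ∀ v w, (#{e ∈ A | π i e = v ∧ π j e = w} : ℝ) ≤ κ * d) →
      ∃ 𝒞 : Finset (Finset W), (#𝒞 : ℝ) ≤ Real.exp (δ * Fintype.card W) ∧
        IsContainerFamily π s A (γ * d * Fintype.card W) 𝒞 := by
  set L : ℝ := 1 + #s * D
  have hL : 0 < L := by positivity
  obtain ⟨κ, hκ, hcontainers⟩ := exists_isContainerFamily_of_degreeBounded.{u, v} hs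
    (div_pos hγ hL) (div_pos hδ hL)
  refine ⟨κ, hκ, fun W E _ _ π d A hd hA hcodeg => ?_⟩
  obtain ⟨μ, hμ, hmass, hdeg⟩ := exists_weight_degreeBounded hd hA hcodeg
  obtain ⟨𝒞, hcard, h𝒞⟩ := hcontainers W E π μ d A hμ hd hdeg
  refine ⟨𝒞, hcard.trans (Real.exp_le_exp.2 ?_), h𝒞.mono ?_⟩
  · calc δ / L * ∑ w, μ w ≤ δ / L * (L * Fintype.card W) := by gcongr
      _ = δ * Fintype.card W := by field_simp
  · calc γ / L * d * ∑ w, μ w ≤ γ / L * d * (L * Fintype.card W) := by gcongr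
      _ = γ * d * Fintype.card W := by field_simp

end Containers

section Templates

universe u v w

variable {α β κ : Type*} [Fintype α] [DecidableEq κ] {Φ Ψ : Finset (α → β)}
  {F : Finset (α → κ)} {ε m K : ℝ}

/-- Forb: the colourings that induce no element of `F` along any embedding in `Φ`. -/
def forb (Φ : Finset (α → β)) (F : Finset (α → κ)) : Set (β → κ) :=
  {c | ∀ φ ∈ Φ, (fun v => c (φ v)) ∉ F}

/-- A family of templates as in the container theorem: its realisations cover `forb Φ F`, each
template admits few pairs of an embedding and a forbidden colouring, and there are few templates.
A template for `β` is a map `β → Finset κ` with nonempty values. -/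
structure IsTemplateFamily [Fintype β] [Fintype κ] (Φ : Finset (α → β)) (F : Finset (α → κ))
    (ε : ℝ) (𝒯 : Finset (β → Finset κ)) : Prop where
  nonempty : ∀ t ∈ 𝒯, ∀ x, (t x).Nonempty
  exists_realises : ∀ c ∈ forb Φ F, ∃ t ∈ 𝒯, ∀ x, c x ∈ t x
  card_pairs_le : ∀ t ∈ 𝒯, (#{p ∈ Φ ×ˢ F | ∀ v, p.2 v ∈ t (p.1 v)} : ℝ) ≤ ε * #Φ
  card_le : (#𝒯 : ℝ) ≤ (Fintype.card κ : ℝ) ^ (ε * Fintype.card β)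

/-- The pointwise hull of `forb Φ F` works alone: by `h`, every colouring of `α` that it induces is
already induced by a member of `forb Φ F`. -/
lemma exists_isTemplateFamily_of_subsingleton [Nonempty α] [Fintype β] [Fintype κ] (hε : 0 ≤ ε)
    (h : Subsingleton α ∨ Subsingleton κ) : ∃ 𝒯, IsTemplateFamily Φ F ε 𝒯 := by
  classical
  rcases (forb Φ F).eq_empty_or_nonempty with hempty | ⟨c₀, hc₀⟩
  · exact ⟨∅, by simp, by simp [hempty], by simp, by
      rw [Finset.card_empty, Nat.cast_zero]; positivity⟩
  let hull (x : β) : Finset κ := {a | ∃ c ∈ forb Φ F, c x = a}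
  have hhull (c : β → κ) (hc : c ∈ forb Φ F) (x : β) : c x ∈ hull x := by
    simpa [hull] using ⟨c, hc, rfl⟩
  have hpairs : {p ∈ Φ ×ˢ F | ∀ v, p.2 v ∈ hull (p.1 v)} = ∅ := by
    refine Finset.filter_eq_empty_iff.2 fun ⟨φ, f⟩ hp hf => ?_
    obtain ⟨v₀⟩ := ‹Nonempty α›
    obtain ⟨c, hc, hcv₀⟩ := (Finset.mem_filter_univ _).1 (hf v₀)
    refine hc φ (Finset.mem_product.1 hp).1 ?_
    suffices (fun v => c (φ v)) = f by simpa [this] using (Finset.mem_product.1 hp).2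
    rcases h with _ | _
    · exact funext fun v => Subsingleton.elim v₀ v ▸ hcv₀
    · exact Subsingleton.elim _ _
  refine ⟨{hull}, ?_, fun c hc => ⟨hull, Finset.mem_singleton_self _, hhull c hc⟩, ?_, ?_⟩
  · simpa using fun x => ⟨c₀ x, hhull c₀ hc₀ x⟩
  · simp only [Finset.mem_singleton, forall_eq, hpairs, Finset.card_empty, Nat.cast_zero]
    positivity
  · rcases isEmpty_or_nonempty β with _ | ⟨⟨x⟩⟩
    · simp
    · have : Nonempty κ := ⟨c₀ x⟩
      simpa using Real.one_le_rpow (Nat.one_le_cast.2 Fintype.card_pos) (by positivity)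

variable [DecidableEq β]

/-- The `v`-th vertex of the edge `(φ, f)` of the hypergraph on `β × κ` whose independent sets
contain the graphs of the colourings in `forb Φ F`. -/
def colouredPoint (v : α) (p : (α → β) × (α → κ)) : β × κ :=
  (p.1 v, p.2 v)

lemma image_graph_mem_independentSets [Fintype β] (hΨ : Ψ ⊆ Φ) {c : β → κ} (hc : c ∈ forb Φ F) :
    Finset.univ.image (fun x => (x, c x)) ∈
      independentSets colouredPoint Finset.univ (Ψ ×ˢ F) := by
  rintro ⟨φ, f⟩ hp
  by_contra! hgraph
  have hcf : (fun v => c (φ v)) = f := funext fun v => by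
    simpa [colouredPoint] using hgraph v (Finset.mem_univ v)
  obtain ⟨hφ, hf⟩ := Finset.mem_product.1 hp
  exact hc φ (hΨ hφ) (hcf ▸ hf)

lemma IsContainerFamily.exists_isTemplateFamily [Fintype β] [Fintype κ]
    {𝒞 : Finset (Finset (β × κ))}
    (h𝒞 : IsContainerFamily colouredPoint Finset.univ (Ψ ×ˢ F) m 𝒞) (hΨ : Ψ ⊆ Φ)
    (hm : m + #(Φ \ Ψ) * #F ≤ ε * #Φ)
    (hcard : (#𝒞 : ℝ) ≤ (Fintype.card κ : ℝ) ^ (ε * Fintype.card β)) :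
    ∃ 𝒯, IsTemplateFamily Φ F ε 𝒯 := by
  classical
  let template (C : Finset (β × κ)) (x : β) : Finset κ := {a | (x, a) ∈ C}
  refine ⟨{t ∈ 𝒞.image template | ∀ x, (t x).Nonempty}, fun t ht => (Finset.mem_filter.1 ht).2,
    fun c hc => ?_, fun t ht => ?_, le_trans (mod_cast
      (Finset.card_filter_le _ _).trans Finset.card_image_le) hcard⟩
  · obtain ⟨C, hC, hcC⟩ := h𝒞.exists_superset _ (image_graph_mem_independentSets hΨ hc)
    have hmem (x : β) : c x ∈ template C x := (Finset.mem_filter_univ _).2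
      (hcC (Finset.mem_image_of_mem _ (Finset.mem_univ x)))
    exact ⟨template C, Finset.mem_filter.2 ⟨Finset.mem_image_of_mem _ hC, fun x => ⟨_, hmem x⟩⟩,
      hmem⟩
  · obtain ⟨C, hC, rfl⟩ := Finset.mem_image.1 (Finset.mem_filter.1 ht).1
    have hsub : {p ∈ Φ ×ˢ F | ∀ v, p.2 v ∈ template C (p.1 v)} ⊆
        edgesWithin colouredPoint Finset.univ (Ψ ×ˢ F) C ∪ (Φ \ Ψ) ×ˢ F := by
      rintro ⟨φ, f⟩ hp
      simp only [Finset.mem_filter, Finset.mem_product, Finset.mem_union, Finset.mem_sdiff,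
        edgesWithin, colouredPoint, template, Finset.mem_univ, true_and, true_implies] at hp ⊢
      tauto
    refine le_trans ?_ (le_trans (add_le_add_left (h𝒞.card_edgesWithin_le C hC) _) hm)
    rw [← Nat.cast_mul, ← Finset.card_product]
    exact mod_cast (Finset.card_le_card hsub).trans (Finset.card_union_le _ _)

/-- The maps in `Φ` whose image meets that of `φ` in more than one point. -/
def overlapping (Φ : Finset (α → β)) (φ : α → β) : Finset (α → β) :=
  {ψ ∈ Φ | 1 < #(Finset.univ.image φ ∩ Finset.univ.image ψ)}

lemma card_filter_colouredPoint_le (hΨ : Ψ ⊆ Φ) (hinj : ∀ φ ∈ Ψ, Function.Injective φ)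
    (hK : ∀ φ ∈ Ψ, (#(overlapping Φ φ) : ℝ) ≤ K) (hK₀ : 0 ≤ K) {i j : α} (hij : i ≠ j)
    (v w : β × κ) :
    (#{p ∈ Ψ ×ˢ F | colouredPoint i p = v ∧ colouredPoint j p = w} : ℝ) ≤ K * #F := by
  rcases Finset.eq_empty_or_nonempty
    {p ∈ Ψ ×ˢ F | colouredPoint i p = v ∧ colouredPoint j p = w} with hempty | ⟨⟨φ, f⟩, hp⟩
  · rw [hempty, Finset.card_empty, Nat.cast_zero]
    positivity
  obtain ⟨hφf, rfl, rfl⟩ := Finset.mem_filter.1 hp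
  have hφ : φ ∈ Ψ := (Finset.mem_product.1 hφf).1
  have hsub : {p ∈ Ψ ×ˢ F | colouredPoint i p = (φ i, f i) ∧ colouredPoint j p = (φ j, f j)} ⊆
      overlapping Φ φ ×ˢ F := by
    rintro ⟨ψ, g⟩ hp
    simp only [Finset.mem_filter, Finset.mem_product, colouredPoint, Prod.mk.injEq] at hp ⊢
    obtain ⟨⟨hψ, hg⟩, ⟨hi, -⟩, hj, -⟩ := hp
    refine ⟨Finset.mem_filter.2 ⟨hΨ hψ, Finset.one_lt_card.2 ⟨φ i, ?_, φ j, ?_, ?_⟩⟩, hg⟩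
    · simpa using ⟨i, hi⟩
    · simpa using ⟨j, hj⟩
    · exact (hinj φ hφ).ne hij
  calc (#{p ∈ Ψ ×ˢ F | colouredPoint i p = (φ i, f i) ∧ colouredPoint j p = (φ j, f j)} : ℝ)
      ≤ #(overlapping Φ φ) * #F := by
        rw [← Nat.cast_mul, ← Finset.card_product]
        exact mod_cast Finset.card_le_card hsub
    _ ≤ K * #F := by gcongr; exact hK φ hφ

lemma card_sdiff_le_mul_card {r : ℝ} (hK₀ : 0 < K)
    (hK : ∀ φ ∈ Φ \ Ψ, K ≤ #(overlapping Φ φ))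
    (hsum : ∑ φ ∈ Φ, (#(overlapping Φ φ) : ℝ) ≤ r * K * #Φ) : #(Φ \ Ψ) ≤ r * #Φ := by
  refine le_of_mul_le_mul_left ?_ hK₀
  calc K * #(Φ \ Ψ) ≤ ∑ φ ∈ Φ \ Ψ, (#(overlapping Φ φ) : ℝ) := by
        simpa [mul_comm] using Finset.card_nsmul_le_sum _ _ K hK
    _ ≤ ∑ φ ∈ Φ, (#(overlapping Φ φ) : ℝ) :=
        Finset.sum_le_sum_of_subset_of_nonneg Finset.sdiff_subset fun _ _ _ => by positivity
    _ ≤ K * (r * #Φ) := by linarith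

theorem exists_isContainerFamily_colouredPoint {α : Type u} {κ : Type w} [Fintype α] [Nonempty α]
    [Fintype κ] [DecidableEq κ] (hκ : 1 < Fintype.card κ) (F : Finset (α → κ)) {γ ε : ℝ}
    (hγ : 0 < γ) (hε : 0 < ε) :
    ∃ ρ > 0, ∀ (β : Type v) [Fintype β] [DecidableEq β] (Φ Ψ : Finset (α → β)), Φ.Nonempty →
      Ψ ⊆ Φ → (∀ φ ∈ Ψ, Function.Injective φ) →
      (∀ φ ∈ Ψ, (#(overlapping Φ φ) : ℝ) ≤ ρ * (#Φ / Fintype.card β)) →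
      ∃ 𝒞 : Finset (Finset (β × κ)), (#𝒞 : ℝ) ≤ (Fintype.card κ : ℝ) ^ (ε * Fintype.card β) ∧
        IsContainerFamily colouredPoint Finset.univ (Ψ ×ˢ F) (γ * #Φ) 𝒞 := by
  set k : ℝ := (Fintype.card κ : ℝ) with hk
  have hk₁ : 1 < k := Nat.one_lt_cast.2 hκ
  have hlog := Real.log_pos hk₁
  obtain ⟨ρ, hρ, hcontainers⟩ := exists_isContainerFamily.{max v w, max u v w}
    (s := (Finset.univ : Finset α)) (D := #F) Finset.univ_nonempty (Nat.cast_nonneg _)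
    (by positivity : 0 < γ / k) (by positivity : 0 < ε * Real.log k / k)
  refine ⟨ρ / (#F + 1), by positivity, fun β _ _ Φ Ψ hΦ hΨ hinj hoverlap => ?_⟩
  have hΦ₀ : (0 : ℝ) < #Φ := Nat.cast_pos.2 hΦ.card_pos
  have : Nonempty β := hΦ.elim fun φ _ => ‹Nonempty α›.map φ
  set n : ℝ := (Fintype.card β : ℝ) with hn
  have hn₀ : 0 < n := Nat.cast_pos.2 Fintype.card_pos
  have hW : (Fintype.card (β × κ) : ℝ) = n * k := by simp [hn, hk]
  have hedges : (#(Ψ ×ˢ F) : ℝ) ≤ #F * (#Φ / n) * Fintype.card (β × κ) := by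
    have hΨcard : (#Ψ : ℝ) ≤ #Φ := mod_cast Finset.card_le_card hΨ
    calc (#(Ψ ×ˢ F) : ℝ) ≤ #Φ * #F := by rw [Finset.card_product, Nat.cast_mul]; gcongr
      _ ≤ #Φ * #F * k := le_mul_of_one_le_right (by positivity) hk₁.le
      _ = #F * (#Φ / n) * Fintype.card (β × κ) := by rw [hW]; field_simp
  obtain ⟨𝒞, hcard, h𝒞⟩ := hcontainers (β × κ) ((α → β) × (α → κ)) colouredPoint (#Φ / n) (Ψ ×ˢ F)
    (by positivity) hedges fun i _ j _ hij v w => by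
      refine (card_filter_colouredPoint_le hΨ hinj hoverlap (by positivity) hij v w).trans ?_
      calc ρ / (#F + 1) * (#Φ / n) * #F ≤ ρ / (#F + 1) * (#Φ / n) * (#F + 1) := by
            gcongr; exact le_add_of_nonneg_right zero_le_one
        _ = ρ * (#Φ / n) := by field_simp
  refine ⟨𝒞, hcard.trans_eq ?_, h𝒞.mono (le_of_eq ?_)⟩
  · rw [Real.rpow_def_of_pos (by positivity), hW]
    congr 1
    field_simp
  · rw [hW]
    field_simp

theorem exists_isTemplateFamily_of_sum_card_overlapping_le {α : Type u} {κ : Type w} [Fintype α]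
    [Nonempty α] [Fintype κ] [DecidableEq κ] (hκ : 1 < Fintype.card κ) (F : Finset (α → κ))
    {ε : ℝ} (hε : 0 < ε) :
    ∃ η > 0, ∀ (β : Type v) [Fintype β] [DecidableEq β] (Φ : Finset (α → β)), Φ.Nonempty →
      (∀ φ ∈ Φ, Function.Injective φ) →
      ∑ φ ∈ Φ, (#(overlapping Φ φ) : ℝ) ≤ η * (#Φ / Fintype.card β) * #Φ →
      ∃ 𝒯, IsTemplateFamily Φ F ε 𝒯 := by
  obtain ⟨ρ, hρ, hcontainers⟩ :=
    exists_isContainerFamily_colouredPoint.{u, v, w} hκ F (half_pos hε) hε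
  set r : ℝ := ε / 2 / (#F + 1) with hr
  refine ⟨r * ρ, by positivity, fun β _ _ Φ hΦ hinj hsum => ?_⟩
  have hΦ₀ : (0 : ℝ) < #Φ := Nat.cast_pos.2 hΦ.card_pos
  have : Nonempty β := hΦ.elim fun φ _ => ‹Nonempty α›.map φ
  have hn₀ : (0 : ℝ) < Fintype.card β := Nat.cast_pos.2 Fintype.card_pos
  set K : ℝ := ρ * (#Φ / Fintype.card β)
  set Ψ : Finset (α → β) := {φ ∈ Φ | (#(overlapping Φ φ) : ℝ) ≤ K}
  have hΨ : Ψ ⊆ Φ := Finset.filter_subset _ _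
  obtain ⟨𝒞, hcard, h𝒞⟩ := hcontainers β Φ Ψ hΦ hΨ (fun φ hφ => hinj φ (hΨ hφ))
    fun φ hφ => (Finset.mem_filter.1 hφ).2
  have hbad : #(Φ \ Ψ) ≤ r * (#Φ : ℝ) := by
    refine card_sdiff_le_mul_card (by positivity : 0 < K) (fun φ hφ => ?_)
      (hsum.trans_eq (by rw [mul_assoc r]))
    simp only [Ψ, Finset.mem_sdiff, Finset.mem_filter, not_and, not_le] at hφ
    exact (hφ.2 hφ.1).le
  refine h𝒞.exists_isTemplateFamily hΨ ?_ hcard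
  calc ε / 2 * #Φ + #(Φ \ Ψ) * #F ≤ ε / 2 * #Φ + r * #Φ * (#F + 1) := by
        gcongr; exact le_add_of_nonneg_right zero_le_one
    _ = ε * #Φ := by rw [hr]; field_simp; ring

/-- As `Ssee.interCount`, for an arbitrary family of maps. -/
def partialOverlapCount (Φ : Finset (α → β)) : ℕ :=
  #{p ∈ Φ ×ˢ Φ | 1 < #(Finset.univ.image p.1 ∩ Finset.univ.image p.2) ∧
    #(Finset.univ.image p.1 ∩ Finset.univ.image p.2) < Fintype.card α}

lemma card_filter_image_subset_le (Φ : Finset (α → β)) (φ : α → β) :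
    #{ψ ∈ Φ | Finset.univ.image ψ ⊆ Finset.univ.image φ} ≤ Fintype.card α ^ Fintype.card α := by
  classical
  have hsub : {ψ ∈ Φ | Finset.univ.image ψ ⊆ Finset.univ.image φ} ⊆
      Fintype.piFinset fun _ => Finset.univ.image φ := fun ψ hψ => Fintype.mem_piFinset.2 fun v =>
    (Finset.mem_filter.1 hψ).2 (Finset.mem_image_of_mem ψ (Finset.mem_univ v))
  refine (Finset.card_le_card hsub).trans ?_
  rw [Fintype.card_piFinset, Finset.prod_const, Finset.card_univ]
  exact Nat.pow_le_pow_left Finset.card_image_le _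

lemma sum_card_overlapping_le (hinj : ∀ φ ∈ Φ, Function.Injective φ) :
    ∑ φ ∈ Φ, #(overlapping Φ φ) ≤
      partialOverlapCount Φ + #Φ * Fintype.card α ^ Fintype.card α := by
  have hsplit (φ : α → β) : #(overlapping Φ φ) ≤
      #{ψ ∈ Φ | 1 < #(Finset.univ.image φ ∩ Finset.univ.image ψ) ∧
        #(Finset.univ.image φ ∩ Finset.univ.image ψ) < Fintype.card α} +
      #{ψ ∈ Φ | Finset.univ.image ψ ⊆ Finset.univ.image φ} := by
    refine (Finset.card_le_card fun ψ hψ => ?_).trans (Finset.card_union_le _ _)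
    obtain ⟨hψΦ, hone⟩ := Finset.mem_filter.1 hψ
    rw [Finset.mem_union, Finset.mem_filter, Finset.mem_filter]
    refine (lt_or_ge _ _).imp (fun hlt => ⟨hψΦ, hone, hlt⟩) fun hge => ⟨hψΦ, ?_⟩
    rw [← Finset.inter_eq_right]
    refine Finset.eq_of_subset_of_card_le Finset.inter_subset_right ?_
    rwa [Finset.card_image_of_injective _ (hinj ψ hψΦ), Finset.card_univ]
  have hpartial : partialOverlapCount Φ = ∑ φ ∈ Φ,
      #{ψ ∈ Φ | 1 < #(Finset.univ.image φ ∩ Finset.univ.image ψ) ∧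
        #(Finset.univ.image φ ∩ Finset.univ.image ψ) < Fintype.card α} := by
    simp only [partialOverlapCount, Finset.card_filter, Finset.sum_product]
  rw [hpartial, ← smul_eq_mul, ← Finset.sum_const, ← Finset.sum_add_distrib]
  exact Finset.sum_le_sum fun φ _ =>
    (hsplit φ).trans (Nat.add_le_add_left (card_filter_image_subset_le Φ φ) _)

lemma eventually_nonempty_and_sum_card_overlapping_le {ι : Type*} {l : Filter ι} {β : ι → Type*}
    [∀ i, Fintype (β i)] [∀ i, DecidableEq (β i)] {Φ : ∀ i, Finset (α → β i)} {η : ℝ}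
    (hinj : ∀ᶠ i in l, ∀ φ ∈ Φ i, Function.Injective φ)
    (hdense : Tendsto (fun i => (#(Φ i) : ℝ) / Fintype.card (β i)) l atTop)
    (hpartial : Tendsto (fun i => Fintype.card (β i) * (partialOverlapCount (Φ i) : ℝ) /
      (#(Φ i) : ℝ) ^ 2) l (nhds 0)) (hη : 0 < η) :
    ∀ᶠ i in l, (Φ i).Nonempty ∧
      ∑ φ ∈ Φ i, (#(overlapping (Φ i) φ) : ℝ) ≤ η * (#(Φ i) / Fintype.card (β i)) * #(Φ i) := by
  set q : ℕ := Fintype.card α ^ Fintype.card α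
  filter_upwards [hinj, hdense.eventually_gt_atTop 0, hdense.eventually_ge_atTop (2 * q / η),
    hpartial.eventually_lt_const (half_pos hη)] with i hinj hpos hlarge hsmall
  have hΦ : (0 : ℝ) < #(Φ i) := (Nat.cast_nonneg _).lt_of_ne fun h => by simp [← h] at hpos
  have hβ : (0 : ℝ) < Fintype.card (β i) :=
    (Nat.cast_nonneg _).lt_of_ne fun h => by simp [← h] at hpos
  refine ⟨Finset.card_pos.1 (Nat.cast_pos.1 hΦ), ?_⟩
  rw [div_lt_iff₀ (by positivity)] at hsmall
  rw [div_le_div_iff₀ hη hβ] at hlarge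
  have hsum : ∑ φ ∈ Φ i, (#(overlapping (Φ i) φ) : ℝ) ≤ partialOverlapCount (Φ i) + #(Φ i) * q :=
    mod_cast sum_card_overlapping_le hinj
  rw [mul_div_assoc', div_mul_eq_mul_div, le_div_iff₀ hβ]
  linarith [mul_le_mul_of_nonneg_left hsum hβ.le, mul_le_mul_of_nonneg_right hlarge hΦ.le]

end Templates

theorem ssee_container_theorem_general {ι : Type*} {l : Filter ι} {α κ : Type*} {β : ι → Type*}
    [Fintype α] [Nonempty α] [Fintype κ] [DecidableEq κ] [∀ i, Fintype (β i)]
    [∀ i, DecidableEq (β i)] {Φ : ∀ i, Finset (α → β i)}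
    (hinj : ∀ᶠ i in l, ∀ φ ∈ Φ i, Function.Injective φ)
    (hdense : 1 < Fintype.card α →
      Tendsto (fun i => (#(Φ i) : ℝ) / Fintype.card (β i)) l atTop)
    (hpartial : 1 < Fintype.card α → Tendsto (fun i => Fintype.card (β i) *
      (partialOverlapCount (Φ i) : ℝ) / (#(Φ i) : ℝ) ^ 2) l (nhds 0))
    (F : Finset (α → κ)) {ε : ℝ} (hε : 0 < ε) :
    ∀ᶠ i in l, ∃ 𝒯, IsTemplateFamily (Φ i) F ε 𝒯 := by
  rcases subsingleton_or_nontrivial α with hα | hα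
  · exact .of_forall fun i => exists_isTemplateFamily_of_subsingleton hε.le (.inl hα)
  rcases subsingleton_or_nontrivial κ with hκ | hκ
  · exact .of_forall fun i => exists_isTemplateFamily_of_subsingleton hε.le (.inr hκ)
  have hα₁ := Fintype.one_lt_card (α := α)
  obtain ⟨η, hη, hη'⟩ :=
    exists_isTemplateFamily_of_sum_card_overlapping_le (Fintype.one_lt_card (α := κ)) F hε
  filter_upwards [hinj, eventually_nonempty_and_sum_card_overlapping_le hinj (hdense hα₁)
    (hpartial hα₁) hη] with i hinj ⟨hΦ, hsum⟩
  exact hη' (β i) (Φ i) hΦ hinj hsum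

/-- **Theorem (container theorem for `[k]`-decorated ssee-s).**
Let `V` be a good ssee, `F` a nonempty set of `k`-colourings of `V_N`, and
`P = Forb_V(F)`.  For every `ε > 0` there is `n₀` such that for every `n ≥ n₀` there
is a collection `T` of `k`-colouring templates for `V_n` with:
(a) every colouring in `P_n` is a realisation of some `t ∈ T`;
(b) for each `t ∈ T` at most `ε |binom(V_n,V_N)|` pairs `(φ, c)` with
    `φ ∈ binom(V_n,V_N)`, `c ∈ F` have `c ∈ ⟨t_{↓φ}⟩`;
(c) `|T| ≤ k^{ε |V_n|}`. -/
theorem ssee_container_theorem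
    (S : Ssee) (hS : S.Good) (k N : ℕ)
    (F : Finset (S.V N → Fin k)) (hF : F.Nonempty)
    (ε : ℝ) (hε : 0 < ε) :
    ∃ n₀ : ℕ, ∀ n ≥ n₀, ∃ T : Finset (S.V n → Finset (Fin k)),
      (∀ t ∈ T, ∀ x, (t x).Nonempty) ∧
      (∀ c : S.V n → Fin k, (∀ φ ∈ S.emb N n, (fun v => c (φ v)) ∉ F) →
        ∃ t ∈ T, ∀ x, c x ∈ t x) ∧
      (∀ t ∈ T,
        ((((S.emb N n) ×ˢ F).filter (fun p => ∀ v, p.2 v ∈ t (p.1 v))).card : ℝ) ≤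
          ε * ((S.emb N n).card : ℝ)) ∧
      ((T.card : ℝ) ≤ (k : ℝ) ^ (ε * (Fintype.card (S.V n) : ℝ))) := by
  obtain ⟨n₀, hn₀⟩ := eventually_atTop.1 (ssee_container_theorem_general
    (eventually_atTop.2 ⟨N, S.emb_inj N⟩) (hS.2.1 N) (hS.2.2 N) F hε)
  exact ⟨n₀, fun n hn => (hn₀ n hn).imp fun T hT => ⟨hT.nonempty, hT.exists_realises,
    hT.card_pairs_le, by simpa using hT.card_le⟩⟩

end
end
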